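/- arXiv:1406.6683 — 2 statements merged into one kernel-verified Lean document; each statement's English description precedes it below -/
import Mathlib

section
/- For every pLTL_◇ formula φ in which each parameter variable occurs at most once and every finite Markov chain M with m states: V_{>0}(φ) ≠ ∅ if and only if v̄ ∈ V_{>0}(φ), where v̄ is the valuation assigning v̄(x) = m·|φ|·2^{|φ|} to every parameter variable x of φ. -/
open MeasureTheory
open scoped ENNReal

/-- Syntax of the fragment pLTL_◇ :
φ ::= a | ¬a | φ∧φ | φ∨φ | ○φ | φUφ | φRφ | □φ | ◇_{≤x}φ. -/
inductive PD (AP Var : Type) : Type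
  | atom : AP → PD AP Var
  | natom : AP → PD AP Var
  | and : PD AP Var → PD AP Var → PD AP Var
  | or : PD AP Var → PD AP Var → PD AP Var
  | next : PD AP Var → PD AP Var
  | untl : PD AP Var → PD AP Var → PD AP Var
  | release : PD AP Var → PD AP Var → PD AP Var
  | always : PD AP Var → PD AP Var
  | evVar : Var → PD AP Var → PD AP Var

/-- The size `|φ|` of a formula: the number of subformula occurrences. -/
def PD.size {AP Var : Type} : PD AP Var → ℕ
  | atom _ => 1
  | natom _ => 1
  | and φ ψ => PD.size φ + PD.size ψ + 1
  | or φ ψ => PD.size φ + PD.size ψ + 1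
  | next φ => PD.size φ + 1
  | untl φ ψ => PD.size φ + PD.size ψ + 1
  | release φ ψ => PD.size φ + PD.size ψ + 1
  | always φ => PD.size φ + 1
  | evVar _ φ => PD.size φ + 1

/-- The number of occurrences of the parameter variable `x` in a formula. -/
def PD.varCount {AP Var : Type} [DecidableEq Var] (x : Var) : PD AP Var → ℕ
  | atom _ => 0
  | natom _ => 0
  | and φ ψ => PD.varCount x φ + PD.varCount x ψ
  | or φ ψ => PD.varCount x φ + PD.varCount x ψ
  | next φ => PD.varCount x φ
  | untl φ ψ => PD.varCount x φ + PD.varCount x ψ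
  | release φ ψ => PD.varCount x φ + PD.varCount x ψ
  | always φ => PD.varCount x φ
  | evVar y φ => (if y = x then 1 else 0) + PD.varCount x φ

/-- Satisfaction relation `(w,i,v) ⊨ φ` for pLTL_◇. -/
def PD.Sat {AP Var : Type} (w : ℕ → Set AP) : ℕ → (Var → ℕ) → PD AP Var → Prop
  | i, _, atom a => a ∈ w i
  | i, _, natom a => a ∉ w i
  | i, v, and φ ψ => PD.Sat w i v φ ∧ PD.Sat w i v ψ
  | i, v, or φ ψ => PD.Sat w i v φ ∨ PD.Sat w i v ψ
  | i, v, next φ => PD.Sat w (i + 1) v φ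
  | i, v, untl φ ψ =>
      ∃ j, i ≤ j ∧ PD.Sat w j v ψ ∧ ∀ k, i ≤ k → k < j → PD.Sat w k v φ
  | i, v, release φ ψ =>
      ∀ j, i ≤ j → (PD.Sat w j v ψ ∨ ∃ k, i ≤ k ∧ k < j ∧ PD.Sat w k v φ)
  | i, v, always φ => ∀ j, i ≤ j → PD.Sat w j v φ
  | i, v, evVar x φ => ∃ j, i ≤ j ∧ j ≤ v x + i ∧ PD.Sat w j v φ

namespace PDX

/-- Reachability. -/
abbrev Reach {S : Type} (R : S → S → Prop) : S → S → Prop := Relation.ReflTransGen R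

/-- Generic paths. -/
structure Gen {S : Type} (R : S → S → Prop) (π : ℕ → S) : Prop where
  step : ∀ i, R (π i) (π (i + 1))
  occ : ∀ (u : ℕ → S) (l N : ℕ), (∀ k < l, R (u k) (u (k + 1))) →
    (∀ n, Reach R (π n) (u 0)) → ∃ i, N ≤ i ∧ ∀ k ≤ l, π (i + k) = u k

def sh {S : Type} (π : ℕ → S) (n : ℕ) : ℕ → S := fun k => π (n + k)

def cons {S : Type} (s : S) (π : ℕ → S) : ℕ → S
  | 0 => s
  | k + 1 => π k

abbrev Tr {AP Var S : Type} (L : S → Set AP) (π : ℕ → S) (i : ℕ) (v : Var → ℕ)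
    (ψ : PD AP Var) : Prop := PD.Sat (fun i => L (π i)) i v ψ

theorem sat_shift {AP Var : Type} (w w' : ℕ → Set AP) (n : ℕ) (h : ∀ k, w' k = w (n + k))
    (v : Var → ℕ) (ψ : PD AP Var) : ∀ i, PD.Sat w' i v ψ ↔ PD.Sat w (n + i) v ψ := by
  induction ψ with
  | atom a => intro i; simp [PD.Sat, h]
  | natom a => intro i; simp [PD.Sat, h]
  | and a b iha ihb => intro i; simp [PD.Sat, iha, ihb]
  | or a b iha ihb => intro i; simp [PD.Sat, iha, ihb]
  | next a iha => intro i; simp [PD.Sat, iha, add_assoc]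
  | untl a b iha ihb =>
    intro i; simp only [PD.Sat, iha, ihb]
    constructor
    · rintro ⟨j, hj, h1, h2⟩
      refine ⟨n + j, by omega, h1, fun k hk hk' => ?_⟩
      have := h2 (k - n) (by omega) (by omega)
      rwa [show n + (k - n) = k by omega] at this
    · rintro ⟨j, hj, h1, h2⟩
      refine ⟨j - n, by omega, ?_, fun k hk hk' => h2 (n + k) (by omega) (by omega)⟩
      rwa [show n + (j - n) = j by omega]
  | release a b iha ihb =>
    intro i; simp only [PD.Sat, iha, ihb]
    constructor
    · intro H j hj
      have := H (j - n) (by omega)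
      rw [show n + (j - n) = j by omega] at this
      refine this.imp id ?_
      rintro ⟨k, h1, h2, h3⟩
      exact ⟨n + k, by omega, by omega, h3⟩
    · intro H j hj
      refine (H (n + j) (by omega)).imp id ?_
      rintro ⟨k, h1, h2, h3⟩
      refine ⟨k - n, by omega, by omega, ?_⟩
      rwa [show n + (k - n) = k by omega]
  | always a iha =>
    intro i; simp only [PD.Sat, iha]
    constructor
    · intro H j hj
      have := H (j - n) (by omega)
      rwa [show n + (j - n) = j by omega] at this
    · intro H j hj
      exact H _ (by omega)
  | evVar x a iha =>
    intro i; simp only [PD.Sat, iha]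
    constructor
    · rintro ⟨j, h1, h2, h3⟩
      exact ⟨n + j, by omega, by omega, h3⟩
    · rintro ⟨j, h1, h2, h3⟩
      refine ⟨j - n, by omega, by omega, ?_⟩
      rwa [show n + (j - n) = j by omega]

section
variable {AP Var S : Type} {R : S → S → Prop} {L : S → Set AP}

theorem tr_sh (π : ℕ → S) (n i : ℕ) (v : Var → ℕ) (ψ : PD AP Var) :
    Tr L (sh π n) i v ψ ↔ Tr L π (n + i) v ψ :=
  sat_shift (fun i => L (π i)) (fun i => L (sh π n i)) n (fun _ => rfl) v ψ i

theorem tr_cons (s : S) (π : ℕ → S) (i : ℕ) (v : Var → ℕ) (ψ : PD AP Var) :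
    Tr L (cons s π) (i + 1) v ψ ↔ Tr L π i v ψ := by
  rw [add_comm]
  exact (sat_shift (fun i => L (cons s π i)) (fun i => L (π i)) 1
    (fun k => by rw [add_comm]; rfl) v ψ i).symm

theorem Gen.reach {π : ℕ → S} (h : Gen R π) (i j : ℕ) (hij : i ≤ j) :
    Reach R (π i) (π j) := by
  induction j, hij using Nat.le_induction with
  | base => exact Relation.ReflTransGen.refl
  | succ j _ ih => exact ih.tail (h.step j)

theorem Gen.sh {π : ℕ → S} (h : Gen R π) (n : ℕ) : Gen R (sh π n) := by
  refine ⟨fun i => h.step (n + i), fun u l N hu hr => ?_⟩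
  obtain ⟨i, hi, hk⟩ := h.occ u l (n + N) hu
    (fun k => (h.reach k (n + k) (by omega)).trans (hr k))
  refine ⟨i - n, by omega, fun k hkl => ?_⟩
  have := hk k hkl
  simp only [PDX.sh]
  rwa [show n + (i - n + k) = i + k by omega]

theorem Gen.cons {π : ℕ → S} (h : Gen R π) (s : S) (hs : R s (π 0)) : Gen R (cons s π) := by
  refine ⟨?_, fun u l N hu hr => ?_⟩
  · rintro (_ | i)
    · exact hs
    · exact h.step i
  · obtain ⟨i, hi, hk⟩ := h.occ u l N hu (fun k => hr (k + 1))
    refine ⟨i + 1, by omega, fun k hkl => ?_⟩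
    rw [show i + 1 + k = (i + k) + 1 by omega]
    exact hk k hkl

def Bot (R : S → S → Prop) (s : S) : Prop := ∀ t, Reach R s t → Reach R t s

theorem exists_bot [Finite S] (R : S → S → Prop) (s : S) : ∃ t, Reach R s t ∧ Bot R t := by
  classical
  let f : S → ℕ := fun t => Set.ncard {u | Reach R t u}
  obtain ⟨t, ht, hmin⟩ := (measure f).wf.has_min {t | Reach R s t}
    ⟨s, Relation.ReflTransGen.refl⟩
  refine ⟨t, ht, fun u hu => ?_⟩
  by_contra hne
  apply hmin u (Relation.ReflTransGen.trans ht hu)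
  change f u < f t
  apply Set.ncard_lt_ncard _ (Set.toFinite _)
  refine ⟨fun x hx => Relation.ReflTransGen.trans hu hx, fun hsub => hne (hsub ?_)⟩
  exact Relation.ReflTransGen.refl

theorem Gen.bot [Finite S] {π : ℕ → S} (h : Gen R π) : ∃ n, Bot R (π n) := by
  obtain ⟨t, ht⟩ : ∃ t, ∃ᶠ n in Filter.atTop, π n = t := by
    by_contra hcon
    simp only [not_exists, Filter.not_frequently] at hcon
    have := Filter.eventually_all.2 hcon
    obtain ⟨n, hn⟩ := this.exists
    exact hn _ rfl
  obtain ⟨c, hc, hb⟩ := exists_bot R t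
  obtain ⟨i, -, hi⟩ := h.occ (fun _ => c) 0 0 (by simp) (fun n => by
    obtain ⟨k, hk, hk'⟩ := (Filter.frequently_atTop.1 ht) n
    have := h.reach n k hk
    rw [hk'] at this
    exact this.trans hc)
  refine ⟨i, ?_⟩
  have := hi 0 le_rfl
  simp only [add_zero] at this
  rwa [this]

theorem Bot.of_reach {s t : S} (h : Bot R s) (hst : Reach R s t) : Bot R t :=
  fun u hu => (h u (hst.trans hu)).trans hst

/-- Agreement of two paths. -/
def Agree (n : ℕ) (π π' : ℕ → S) : Prop := ∀ k ≤ n, π' k = π k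

def Det (R : S → S → Prop) (A : (ℕ → S) → Prop) : Prop :=
  ∀ π, Gen R π → ∃ n, ∀ π', Gen R π' → Agree n π π' → (A π' ↔ A π)

/-- a determined property holding at all late positions of a generic path in a bottom component
holds on all generic paths of that component -/
theorem const_of_det {A : (ℕ → S) → Prop} (hA : Det R A) {π : ℕ → S} (h : Gen R π)
    {n₀ N : ℕ} (hb : Bot R (π n₀)) (hall : ∀ j ≥ N, A (sh π j)) (ω : ℕ → S) (hω : Gen R ω)
    (hr : Reach R (π n₀) (ω 0)) : A ω := by
  obtain ⟨n, hn⟩ := hA ω hω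
  obtain ⟨i, hi, hk⟩ := h.occ ω n N (fun k _ => hω.step k) (fun k => by
    rcases le_total k n₀ with hkn | hkn
    · exact (h.reach _ _ hkn).trans hr
    · exact (hb _ (h.reach _ _ hkn)).trans hr)
  exact (hn (sh π i) (h.sh i) (fun k hkn => hk k hkn)).1 (hall i hi)

theorem Det.not {A : (ℕ → S) → Prop} (hA : Det R A) : Det R (fun π => ¬ A π) := by
  intro π h
  obtain ⟨n, hn⟩ := hA π h
  exact ⟨n, fun π' h' ha => not_congr (hn π' h' ha)⟩

theorem Det.sh {A : (ℕ → S) → Prop} (hA : Det R A) (i : ℕ) : Det R (fun π => A (sh π i)) := by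
  intro π h
  obtain ⟨n, hn⟩ := hA _ (h.sh i)
  exact ⟨i + n, fun π' h' ha => hn _ (h'.sh i) (fun k hk => ha _ (by omega))⟩

theorem Agree.mono {n m : ℕ} {π π' : ℕ → S} (h : Agree n π π') (hm : m ≤ n) : Agree m π π' :=
  fun k hk => h k (hk.trans hm)

theorem Det.upto {A : (ℕ → S) → Prop} (hA : Det R A) {π : ℕ → S} (h : Gen R π) (N : ℕ) :
    ∃ n, ∀ π', Gen R π' → Agree n π π' → ∀ k ≤ N, (A (PDX.sh π' k) ↔ A (PDX.sh π k)) := by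
  choose f hf using fun k => hA.sh k π h
  refine ⟨(Finset.range (N + 1)).sup f, fun π' h' ha k hk => hf k π' h' (ha.mono ?_)⟩
  exact Finset.le_sup (f := f) (Finset.mem_range.2 (by omega))

/-- If a determined property never holds from `i` on, then the same for all agreeing paths. -/
theorem Det.never [Finite S] {A : (ℕ → S) → Prop} (hA : Det R A) {π : ℕ → S} (h : Gen R π)
    (i : ℕ) (hnev : ∀ j ≥ i, ¬ A (PDX.sh π j)) :
    ∃ n, ∀ π', Gen R π' → Agree n π π' → ∀ j ≥ i, ¬ A (PDX.sh π' j) := by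
  obtain ⟨n₀, hb⟩ := h.bot
  obtain ⟨n, hn⟩ := hA.upto h n₀
  refine ⟨max n n₀, fun π' h' ha j hj => ?_⟩
  rcases le_total j n₀ with hjn | hjn
  · rw [hn π' h' (ha.mono (le_max_left _ _)) j hjn]
    exact hnev j hj
  · refine const_of_det hA.not h hb hnev _ (h'.sh j) ?_
    have := h'.reach n₀ j hjn
    rwa [ha n₀ (le_max_right _ _)] at this

theorem det_tr [Finite S] (v : Var → ℕ) (ψ : PD AP Var) :
    Det R (fun π => Tr L π 0 v ψ) := by
  have key : ∀ (ψ : PD AP Var) (π : ℕ → S) (k : ℕ),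
      Tr L (sh π k) 0 v ψ ↔ Tr L π k v ψ := fun ψ π k => tr_sh π k 0 v ψ
  induction ψ with
  | atom a => exact fun π h => ⟨0, fun π' h' ha => by simp [Tr, PD.Sat, ha 0 le_rfl]⟩
  | natom a => exact fun π h => ⟨0, fun π' h' ha => by simp [Tr, PD.Sat, ha 0 le_rfl]⟩
  | and a b iha ihb =>
    intro π h
    obtain ⟨n, hn⟩ := iha π h
    obtain ⟨m, hm⟩ := ihb π h
    exact ⟨max n m, fun π' h' ha => and_congr (hn π' h' (ha.mono (le_max_left _ _)))
      (hm π' h' (ha.mono (le_max_right _ _)))⟩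
  | or a b iha ihb =>
    intro π h
    obtain ⟨n, hn⟩ := iha π h
    obtain ⟨m, hm⟩ := ihb π h
    exact ⟨max n m, fun π' h' ha => or_congr (hn π' h' (ha.mono (le_max_left _ _)))
      (hm π' h' (ha.mono (le_max_right _ _)))⟩
  | next a iha =>
    intro π h
    obtain ⟨n, hn⟩ := iha.sh 1 π h
    refine ⟨n, fun π' h' ha => ?_⟩
    have := hn π' h' ha
    simp only [key] at this
    exact this
  | untl a b iha ihb =>
    intro π h
    by_cases hex : ∃ j, Tr L π j v b
    · obtain ⟨j, hj⟩ := hex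
      obtain ⟨n, hn⟩ := iha.upto h j
      obtain ⟨m, hm⟩ := ihb.upto h j
      refine ⟨max n m, fun π' h' ha => ?_⟩
      have h1 := hn π' h' (ha.mono (le_max_left _ _))
      have h2 := hm π' h' (ha.mono (le_max_right _ _))
      simp only [key] at h1 h2
      have hj' := (h2 j le_rfl).2 hj
      simp only [Tr, PD.Sat] at *
      constructor
      · rintro ⟨l, -, h3, h4⟩
        rcases le_or_gt l j with hl | hl
        · exact ⟨l, by omega, (h2 l hl).1 h3, fun k _ hk => (h1 k (by omega)).1 (h4 k (by omega) hk)⟩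
        · exact ⟨j, by omega, hj, fun k _ hk => (h1 k (by omega)).1 (h4 k (by omega) (by omega))⟩
      · rintro ⟨l, -, h3, h4⟩
        rcases le_or_gt l j with hl | hl
        · exact ⟨l, by omega, (h2 l hl).2 h3, fun k _ hk => (h1 k (by omega)).2 (h4 k (by omega) hk)⟩
        · exact ⟨j, by omega, hj', fun k _ hk => (h1 k (by omega)).2 (h4 k (by omega) (by omega))⟩
    · obtain ⟨n, hn⟩ := ihb.never h 0 (fun j _ hj => hex ⟨j, (key _ _ _).1 hj⟩)
      refine ⟨n, fun π' h' ha => ?_⟩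
      have h1 := hn π' h' ha
      simp only [key] at h1
      simp only [Tr, PD.Sat] at *
      constructor
      · rintro ⟨l, -, h3, h4⟩
        exact absurd h3 (h1 l (by omega))
      · rintro ⟨l, -, h3, h4⟩
        exact absurd ⟨l, h3⟩ hex
  | release a b iha ihb =>
    intro π h
    by_cases hex : ∃ j, ¬ Tr L π j v b
    · obtain ⟨j, hj⟩ := hex
      obtain ⟨n, hn⟩ := iha.upto h j
      obtain ⟨m, hm⟩ := ihb.upto h j
      refine ⟨max n m, fun π' h' ha => ?_⟩
      have h1 := hn π' h' (ha.mono (le_max_left _ _))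
      have h2 := hm π' h' (ha.mono (le_max_right _ _))
      simp only [key] at h1 h2
      have hj' := (not_congr (h2 j le_rfl)).2 hj
      simp only [Tr, PD.Sat] at *
      constructor
      · intro H l hl
        rcases le_or_gt l j with hlj | hlj
        · refine (H l hl).imp (h2 l hlj).1 ?_
          rintro ⟨k, hk, hk', hk''⟩
          exact ⟨k, hk, hk', (h1 k (by omega)).1 hk''⟩
        · right
          obtain ⟨k, hk, hk', hk''⟩ := (H j (by omega)).resolve_left hj'
          exact ⟨k, hk, by omega, (h1 k (by omega)).1 hk''⟩
      · intro H l hl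
        rcases le_or_gt l j with hlj | hlj
        · refine (H l hl).imp (h2 l hlj).2 ?_
          rintro ⟨k, hk, hk', hk''⟩
          exact ⟨k, hk, hk', (h1 k (by omega)).2 hk''⟩
        · right
          obtain ⟨k, hk, hk', hk''⟩ := (H j (by omega)).resolve_left hj
          exact ⟨k, hk, by omega, (h1 k (by omega)).2 hk''⟩
    · push Not at hex
      obtain ⟨n, hn⟩ := ihb.not.never h 0 (fun j _ hj => hj ((key _ _ _).2 (hex j)))
      refine ⟨n, fun π' h' ha => ?_⟩
      have h1 := hn π' h' ha
      simp only [key, not_not] at h1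
      exact ⟨fun _ j _ => Or.inl (hex j), fun _ j hj => Or.inl (h1 j hj)⟩
  | always b ihb =>
    intro π h
    by_cases hex : ∃ j, ¬ Tr L π j v b
    · obtain ⟨j, hj⟩ := hex
      obtain ⟨m, hm⟩ := ihb.upto h j
      refine ⟨m, fun π' h' ha => ?_⟩
      have h2 := hm π' h' ha j le_rfl
      simp only [key] at h2
      exact ⟨fun H => absurd (h2.1 (H j (by omega))) hj, fun H => absurd (H j (by omega)) hj⟩
    · push Not at hex
      obtain ⟨n, hn⟩ := ihb.not.never h 0 (fun j _ hj => hj ((key _ _ _).2 (hex j)))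
      refine ⟨n, fun π' h' ha => ?_⟩
      have h1 := hn π' h' ha
      simp only [key, not_not] at h1
      exact ⟨fun _ j _ => hex j, fun _ j hj => h1 j hj⟩
  | evVar x b ihb =>
    intro π h
    obtain ⟨m, hm⟩ := ihb.upto h (v x)
    refine ⟨m, fun π' h' ha => ?_⟩
    have h2 := hm π' h' ha
    simp only [key] at h2
    constructor
    · rintro ⟨j, h3, h4, h5⟩
      exact ⟨j, h3, h4, (h2 j (by omega)).1 h5⟩
    · rintro ⟨j, h3, h4, h5⟩
      exact ⟨j, h3, h4, (h2 j (by omega)).2 h5⟩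

end
section
variable {α : Type}

theorem pigeon {X : Set α} (hX : X.Finite) (x : ℕ → α) (p q : ℕ)
    (hx : ∀ k, p ≤ k → k ≤ q → x k ∈ X) (hq : p + X.ncard ≤ q) :
    ∃ i j, p ≤ i ∧ i < j ∧ j ≤ q ∧ x i = x j := by
  classical
  have hcard : hX.toFinset.card < (Finset.Icc p q).card := by
    rw [Nat.card_Icc, ← Set.ncard_eq_toFinset_card X hX]; omega
  obtain ⟨i, hi, j, hj, hne, he⟩ := Finset.exists_ne_map_eq_of_card_lt_of_maps_to hcard
    (f := x) (fun k hk => by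
      have := Finset.mem_Icc.1 hk
      simpa using hx k this.1 this.2)
  rw [Finset.mem_Icc] at hi hj
  rcases lt_or_gt_of_ne hne with h | h
  · exact ⟨i, j, hi.1, h, hj.2, he⟩
  · exact ⟨j, i, hj.1, h, hi.2, he.symm⟩

theorem shortchain {X : Set α} (hX : X.Finite) (Rel : α → α → Prop) (n : ℕ) :
    ∀ (x : ℕ → α), (∀ k ≤ n, x k ∈ X) → (∀ k < n, Rel (x k) (x (k + 1))) →
    ∃ (y : ℕ → α) (r : ℕ), r ≤ X.ncard ∧ y 0 = x 0 ∧ y r = x n ∧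
      ∀ k < r, Rel (y k) (y (k + 1)) := by
  induction n using Nat.strong_induction_on with
  | _ n ih =>
    intro x hx hR
    rcases le_or_gt n X.ncard with hn | hn
    · exact ⟨x, n, hn, rfl, rfl, hR⟩
    obtain ⟨i, j, -, hij, hj, he⟩ := pigeon hX x 0 n (fun k _ hk => hx k hk) (by omega)
    let y : ℕ → α := fun k => if k ≤ i then x k else x (k + (j - i))
    obtain ⟨z, r, h1, h2, h3, h4⟩ := ih (n - (j - i)) (by omega) y
      (fun k hk => by
        simp only [y]; split_ifs
        · exact hx _ (by omega)
        · exact hx _ (by omega))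
      (fun k hk => by
        simp only [y]
        by_cases h1 : k + 1 ≤ i
        · rw [if_pos h1, if_pos (by omega)]
          exact hR k (by omega)
        · rw [if_neg h1]
          by_cases h2 : k ≤ i
          · have : k = i := by omega
            subst this
            rw [if_pos le_rfl, he]
            have := hR j (by omega)
            rwa [show k + 1 + (j - k) = j + 1 by omega]
          · rw [if_neg h2]
            have := hR (k + (j - i)) (by omega)
            rwa [show k + 1 + (j - i) = k + (j - i) + 1 by omega])
    refine ⟨z, r, h1, ?_, ?_, h4⟩
    · rw [h2]; simp [y]
    · rw [h3]; simp only [y]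
      split_ifs with hc
      · have : n = j := by omega
        subst this
        rw [show n - (n - i) = i by omega, he]
      · congr 1; omega

theorem backward (Rel : α → α → Prop) (G : α → ℕ → Prop)
    (hG : ∀ a a' e, Rel a a' → G a' e → G a (e + 1)) (x : ℕ → α) (p q e : ℕ) (hpq : p ≤ q)
    (hR : ∀ k, p ≤ k → k < q → Rel (x k) (x (k + 1))) (hq : G (x q) e) :
    G (x p) (e + (q - p)) := by
  induction q, hpq using Nat.le_induction generalizing e with
  | base => simpa using hq
  | succ q hpq ih =>
    have := ih (e + 1) (fun k h1 h2 => hR k h1 (by omega)) (hG _ _ _ (hR q hpq (by omega)) hq)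
    rwa [show e + (q + 1 - p) = e + 1 + (q - p) by omega]

theorem pump (Rel : α → α → Prop) (G : α → ℕ → Prop)
    (hG : ∀ a a' e, Rel a a' → G a' e → G a (e + 1)) (x : ℕ → α) (p q i j : ℕ)
    (hpi : p ≤ i) (hij : i < j) (hjq : j ≤ q) (hxe : x i = x j)
    (hR : ∀ k, p ≤ k → k < q → Rel (x k) (x (k + 1))) (hq : G (x q) 0) (V : ℕ) :
    ∃ e, V ≤ e ∧ G (x p) e := by
  have h1 : ∃ e, V ≤ e ∧ G (x j) e := by
    induction V with
    | zero => exact ⟨_, by omega, backward Rel G hG x j q 0 hjq (fun k h1 h2 => hR k (by omega) h2) hq⟩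
    | succ V ih =>
      obtain ⟨e, he, hGe⟩ := ih
      have := backward Rel G hG x i j e hij.le (fun k h1 h2 => hR k (by omega) (by omega)) hGe
      rw [hxe] at this
      exact ⟨_, by omega, this⟩
  obtain ⟨e, he, hGe⟩ := h1
  exact ⟨_, by omega, backward Rel G hG x p j e (by omega) (fun k h1 h2 => hR k h1 (by omega)) hGe⟩

def Fam (OK : ℕ → (ℕ → Set α) → α → Prop) (Q : Set α) (Req : ℕ → α → Prop) : Prop :=
  ∃ T : ℕ → Set α, (∀ k, ∀ χ ∈ T k, OK k T χ) ∧ (∀ k χ, Req k χ → χ ∈ T k) ∧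
    (∀ k, T k ⊆ Q) ∧ ∃ n, ∀ k ≥ n, T k = ∅

def MonoOK (OK : ℕ → (ℕ → Set α) → α → Prop) : Prop :=
  ∀ k T T' χ, (∀ l, T l ⊆ T' l) → OK k T χ → OK k T' χ

variable {OK : ℕ → (ℕ → Set α) → α → Prop} {Q : Set α}

theorem Fam.weaken {Req Req' : ℕ → α → Prop} (h : Fam OK Q Req)
    (h' : ∀ k χ, Req' k χ → Req k χ) : Fam OK Q Req' := by
  obtain ⟨T, h1, h2, h3, h4⟩ := h
  exact ⟨T, h1, fun k χ hk => h2 k χ (h' k χ hk), h3, h4⟩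

theorem Fam.union (hm : MonoOK OK) {Req Req' : ℕ → α → Prop} (h : Fam OK Q Req)
    (h' : Fam OK Q Req') : Fam OK Q (fun k χ => Req k χ ∨ Req' k χ) := by
  obtain ⟨T, h1, h2, h3, n, h4⟩ := h
  obtain ⟨T', h1', h2', h3', n', h4'⟩ := h'
  refine ⟨fun k => T k ∪ T' k, ?_, ?_, ?_, max n n', ?_⟩
  · rintro k χ (hχ | hχ)
    · exact hm k T _ χ (fun l => Set.subset_union_left) (h1 k χ hχ)
    · exact hm k T' _ χ (fun l => Set.subset_union_right) (h1' k χ hχ)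
  · rintro k χ (hχ | hχ)
    · exact Or.inl (h2 k χ hχ)
    · exact Or.inr (h2' k χ hχ)
  · exact fun k => Set.union_subset (h3 k) (h3' k)
  · intro k hk
    simp only [h4 k (le_trans (le_max_left _ _) hk), h4' k (le_trans (le_max_right _ _) hk),
      Set.union_empty]

theorem Fam.empty : Fam OK Q (fun _ _ => False) :=
  ⟨fun _ => ∅, by simp, by simp, by simp, 0, by simp⟩

/-- requirement: `ψ` at all positions in `[i, j)` -/
def At (i j : ℕ) (ψ : α) : ℕ → α → Prop := fun k χ => i ≤ k ∧ k < j ∧ χ = ψ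

theorem Fam.upto (hm : MonoOK OK) {ψ : α} (i j : ℕ)
    (h : ∀ l, i ≤ l → l < j → Fam OK Q (At l (l + 1) ψ)) : Fam OK Q (At i j ψ) := by
  induction j with
  | zero => exact Fam.empty.weaken (fun k χ hk => by have := hk.2.1; omega)
  | succ j ih =>
    rcases le_or_gt i j with hij | hij
    · refine ((ih fun l h1 h2 => h l h1 (by omega)).union hm (h j hij (by omega))).weaken ?_
      rintro k χ ⟨h1, h2, h3⟩
      rcases Nat.lt_succ_iff_lt_or_eq.1 h2 with h | h
      · exact Or.inl ⟨h1, h, h3⟩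
      · exact Or.inr ⟨by omega, by omega, h3⟩
    · exact Fam.empty.weaken (fun k χ hk => by have := hk.2.1; have := hk.1; omega)

theorem Fam.add (hm : MonoOK OK) {Req : ℕ → α → Prop} (h : Fam OK Q Req) (i j : ℕ) (ψ : α)
    (hψ : ψ ∈ Q) (hok : ∀ T : ℕ → Set α, (∀ k χ, Req k χ → χ ∈ T k) →
      (∀ k, i ≤ k → k < j → ψ ∈ T k) → ∀ k, i ≤ k → k < j → OK k T ψ) :
    Fam OK Q (At i j ψ) := by
  obtain ⟨T, h1, h2, h3, n, h4⟩ := h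
  refine ⟨fun k => T k ∪ {χ | At i j ψ k χ}, ?_, ?_, ?_, max n j, ?_⟩
  · rintro k χ (hχ | hχ)
    · exact hm k T _ χ (fun l => Set.subset_union_left) (h1 k χ hχ)
    · obtain ⟨ha, hb, rfl⟩ := hχ
      exact hok _ (fun k χ h => Or.inl (h2 k χ h)) (fun k h1 h2 => Or.inr ⟨h1, h2, rfl⟩) k ha hb
  · exact fun k χ h => Or.inr h
  · intro k
    refine Set.union_subset (h3 k) ?_
    rintro χ ⟨-, -, rfl⟩
    exact hψ
  · intro k hk
    have h5 : j ≤ k := le_trans (le_max_right _ _) hk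
    simp only [h4 k (le_trans (le_max_left _ _) hk), Set.empty_union]
    ext χ
    simp only [At, Set.mem_ofPred_eq, Set.mem_empty_iff_false, iff_false]
    omega

end

section
variable {AP Var : Type}

def Sub : PD AP Var → Set (PD AP Var)
  | .atom a => {.atom a}
  | .natom a => {.natom a}
  | .and a b => insert (.and a b) (Sub a ∪ Sub b)
  | .or a b => insert (.or a b) (Sub a ∪ Sub b)
  | .next a => insert (.next a) (Sub a)
  | .untl a b => insert (.untl a b) (Sub a ∪ Sub b)
  | .release a b => insert (.release a b) (Sub a ∪ Sub b)
  | .always a => insert (.always a) (Sub a)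
  | .evVar x a => insert (.evVar x a) (Sub a)

theorem sub_self (ψ : PD AP Var) : ψ ∈ Sub ψ := by
  cases ψ <;> simp [Sub]

theorem sub_finite (ψ : PD AP Var) : (Sub ψ).Finite := by
  induction ψ <;> simp_all [Sub]

theorem sub_card (ψ : PD AP Var) : (Sub ψ).ncard ≤ ψ.size := by
  induction ψ with
  | atom a => simp [Sub, PD.size]
  | natom a => simp [Sub, PD.size]
  | and a b iha ihb =>
    simp only [Sub, PD.size]
    have := Set.ncard_insert_le (PD.and a b) (Sub a ∪ Sub b)
    have := Set.ncard_union_le (Sub a) (Sub b)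
    omega
  | or a b iha ihb =>
    simp only [Sub, PD.size]
    have := Set.ncard_insert_le (PD.or a b) (Sub a ∪ Sub b)
    have := Set.ncard_union_le (Sub a) (Sub b)
    omega
  | next a iha =>
    simp only [Sub, PD.size]
    have := Set.ncard_insert_le (PD.next a) (Sub a)
    omega
  | untl a b iha ihb =>
    simp only [Sub, PD.size]
    have := Set.ncard_insert_le (PD.untl a b) (Sub a ∪ Sub b)
    have := Set.ncard_union_le (Sub a) (Sub b)
    omega
  | release a b iha ihb =>
    simp only [Sub, PD.size]
    have := Set.ncard_insert_le (PD.release a b) (Sub a ∪ Sub b)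
    have := Set.ncard_union_le (Sub a) (Sub b)
    omega
  | always a iha =>
    simp only [Sub, PD.size]
    have := Set.ncard_insert_le (PD.always a) (Sub a)
    omega
  | evVar x a iha =>
    simp only [Sub, PD.size]
    have := Set.ncard_insert_le (PD.evVar x a) (Sub a)
    omega

theorem states_card {S : Type} [Fintype S] (ψ : PD AP Var) :
    ((Set.univ : Set S) ×ˢ (𝒫 (Sub ψ))).Finite ∧
    ((Set.univ : Set S) ×ˢ (𝒫 (Sub ψ))).ncard ≤ Fintype.card S * 2 ^ ψ.size := by
  refine ⟨Set.finite_univ.prod (sub_finite ψ).powerset, ?_⟩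
  rw [Set.ncard_prod, Set.ncard_univ, Nat.card_eq_fintype_card,
    Set.ncard_powerset _ (sub_finite ψ)]
  exact Nat.mul_le_mul_left _ (Nat.pow_le_pow_right (by norm_num) (sub_card ψ))

end
section
variable {AP Var S : Type} {R : S → S → Prop} {L : S → Set AP}

def LA (R : S → S → Prop) (L : S → Set AP) (v : Var → ℕ) (c : S) (θ : PD AP Var) : Prop :=
  ∀ ω, Gen R ω → Reach R c (ω 0) → Tr L ω 0 v θ

def LN (R : S → S → Prop) (L : S → Set AP) (v : Var → ℕ) (c : S) (θ : PD AP Var) : Prop :=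
  ∀ ω, Gen R ω → Reach R c (ω 0) → ¬ Tr L ω 0 v θ

def PosOK (L : S → Set AP) (K : S → Prop) (A : PD AP Var → Prop) (s : S)
    (T T' : Set (PD AP Var)) : PD AP Var → Prop
  | .atom a => a ∈ L s
  | .natom a => a ∉ L s
  | .and a b => a ∈ T ∧ b ∈ T
  | .or a b => a ∈ T ∨ b ∈ T
  | .next a => a ∈ T'
  | .untl a b => b ∈ T ∨ (a ∈ T ∧ .untl a b ∈ T')
  | .release a b => (K s ∧ A b) ∨ (b ∈ T ∧ (a ∈ T ∨ .release a b ∈ T'))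
  | .always a => (K s ∧ A a) ∨ (a ∈ T ∧ .always a ∈ T')
  | .evVar x a => a ∈ T ∨ .evVar x a ∈ T'

theorem posOK_mono (K : S → Prop) (A : PD AP Var → Prop) (π : ℕ → S) :
    MonoOK (fun k T χ => PosOK L K A (π k) (T k) (T (k + 1)) χ) := by
  intro k T T' χ hT h
  have h1 := @hT k
  have h2 := @hT (k + 1)
  cases χ <;> simp only [PosOK] at h ⊢ <;> grind

theorem famP [Finite S] {π : ℕ → S} (hπ : Gen R π) {n₀ : ℕ} (hb : Bot R (π n₀)) (N : ℕ)
    (V b : Var → ℕ) (HU : ∀ θ : PD AP Var, θ.size < N → LA R L V (π n₀) θ → LA R L b (π n₀) θ)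
    (Q : Set (PD AP Var)) (ψ : PD AP Var) (hN : ψ.size ≤ N) (hQ : Sub ψ ⊆ Q) :
    ∀ i, Tr L π i V ψ →
      Fam (fun k T χ => PosOK L (Reach R (π n₀)) (LA R L b (π n₀)) (π k) (T k) (T (k + 1)) χ) Q
        (At i (i + 1) ψ) := by
  have hm := posOK_mono (L := L) (Reach R (π n₀)) (LA R L b (π n₀)) π
  have hself := hQ (sub_self ψ)
  have hLA : ∀ θ : PD AP Var, ∀ i, (∀ j ≥ i, Tr L π j V θ) → LA R L V (π n₀) θ := by
    intro θ i h ω hω hr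
    exact const_of_det (det_tr V θ) hπ hb (N := i) (fun j hj => (tr_sh π j 0 V θ).2 (h j hj)) ω hω hr
  induction ψ with
  | atom a =>
    intro i h
    exact Fam.empty.add hm _ _ _ hself (fun T _ _ k h1 h2 => by
      have : k = i := by omega
      subst this; exact h)
  | natom a =>
    intro i h
    exact Fam.empty.add hm _ _ _ hself (fun T _ _ k h1 h2 => by
      have : k = i := by omega
      subst this; exact h)
  | and a c iha ihc =>
    intro i h
    simp only [PD.size] at hN
    simp only [Sub, Set.insert_subset_iff, Set.union_subset_iff] at hQ
    have f1 := iha (by omega) hQ.2.1 (hQ.2.1 (sub_self _)) i h.1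
    have f2 := ihc (by omega) hQ.2.2 (hQ.2.2 (sub_self _)) i h.2
    refine (f1.union hm f2).add hm _ _ _ hself (fun T h1 _ k h2 h3 => ?_)
    exact ⟨h1 _ _ (Or.inl ⟨h2, h3, rfl⟩), h1 _ _ (Or.inr ⟨h2, h3, rfl⟩)⟩
  | or a c iha ihc =>
    intro i h
    simp only [PD.size] at hN
    simp only [Sub, Set.insert_subset_iff, Set.union_subset_iff] at hQ
    rcases h with h | h
    · have f1 := iha (by omega) hQ.2.1 (hQ.2.1 (sub_self _)) i h
      exact f1.add hm _ _ _ hself (fun T h1 _ k h2 h3 => Or.inl (h1 _ _ ⟨h2, h3, rfl⟩))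
    · have f1 := ihc (by omega) hQ.2.2 (hQ.2.2 (sub_self _)) i h
      exact f1.add hm _ _ _ hself (fun T h1 _ k h2 h3 => Or.inr (h1 _ _ ⟨h2, h3, rfl⟩))
  | next a iha =>
    intro i h
    simp only [PD.size] at hN
    simp only [Sub, Set.insert_subset_iff] at hQ
    have f1 := iha (by omega) hQ.2 (hQ.2 (sub_self _)) (i + 1) h
    exact f1.add hm _ _ _ hself (fun T h1 _ k h2 h3 => h1 _ _ ⟨by omega, by omega, rfl⟩)
  | untl a c iha ihc =>
    intro i h
    simp only [PD.size] at hN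
    simp only [Sub, Set.insert_subset_iff, Set.union_subset_iff] at hQ
    obtain ⟨j, hij, h1, h2⟩ := h
    have f1 := Fam.upto hm i j (fun l hl hl' =>
      iha (by omega) hQ.2.1 (hQ.2.1 (sub_self _)) l (h2 l hl hl'))
    have f2 := ihc (by omega) hQ.2.2 (hQ.2.2 (sub_self _)) j h1
    refine ((f1.union hm f2).add hm i (j + 1) _ hself (fun T h1 hT k h2 h3 => ?_)).weaken ?_
    · rcases Nat.lt_succ_iff_lt_or_eq.1 h3 with hk | hk
      · exact Or.inr ⟨h1 _ _ (Or.inl ⟨h2, hk, rfl⟩), hT _ (by omega) (by omega)⟩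
      · exact Or.inl (h1 _ _ (Or.inr ⟨by omega, by omega, rfl⟩))
    · rintro k χ ⟨h1, h2, h3⟩
      exact ⟨h1, by omega, h3⟩
  | release a c iha ihc =>
    intro i h
    simp only [PD.size] at hN
    simp only [Sub, Set.insert_subset_iff, Set.union_subset_iff] at hQ
    by_cases hall : ∀ j ≥ i, Tr L π j V c
    · have hA := HU c (by omega) (hLA c i hall)
      have f1 := Fam.upto hm i (i + n₀) (fun l hl hl' =>
        ihc (by omega) hQ.2.2 (hQ.2.2 (sub_self _)) l (hall l hl))
      refine (f1.add hm i (i + n₀ + 1) _ hself (fun T h1 hT k h2 h3 => ?_)).weaken ?_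
      · rcases Nat.lt_succ_iff_lt_or_eq.1 h3 with hk | hk
        · exact Or.inr ⟨h1 _ _ ⟨h2, hk, rfl⟩, Or.inr (hT _ (by omega) (by omega))⟩
        · exact Or.inl ⟨hπ.reach _ _ (by omega), hA⟩
      · rintro k χ ⟨h1, h2, h3⟩
        exact ⟨h1, by omega, h3⟩
    · push Not at hall
      obtain ⟨j, hj, hjc⟩ := hall
      obtain ⟨k, hk1, hk2, hk3⟩ := (h j hj).resolve_left hjc
      classical
      let P : ℕ → Prop := fun k => i ≤ k ∧ Tr L π k V a
      have hP : ∃ k, P k := ⟨k, hk1, hk3⟩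
      have hc : ∀ l, i ≤ l → l < Nat.find hP + 1 → Tr L π l V c := by
        intro l hl hl'
        refine (h l hl).resolve_right ?_
        rintro ⟨k', h1, h2, h3⟩
        exact Nat.find_min hP (m := k') (by omega) ⟨h1, h3⟩
      obtain ⟨hq1, hq2⟩ := Nat.find_spec hP
      generalize Nat.find hP = q at hc hq1 hq2
      have f1 := Fam.upto hm i (q + 1) (fun l hl hl' =>
        ihc (by omega) hQ.2.2 (hQ.2.2 (sub_self _)) l (hc l hl hl'))
      have f2 := iha (by omega) hQ.2.1 (hQ.2.1 (sub_self _)) q hq2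
      refine ((f1.union hm f2).add hm i (q + 1) _ hself (fun T h1 hT k h2 h3 => ?_)).weaken ?_
      · refine Or.inr ⟨h1 _ _ (Or.inl ⟨h2, h3, rfl⟩), ?_⟩
        rcases Nat.lt_succ_iff_lt_or_eq.1 h3 with hk | hk
        · exact Or.inr (hT _ (by omega) (by omega))
        · exact Or.inl (h1 _ _ (Or.inr ⟨by omega, by omega, rfl⟩))
      · rintro k χ ⟨h1, h2, h3⟩
        exact ⟨h1, by omega, h3⟩
  | always c ihc =>
    intro i hall
    simp only [PD.size] at hN
    simp only [Sub, Set.insert_subset_iff] at hQ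
    have hA := HU c (by omega) (hLA c i hall)
    have f1 := Fam.upto hm i (i + n₀) (fun l hl hl' =>
      ihc (by omega) hQ.2 (hQ.2 (sub_self _)) l (hall l hl))
    refine (f1.add hm i (i + n₀ + 1) _ hself (fun T h1 hT k h2 h3 => ?_)).weaken ?_
    · rcases Nat.lt_succ_iff_lt_or_eq.1 h3 with hk | hk
      · exact Or.inr ⟨h1 _ _ ⟨h2, hk, rfl⟩, hT _ (by omega) (by omega)⟩
      · exact Or.inl ⟨hπ.reach _ _ (by omega), hA⟩
    · rintro k χ ⟨h1, h2, h3⟩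
      exact ⟨h1, by omega, h3⟩
  | evVar x c ihc =>
    intro i h
    simp only [PD.size] at hN
    simp only [Sub, Set.insert_subset_iff] at hQ
    obtain ⟨j, hij, -, h1⟩ := h
    have f2 := ihc (by omega) hQ.2 (hQ.2 (sub_self _)) j h1
    refine (f2.add hm i (j + 1) _ hself (fun T h1 hT k h2 h3 => ?_)).weaken ?_
    · rcases Nat.lt_succ_iff_lt_or_eq.1 h3 with hk | hk
      · exact Or.inr (hT _ (by omega) (by omega))
      · exact Or.inl (h1 _ _ ⟨by omega, by omega, rfl⟩)
    · rintro k χ ⟨h1, h2, h3⟩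
      exact ⟨h1, by omega, h3⟩

def GP (R : S → S → Prop) (L : S → Set AP) (b : ℕ) (a : S × Set (PD AP Var)) (e : ℕ) : Prop :=
  e ≤ b → ∃ ρ, Gen R ρ ∧ ρ 0 = a.1 ∧ (∀ χ ∈ a.2, Tr L ρ 0 (fun _ => b) χ) ∧
    ∀ x ψ, PD.evVar x ψ ∈ a.2 → ∃ k ≤ e, Tr L ρ k (fun _ => b) ψ

theorem LA.at {v : Var → ℕ} {c : S} {θ : PD AP Var} (h : LA R L v c θ) {ρ : ℕ → S}
    (hρ : Gen R ρ) (hc : Reach R c (ρ 0)) (j : ℕ) : Tr L ρ j v θ :=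
  (tr_sh ρ j 0 v θ).1 (h _ (hρ.sh j) (hc.trans (hρ.reach 0 j (by omega))))

theorem LN.at {v : Var → ℕ} {c : S} {θ : PD AP Var} (h : LN R L v c θ) {ρ : ℕ → S}
    (hρ : Gen R ρ) (hc : Reach R c (ρ 0)) (j : ℕ) : ¬ Tr L ρ j v θ :=
  fun h' => h _ (hρ.sh j) (hc.trans (hρ.reach 0 j (by omega))) ((tr_sh ρ j 0 v θ).2 h')

theorem GP_step (c : S) (b : ℕ) (a a' : S × Set (PD AP Var)) (e : ℕ)
    (hR : R a.1 a'.1 ∧ ∀ χ ∈ a.2, PosOK L (Reach R c) (LA R L (fun _ => b) c) a.1 a.2 a'.2 χ)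
    (h : GP R L b a' e) : GP R L b a (e + 1) := by
  intro he
  obtain ⟨ρ', g', h0, hT', hev'⟩ := h (by omega)
  obtain ⟨s, T⟩ := a
  obtain ⟨s', T'⟩ := a'
  simp only at h0 hT' hev' hR
  obtain ⟨hst, hok⟩ := hR
  have hg := g'.cons s (by rw [h0]; exact hst)
  have main : ∀ χ ∈ T, Tr L (cons s ρ') 0 (fun _ => b) χ ∧
      ∀ x ψ, PD.evVar x ψ = χ → ∃ k ≤ e + 1, Tr L (cons s ρ') k (fun _ => b) ψ := by
    intro χ
    induction χ with
    | atom a => exact fun hχ => ⟨hok _ hχ, by simp⟩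
    | natom a => exact fun hχ => ⟨hok _ hχ, by simp⟩
    | and a d iha ihd =>
      intro hχ
      have := hok _ hχ
      exact ⟨⟨(iha this.1).1, (ihd this.2).1⟩, by simp⟩
    | or a d iha ihd =>
      intro hχ
      have := hok _ hχ
      exact ⟨this.imp (fun h => (iha h).1) (fun h => (ihd h).1), by simp⟩
    | next a iha =>
      intro hχ
      exact ⟨(tr_cons s ρ' 0 _ a).2 (hT' _ (hok _ hχ)), by simp⟩
    | untl a d iha ihd =>
      intro hχ
      refine ⟨?_, by simp⟩
      rcases hok _ hχ with h | ⟨h1, h2⟩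
      · exact ⟨0, le_rfl, (ihd h).1, fun k _ hk => by omega⟩
      · obtain ⟨j, -, h3, h4⟩ := hT' _ h2
        refine ⟨j + 1, by omega, (tr_cons s ρ' j _ d).2 h3, ?_⟩
        rintro (_ | k) _ hk
        · exact (iha h1).1
        · exact (tr_cons s ρ' k _ a).2 (h4 k (by omega) (by omega))
    | release a d iha ihd =>
      intro hχ
      refine ⟨?_, by simp⟩
      rcases hok _ hχ with ⟨h1, h2⟩ | ⟨h1, h2⟩
      · exact fun j _ => Or.inl (h2.at hg h1 j)
      · rintro (_ | j) _
        · exact Or.inl (ihd h1).1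
        · rcases h2 with h2 | h2
          · exact Or.inr ⟨0, le_rfl, by omega, (iha h2).1⟩
          · refine (hT' _ h2 j (by omega)).imp (tr_cons s ρ' j _ d).2 ?_
            rintro ⟨k, hk1, hk2, hk3⟩
            exact ⟨k + 1, by omega, by omega, (tr_cons s ρ' k _ a).2 hk3⟩
    | always d ihd =>
      intro hχ
      refine ⟨?_, by simp⟩
      rcases hok _ hχ with ⟨h1, h2⟩ | ⟨h1, h2⟩
      · exact fun j _ => h2.at hg h1 j
      · rintro (_ | j) _
        · exact (ihd h1).1
        · exact (tr_cons s ρ' j _ d).2 (hT' _ h2 j (by omega))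
    | evVar x d ihd =>
      intro hχ
      have : ∃ k ≤ e + 1, Tr L (cons s ρ') k (fun _ => b) d := by
        rcases hok _ hχ with h | h
        · exact ⟨0, by omega, (ihd h).1⟩
        · obtain ⟨k, hk, hk'⟩ := hev' x d h
          exact ⟨k + 1, by omega, (tr_cons s ρ' k _ d).2 hk'⟩
      constructor
      · obtain ⟨k, hk, hk'⟩ := this
        exact ⟨k, by omega, by simp only; omega, hk'⟩
      · intro x' ψ he
        simp only [PD.evVar.injEq] at he
        rw [he.2]
        exact this
  exact ⟨cons s ρ', hg, rfl, fun χ hχ => (main χ hχ).1, fun x ψ hχ => (main _ hχ).2 x ψ rfl⟩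

theorem thmE [Fintype S] (V b : ℕ) (θ : PD AP Var)
    (hb : Fintype.card S * 2 ^ θ.size ≤ b)
    (HU : ∀ θ' : PD AP Var, θ'.size < θ.size → ∀ c, Bot R c →
      LA R L (fun _ => V) c θ' → LA R L (fun _ => b) c θ')
    (π : ℕ → S) (hπ : Gen R π) (h : Tr L π 0 (fun _ => V) θ) :
    ∃ ρ, Gen R ρ ∧ ρ 0 = π 0 ∧ Tr L ρ 0 (fun _ => b) θ := by
  obtain ⟨n₀, hbot⟩ := hπ.bot
  obtain ⟨T, h1, h2, h3, n, h4⟩ := famP hπ hbot θ.size (fun _ => V) (fun _ => b)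
    (fun θ' hθ' => HU θ' hθ' _ hbot) (Sub θ) θ le_rfl le_rfl 0 h
  obtain ⟨hf, hc⟩ := states_card (S := S) θ
  obtain ⟨y, r, hr, hy0, hyr, hy⟩ := shortchain hf
    (fun a a' : S × Set (PD AP Var) => R a.1 a'.1 ∧ ∀ χ ∈ a.2,
      PosOK L (Reach R (π n₀)) (LA R L (fun _ => b) (π n₀)) a.1 a.2 a'.2 χ) n
    (fun k => (π k, T k)) (fun k _ => ⟨Set.mem_univ _, h3 k⟩)
    (fun k _ => ⟨hπ.step k, h1 k⟩)
  have hG := backward _ (GP R L b) (GP_step (π n₀) b) y 0 r 0 (by omega)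
    (fun k _ hk => hy k hk) (by
      rw [hyr]
      intro _
      refine ⟨sh π n, hπ.sh n, rfl, ?_, ?_⟩ <;> simp [h4 n le_rfl])
  obtain ⟨ρ, g, h0, hT, -⟩ := hG (by omega)
  rw [hy0] at h0 hT
  exact ⟨ρ, g, h0, hT _ (h2 _ _ ⟨le_rfl, by omega, rfl⟩)⟩

end
section
variable {AP Var S : Type} {R : S → S → Prop} {L : S → Set AP}

def NegOK (L : S → Set AP) (A N : PD AP Var → Prop) (Ev : Var → PD AP Var → Prop) (s : S)
    (T T' : Set (PD AP Var)) : PD AP Var → Prop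
  | .atom a => a ∉ L s
  | .natom a => a ∈ L s
  | .and a b => a ∈ T ∨ b ∈ T
  | .or a b => a ∈ T ∧ b ∈ T
  | .next a => a ∈ T'
  | .untl a b => N b ∨ (b ∈ T ∧ (a ∈ T ∨ .untl a b ∈ T'))
  | .release a b => b ∈ T ∨ (a ∈ T ∧ .release a b ∈ T')
  | .always a => ¬ A a
  | .evVar x a => Ev x a

/-- the requirement for a bounded eventuality at position `k`, blocks having length `M` -/
def EvB (M k : ℕ) (T : ℕ → Set (PD AP Var)) (x : Var) (ψ : PD AP Var) : Prop :=
  ∀ l, k ≤ l → (l / M ≤ k / M + 1 → ψ ∈ T l) ∧ (l / M = k / M → PD.evVar x ψ ∈ T l)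

theorem negOK_mono (A N : PD AP Var → Prop) (M : ℕ) (π : ℕ → S) :
    MonoOK (fun k T χ => NegOK L A N (EvB M k T) (π k) (T k) (T (k + 1)) χ) := by
  intro k T T' χ hT h
  have h1 := @hT k
  have h2 := @hT (k + 1)
  cases χ with
  | evVar x ψ =>
    exact fun l hl => ⟨fun h' => hT l ((h l hl).1 h'), fun h' => hT l ((h l hl).2 h')⟩
  | _ => simp only [NegOK] at h ⊢ <;> grind

theorem famN [Finite S] {π : ℕ → S} (hπ : Gen R π) (hb : Bot R (π 0)) (N M b V : ℕ)
    (hM : 0 < M) (hMb : 2 * M ≤ b)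
    (HU : ∀ θ : PD AP Var, θ.size < N → LA R L (fun _ => V) (π 0) θ → LA R L (fun _ => b) (π 0) θ)
    (HE : ∀ θ : PD AP Var, θ.size < N → LN R L (fun _ => b) (π 0) θ → LN R L (fun _ => V) (π 0) θ)
    (Q : Set (PD AP Var)) (ψ : PD AP Var) (hN : ψ.size ≤ N) (hQ : Sub ψ ⊆ Q) :
    ∀ i, ¬ Tr L π i (fun _ => b) ψ →
      Fam (fun k T χ => NegOK L (LA R L (fun _ => V) (π 0)) (LN R L (fun _ => V) (π 0))
        (EvB M k T) (π k) (T k) (T (k + 1)) χ) Q (At i (i + 1) ψ) := by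
  have hm := negOK_mono (Var := Var) (L := L) (LA R L (fun _ => V) (π 0)) (LN R L (fun _ => V) (π 0)) M π
  have hself := hQ (sub_self ψ)
  have hLN : ∀ θ : PD AP Var, ∀ i, (∀ j ≥ i, ¬ Tr L π j (fun _ => b) θ) →
      LN R L (fun _ => b) (π 0) θ := by
    intro θ i h ω hω hr
    exact const_of_det (det_tr (fun _ => b) θ).not hπ hb (N := i)
      (fun j hj h' => h j hj ((tr_sh π j 0 (fun _ => b) θ).1 h')) ω hω hr
  induction ψ with
  | atom a =>
    intro i h
    exact Fam.empty.add hm _ _ _ hself (fun T _ _ k h1 h2 => by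
      have : k = i := by omega
      subst this; exact h)
  | natom a =>
    intro i h
    exact Fam.empty.add hm _ _ _ hself (fun T _ _ k h1 h2 => by
      have : k = i := by omega
      subst this; exact not_not.1 h)
  | or a c iha ihc =>
    intro i h
    simp only [PD.size] at hN
    simp only [Sub, Set.insert_subset_iff, Set.union_subset_iff] at hQ
    have h' := not_or.1 h
    have f1 := iha (by omega) hQ.2.1 (hQ.2.1 (sub_self _)) i h'.1
    have f2 := ihc (by omega) hQ.2.2 (hQ.2.2 (sub_self _)) i h'.2
    refine (f1.union hm f2).add hm _ _ _ hself (fun T h1 _ k h2 h3 => ?_)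
    exact ⟨h1 _ _ (Or.inl ⟨h2, h3, rfl⟩), h1 _ _ (Or.inr ⟨h2, h3, rfl⟩)⟩
  | and a c iha ihc =>
    intro i h
    simp only [PD.size] at hN
    simp only [Sub, Set.insert_subset_iff, Set.union_subset_iff] at hQ
    rcases not_and_or.1 h with h | h
    · have f1 := iha (by omega) hQ.2.1 (hQ.2.1 (sub_self _)) i h
      exact f1.add hm _ _ _ hself (fun T h1 _ k h2 h3 => Or.inl (h1 _ _ ⟨h2, h3, rfl⟩))
    · have f1 := ihc (by omega) hQ.2.2 (hQ.2.2 (sub_self _)) i h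
      exact f1.add hm _ _ _ hself (fun T h1 _ k h2 h3 => Or.inr (h1 _ _ ⟨h2, h3, rfl⟩))
  | next a iha =>
    intro i h
    simp only [PD.size] at hN
    simp only [Sub, Set.insert_subset_iff] at hQ
    have f1 := iha (by omega) hQ.2 (hQ.2 (sub_self _)) (i + 1) h
    exact f1.add hm _ _ _ hself (fun T h1 _ k h2 h3 => h1 _ _ ⟨by omega, by omega, rfl⟩)
  | release a c iha ihc =>
    intro i h
    simp only [PD.size] at hN
    simp only [Sub, Set.insert_subset_iff, Set.union_subset_iff] at hQ
    obtain ⟨j, hij, h1, h2⟩ : ∃ j, i ≤ j ∧ ¬ Tr L π j (fun _ => b) c ∧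
        ∀ k, i ≤ k → k < j → ¬ Tr L π k (fun _ => b) a := by
      simp only [Tr, PD.Sat] at h
      push Not at h
      exact h
    have f1 := Fam.upto hm i j (fun l hl hl' =>
      iha (by omega) hQ.2.1 (hQ.2.1 (sub_self _)) l (h2 l hl hl'))
    have f2 := ihc (by omega) hQ.2.2 (hQ.2.2 (sub_self _)) j h1
    refine ((f1.union hm f2).add hm i (j + 1) _ hself (fun T h1 hT k h2 h3 => ?_)).weaken ?_
    · rcases Nat.lt_succ_iff_lt_or_eq.1 h3 with hk | hk
      · exact Or.inr ⟨h1 _ _ (Or.inl ⟨h2, hk, rfl⟩), hT _ (by omega) (by omega)⟩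
      · exact Or.inl (h1 _ _ (Or.inr ⟨by omega, by omega, rfl⟩))
    · rintro k χ ⟨h1, h2, h3⟩
      exact ⟨h1, by omega, h3⟩
  | untl a c iha ihc =>
    intro i h
    simp only [PD.size] at hN
    simp only [Sub, Set.insert_subset_iff, Set.union_subset_iff] at hQ
    by_cases hall : ∀ j ≥ i, ¬ Tr L π j (fun _ => b) c
    · have hA := HE c (by omega) (hLN c i hall)
      exact Fam.empty.add hm _ _ _ hself (fun T _ _ k h1 h2 => Or.inl hA)
    · push Not at hall
      obtain ⟨j, hj, hjc⟩ := hall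
      have h' : ∀ j, i ≤ j → Tr L π j (fun _ => b) c →
          ∃ k, i ≤ k ∧ k < j ∧ ¬ Tr L π k (fun _ => b) a := by
        simp only [Tr, PD.Sat] at h
        push Not at h
        exact h
      obtain ⟨k, hk1, hk2, hk3⟩ := h' j hj hjc
      classical
      let P : ℕ → Prop := fun k => i ≤ k ∧ ¬ Tr L π k (fun _ => b) a
      have hP : ∃ k, P k := ⟨k, hk1, hk3⟩
      have hc : ∀ l, i ≤ l → l < Nat.find hP + 1 → ¬ Tr L π l (fun _ => b) c := by
        intro l hl hl' hlc
        obtain ⟨k', h1, h2, h3⟩ := h' l hl hlc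
        exact Nat.find_min hP (m := k') (by omega) ⟨h1, h3⟩
      obtain ⟨hq1, hq2⟩ := Nat.find_spec hP
      generalize Nat.find hP = q at hc hq1 hq2
      have f1 := Fam.upto hm i (q + 1) (fun l hl hl' =>
        ihc (by omega) hQ.2.2 (hQ.2.2 (sub_self _)) l (hc l hl hl'))
      have f2 := iha (by omega) hQ.2.1 (hQ.2.1 (sub_self _)) q hq2
      refine ((f1.union hm f2).add hm i (q + 1) _ hself (fun T h1 hT k h2 h3 => ?_)).weaken ?_
      · refine Or.inr ⟨h1 _ _ (Or.inl ⟨h2, h3, rfl⟩), ?_⟩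
        rcases Nat.lt_succ_iff_lt_or_eq.1 h3 with hk | hk
        · exact Or.inr (hT _ (by omega) (by omega))
        · exact Or.inl (h1 _ _ (Or.inr ⟨by omega, by omega, rfl⟩))
      · rintro k χ ⟨h1, h2, h3⟩
        exact ⟨h1, by omega, h3⟩
  | always c ihc =>
    intro i h
    simp only [PD.size] at hN
    refine Fam.empty.add hm _ _ _ hself (fun T _ _ k h1 h2 hA => h ?_)
    exact fun j _ => (HU c (by omega) hA).at hπ Relation.ReflTransGen.refl j
  | evVar x c ihc =>
    intro i h
    simp only [PD.size] at hN
    simp only [Sub, Set.insert_subset_iff] at hQ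
    have h' : ∀ j, i ≤ j → j ≤ b + i → ¬ Tr L π j (fun _ => b) c :=
      fun j h1 h2 h3 => h ⟨j, h1, h2, h3⟩
    have e1 := Nat.div_add_mod i M
    have e2 := Nat.mod_lt i hM
    have f1 := Fam.upto hm i (M * (i / M) + 2 * M) (fun l hl hl' =>
      ihc (by omega) hQ.2 (hQ.2 (sub_self _)) l (h' l hl (by omega)))
    refine (f1.add hm i (M * (i / M) + M) _ hself (fun T h1 hT k h2 h3 => ?_)).weaken ?_
    · have e3 : k / M = i / M := by
        apply Nat.div_eq_of_lt_le
        · rw [mul_comm]; omega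
        · rw [add_mul, mul_comm]; omega
      intro l hl
      rw [e3]
      have e4 := Nat.div_add_mod l M
      have e5 := Nat.mod_lt l hM
      constructor
      · intro hlM
        refine h1 _ _ ⟨by omega, ?_, rfl⟩
        have := Nat.mul_le_mul_left M hlM
        rw [mul_add] at this
        omega
      · intro hlM
        rw [hlM] at e4
        exact hT _ (by omega) (by omega)
    · rintro k χ ⟨h1, h2, h3⟩
      exact ⟨h1, by omega, h3⟩

theorem neg_step [Finite S] {c : S} (hc : Bot R c) (V : ℕ) (s : S) (T T' : Set (PD AP Var))
    (hcs : Reach R c s) (ρ : ℕ → S) (g : Gen R ρ) (hs : R s (ρ 0))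
    (hT' : ∀ χ ∈ T', ¬ Tr L ρ 0 (fun _ => V) χ)
    (hok : ∀ χ ∈ T, NegOK L (LA R L (fun _ => V) c) (LN R L (fun _ => V) c)
      (fun _ ψ => ψ ∈ T ∧ ∀ k < V, ¬ Tr L ρ k (fun _ => V) ψ) s T T' χ) :
    ∀ χ ∈ T, ¬ Tr L (cons s ρ) 0 (fun _ => V) χ := by
  have hg := g.cons s hs
  intro χ
  induction χ with
  | atom a => exact fun hχ => hok _ hχ
  | natom a => exact fun hχ => not_not.2 (hok _ hχ)
  | and a d iha ihd =>
    intro hχ h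
    rcases hok _ hχ with h' | h'
    · exact iha h' h.1
    · exact ihd h' h.2
  | or a d iha ihd =>
    intro hχ h
    have h' := hok _ hχ
    exact h.elim (iha h'.1) (ihd h'.2)
  | next a iha =>
    intro hχ h
    exact hT' _ (hok _ hχ) ((tr_cons s ρ 0 _ a).1 h)
  | untl a d iha ihd =>
    rintro hχ ⟨j, -, h1, h2⟩
    rcases hok _ hχ with h | ⟨h3, h4⟩
    · exact h.at hg hcs j h1
    · rcases j with _ | j
      · exact ihd h3 h1
      · rcases h4 with h4 | h4
        · exact iha h4 (h2 0 le_rfl (by omega))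
        · refine hT' _ h4 ⟨j, by omega, (tr_cons s ρ j _ d).1 h1, fun k _ hk => ?_⟩
          exact (tr_cons s ρ k _ a).1 (h2 (k + 1) (by omega) (by omega))
  | release a d iha ihd =>
    intro hχ h
    rcases hok _ hχ with h' | ⟨h3, h4⟩
    · rcases h 0 le_rfl with h1 | ⟨k, h1, h2, h3⟩
      · exact ihd h' h1
      · omega
    · refine hT' _ h4 fun j _ => ?_
      rcases h (j + 1) (by omega) with h1 | ⟨k, h1, h2, h5⟩
      · exact Or.inl ((tr_cons s ρ j _ d).1 h1)
      · rcases k with _ | k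
        · exact absurd h5 (iha h3)
        · exact Or.inr ⟨k, by omega, by omega, (tr_cons s ρ k _ a).1 h5⟩
  | always d ihd =>
    intro hχ h
    refine hok _ hχ fun ω hω hr => ?_
    exact const_of_det (det_tr (fun _ => V) d) hg (n₀ := 0) (N := 0) (hc.of_reach hcs)
      (fun j _ => (tr_sh _ j 0 _ d).2 (h j (by omega))) ω hω ((hc _ hcs).trans hr)
  | evVar x d ihd =>
    rintro hχ ⟨j, -, hj, h1⟩
    have h' := hok _ hχ
    rcases j with _ | j
    · exact ihd h'.1 h1
    · exact h'.2 j (by simp only at hj; omega) ((tr_cons s ρ j _ d).1 h1)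

def GN (R : S → S → Prop) (L : S → Set AP) (V : ℕ) (D : Set (PD AP Var))
    (a : S × Set (PD AP Var)) (e : ℕ) : Prop :=
  ∃ ρ, Gen R ρ ∧ ρ 0 = a.1 ∧ (∀ χ ∈ a.2, ¬ Tr L ρ 0 (fun _ => V) χ) ∧
    (∀ x ψ, PD.evVar x ψ ∈ a.2 → ∀ k ≤ e + V, ¬ Tr L ρ k (fun _ => V) ψ) ∧
    (∀ ψ ∈ D, ∀ k ≤ e, ¬ Tr L ρ k (fun _ => V) ψ)

theorem GN_step [Finite S] {c : S} (hc : Bot R c) (V : ℕ) (D : Set (PD AP Var))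
    (a a' : S × Set (PD AP Var)) (e : ℕ)
    (hR : Reach R c a.1 ∧ R a.1 a'.1 ∧ (∀ ψ ∈ D, ψ ∈ a.2) ∧
      ∀ χ ∈ a.2, NegOK L (LA R L (fun _ => V) c) (LN R L (fun _ => V) c)
        (fun x ψ => ψ ∈ a.2 ∧ PD.evVar x ψ ∈ a'.2) a.1 a.2 a'.2 χ)
    (h : GN R L V D a' e) : GN R L V D a (e + 1) := by
  obtain ⟨ρ, g, h0, hT', hev, hD⟩ := h
  obtain ⟨s, T⟩ := a
  obtain ⟨s', T'⟩ := a'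
  simp only at *
  obtain ⟨hcs, hs, hDT, hok⟩ := hR
  rw [← h0] at hs
  have main := neg_step (L := L) hc V s T T' hcs ρ g hs hT' (fun χ hχ => by
    have := hok χ hχ
    cases χ with
    | evVar x ψ => exact ⟨this.1, fun k hk => hev x ψ this.2 k (by omega)⟩
    | _ => exact this)
  refine ⟨cons s ρ, g.cons s hs, rfl, main, ?_, ?_⟩
  · intro x ψ hχ k hk
    have h' := hok _ hχ
    rcases k with _ | k
    · exact main _ h'.1
    · rw [tr_cons]
      exact hev x ψ h'.2 k (by omega)
  · intro ψ hψ k hk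
    rcases k with _ | k
    · exact main _ (hDT _ hψ)
    · rw [tr_cons]
      exact hD ψ hψ k (by omega)

theorem GN_cross [Finite S] {c : S} (hc : Bot R c) (V : ℕ) (D D' : Set (PD AP Var))
    (a a' : S × Set (PD AP Var)) (e : ℕ) (he : V ≤ e)
    (hR : Reach R c a.1 ∧ R a.1 a'.1 ∧ (∀ ψ ∈ D, ψ ∈ a.2) ∧
      ∀ χ ∈ a.2, NegOK L (LA R L (fun _ => V) c) (LN R L (fun _ => V) c)
        (fun _ ψ => ψ ∈ a.2 ∧ ψ ∈ D') a.1 a.2 a'.2 χ)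
    (h : GN R L V D' a' e) : GN R L V D a 0 := by
  obtain ⟨ρ, g, h0, hT', hev, hD⟩ := h
  obtain ⟨s, T⟩ := a
  obtain ⟨s', T'⟩ := a'
  simp only at *
  obtain ⟨hcs, hs, hDT, hok⟩ := hR
  rw [← h0] at hs
  have main := neg_step (L := L) hc V s T T' hcs ρ g hs hT' (fun χ hχ => by
    have := hok χ hχ
    cases χ with
    | evVar x ψ => exact ⟨this.1, fun k hk => hD ψ this.2 k (by omega)⟩
    | _ => exact this)
  refine ⟨cons s ρ, g.cons s hs, rfl, main, ?_, ?_⟩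
  · intro x ψ hχ k hk
    have h' := hok _ hχ
    rcases k with _ | k
    · exact main _ h'.1
    · rw [tr_cons]
      exact hD ψ h'.2 k (by omega)
  · intro ψ hψ k hk
    obtain rfl : k = 0 := by omega
    exact main _ (hDT _ hψ)

theorem thmU [Fintype S] (V b : ℕ) (θ : PD AP Var)
    (hbd : 4 * (Fintype.card S * 2 ^ θ.size) ≤ b)
    (HU : ∀ θ' : PD AP Var, θ'.size < θ.size → ∀ c, Bot R c →
      LA R L (fun _ => V) c θ' → LA R L (fun _ => b) c θ')
    (HE : ∀ θ' : PD AP Var, θ'.size < θ.size → ∀ c, Bot R c →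
      LN R L (fun _ => b) c θ' → LN R L (fun _ => V) c θ')
    (π : ℕ → S) (hπ : Gen R π) (hb : Bot R (π 0)) (h : ¬ Tr L π 0 (fun _ => b) θ) :
    ∃ ρ, Gen R ρ ∧ ρ 0 = π 0 ∧ ¬ Tr L ρ 0 (fun _ => V) θ := by
  haveI : Nonempty S := ⟨π 0⟩
  have hBpos : 0 < Fintype.card S * 2 ^ θ.size := by positivity
  obtain ⟨hf, hc⟩ := states_card (S := S) θ
  generalize Fintype.card S * 2 ^ θ.size = B at hc hbd hBpos
  set M := B + 1 with hM
  obtain ⟨T, h1, h2, h3, n, h4⟩ := famN (L := L) hπ hb θ.size M b V (by omega) (by omega)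
    (fun θ' hθ' => HU θ' hθ' _ hb) (fun θ' hθ' => HE θ' hθ' _ hb) (Sub θ) θ le_rfl le_rfl 0 h
  let D : ℕ → Set (PD AP Var) := fun β => {ψ | ∀ l, l / M = β → ψ ∈ T l}
  have hD : ∀ l, ∀ ψ ∈ D (l / M), ψ ∈ T l := fun l ψ hψ => hψ l rfl
  let x : ℕ → S × Set (PD AP Var) := fun k => (π k, T k)
  have hMpos : 0 < M := by omega
  have base : ∃ e, V ≤ e ∧ GN R L V (D n) (x (M * n)) e := by
    have hn : n ≤ M * n := Nat.le_mul_of_pos_left n hMpos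
    have hT : T (M * n) = ∅ := h4 _ hn
    refine ⟨V, le_rfl, sh π (M * n), hπ.sh _, rfl, ?_, ?_, ?_⟩
    · simp [x, hT]
    · simp [x, hT]
    · intro ψ hψ
      have := hψ (M * n) (Nat.mul_div_cancel_left n hMpos)
      rw [hT] at this
      exact absurd this (Set.notMem_empty _)
  have step : ∀ β, (∃ e, V ≤ e ∧ GN R L V (D (β + 1)) (x (M * (β + 1))) e) →
      ∃ e, V ≤ e ∧ GN R L V (D β) (x (M * β)) e := by
    rintro β ⟨e, he, hG⟩
    have hdiv : ∀ k, M * β ≤ k → k ≤ M * β + B → k / M = β := by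
      intro k hk1 hk2
      apply Nat.div_eq_of_lt_le
      · rw [mul_comm]; omega
      · rw [add_mul, mul_comm]; omega
    have hlast : GN R L V (D β) (x (M * β + B)) 0 := by
      refine GN_cross hb V (D β) (D (β + 1)) _ (x (M * (β + 1))) e he
        ⟨hπ.reach 0 _ (by omega), ?_, ?_, ?_⟩ hG
      · have := hπ.step (M * β + B)
        simpa only [x, mul_add, hM, mul_one, add_assoc] using this
      · intro ψ hψ
        exact hψ _ (hdiv _ (by omega) le_rfl)
      · intro χ hχ
        have := h1 (M * β + B) χ hχ
        beta_reduce at this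
        rw [show M * β + B + 1 = M * (β + 1) by rw [mul_add]; omega] at this
        cases χ with
        | evVar y ψ =>
          refine ⟨(this _ le_rfl).1 (by omega), fun l hl => (this l ?_).1 ?_⟩
          · have e4 := Nat.div_add_mod l M
            rw [hl, mul_add] at e4
            omega
          · rw [hdiv _ (by omega) le_rfl]; omega
        | _ => exact this
    obtain ⟨i, j, hi, hij, hj, hxe⟩ := pigeon hf x (M * β) (M * β + B)
      (fun k _ _ => ⟨Set.mem_univ _, h3 k⟩) (by omega)
    refine pump _ (GN R L V (D β)) (GN_step hb V (D β)) x (M * β) (M * β + B) i j hi hij hj hxe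
      ?_ hlast V
    intro k hk1 hk2
    have e1 := hdiv k hk1 (by omega)
    have e2 := hdiv (k + 1) (by omega) (by omega)
    refine ⟨hπ.reach 0 _ (by omega), hπ.step k, fun ψ hψ => hψ _ e1, fun χ hχ => ?_⟩
    have := h1 k χ hχ
    cases χ with
    | evVar y ψ =>
      exact ⟨(this _ le_rfl).1 (by omega), (this (k + 1) (by omega)).2 (by rw [e1, e2])⟩
    | _ => exact this
  have all : ∀ d, d ≤ n → ∃ e, V ≤ e ∧ GN R L V (D (n - d)) (x (M * (n - d))) e := by
    intro d
    induction d with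
    | zero => exact fun _ => base
    | succ d ih =>
      intro hd
      apply step
      rw [show n - (d + 1) + 1 = n - d by omega]
      exact ih (by omega)
  obtain ⟨e, -, ρ, g, h0, hT, -⟩ := all n le_rfl
  rw [Nat.sub_self, mul_zero] at h0 hT
  exact ⟨ρ, g, h0, hT _ (h2 _ _ ⟨le_rfl, by omega, rfl⟩)⟩

theorem mainEU [Fintype S] (V b : ℕ) (N : ℕ) : ∀ θ : PD AP Var, θ.size ≤ N →
    (2 * (Fintype.card S * 2 ^ θ.size) ≤ b → ∀ π : ℕ → S, Gen R π → Tr L π 0 (fun _ => V) θ →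
      ∃ ρ, Gen R ρ ∧ ρ 0 = π 0 ∧ Tr L ρ 0 (fun _ => b) θ) ∧
    (4 * (Fintype.card S * 2 ^ θ.size) ≤ b → ∀ π : ℕ → S, Gen R π → Bot R (π 0) →
      ¬ Tr L π 0 (fun _ => b) θ →
      ∃ ρ, Gen R ρ ∧ ρ 0 = π 0 ∧ ¬ Tr L ρ 0 (fun _ => V) θ) := by
  induction N with
  | zero => intro θ hθ; cases θ <;> simp [PD.size] at hθ
  | succ N ih =>
    intro θ hθ
    have hpow : ∀ θ' : PD AP Var, θ'.size < θ.size →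
        2 * (Fintype.card S * 2 ^ θ'.size) ≤ Fintype.card S * 2 ^ θ.size := by
      intro θ' hθ'
      have : 2 ^ (θ'.size + 1) ≤ 2 ^ θ.size := Nat.pow_le_pow_right (by norm_num) hθ'
      have := Nat.mul_le_mul_left (Fintype.card S) this
      rw [pow_succ] at this
      linarith
    have HU : 2 * (Fintype.card S * 2 ^ θ.size) ≤ b → ∀ θ' : PD AP Var, θ'.size < θ.size →
        ∀ c, Bot R c → LA R L (fun _ => V) c θ' → LA R L (fun _ => b) c θ' := by
      intro hb θ' hθ' c hc hA ω hω hr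
      by_contra hcon
      have := hpow θ' hθ'
      obtain ⟨ρ, g, h0, h⟩ := (ih θ' (by omega)).2 (by omega) ω hω (hc.of_reach hr) hcon
      exact h (hA ρ g (h0 ▸ hr))
    have HE : 2 * (Fintype.card S * 2 ^ θ.size) ≤ b → ∀ θ' : PD AP Var, θ'.size < θ.size →
        ∀ c, Bot R c → LN R L (fun _ => b) c θ' → LN R L (fun _ => V) c θ' := by
      intro hb θ' hθ' c hc hA ω hω hr hcon
      have := hpow θ' hθ'
      obtain ⟨ρ, g, h0, h⟩ := (ih θ' (by omega)).1 (by omega) ω hω hcon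
      exact hA ρ g (h0 ▸ hr) h
    exact ⟨fun hb => thmE V b θ (by omega) (HU hb),
      fun hb => thmU V b θ hb (HU (by omega)) (HE (by omega))⟩

end
section
variable {S : Type}

def Cyl (n : ℕ) (u : ℕ → S) : Set (ℕ → S) := {π | ∀ k ≤ n, π k = u k}

noncomputable def Wt [DecidableEq S] (P : S → S → ℝ≥0∞) (s₀ : S) (n : ℕ) (u : ℕ → S) : ℝ≥0∞ :=
  (if u 0 = s₀ then 1 else 0) * ∏ k ∈ Finset.range n, P (u k) (u (k + 1))

theorem Wt_succ [DecidableEq S] (P : S → S → ℝ≥0∞) (s₀ : S) (n : ℕ) (u : ℕ → S) :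
    Wt P s₀ (n + 1) u = Wt P s₀ n u * P (u n) (u (n + 1)) := by
  simp only [Wt, Finset.prod_range_succ, mul_assoc]

theorem Wt_congr [DecidableEq S] (P : S → S → ℝ≥0∞) (s₀ : S) (n : ℕ) (u u' : ℕ → S)
    (h : ∀ k ≤ n, u' k = u k) : Wt P s₀ n u' = Wt P s₀ n u := by
  simp only [Wt, h 0 (Nat.zero_le _)]
  congr 1
  refine Finset.prod_congr rfl fun k hk => ?_
  have := Finset.mem_range.1 hk
  rw [h k (by omega), h (k + 1) (by omega)]

theorem Wt_add [DecidableEq S] (P : S → S → ℝ≥0∞) (s₀ : S) (n l : ℕ) (u : ℕ → S) :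
    Wt P s₀ (n + l) u = Wt P s₀ n u * ∏ k ∈ Finset.range l, P (u (n + k)) (u (n + k + 1)) := by
  simp only [Wt, Finset.prod_range_add, mul_assoc]

theorem Wt_sum [Fintype S] [DecidableEq S] (P : S → S → ℝ≥0∞) (hP : ∀ s, ∑ t, P s t = 1) (s₀ : S)
    (n : ℕ) (u : ℕ → S) :
    ∑ s, Wt P s₀ (n + 1) (Function.update u (n + 1) s) = Wt P s₀ n u := by
  have : ∀ s, Wt P s₀ (n + 1) (Function.update u (n + 1) s) = Wt P s₀ n u * P (u n) s := by
    intro s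
    rw [Wt_succ, Wt_congr P s₀ n u]
    · simp
    · intro k hk
      rw [Function.update_of_ne (by omega)]
  simp only [this, ← Finset.mul_sum, hP, mul_one]

theorem null_cover [Finite S] [MeasurableSpace S] (μ : Measure (ℕ → S)) (X : Set (ℕ → S)) (n : ℕ)
    (h : ∀ u, μ (X ∩ Cyl n u) = 0) : μ X = 0 := by
  have : X ⊆ ⋃ w : Fin (n + 1) → S, X ∩ Cyl n (fun k => w ⟨min k n, by omega⟩) := by
    intro π hπ
    refine Set.mem_iUnion.2 ⟨fun k => π k, hπ, fun k hk => ?_⟩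
    simp only [min_eq_left hk]
  exact measure_mono_null this (measure_iUnion_null fun w => h _)

theorem cyl_split [Fintype S] [DecidableEq S] (X : Set (ℕ → S)) (n : ℕ) (u : ℕ → S) :
    X ∩ Cyl n u ⊆ ⋃ s ∈ (Finset.univ : Finset S), X ∩ Cyl (n + 1) (Function.update u (n + 1) s) := by
  rintro π ⟨hX, hπ⟩
  simp only [Finset.mem_univ, Set.iUnion_true, Set.mem_iUnion]
  refine ⟨π (n + 1), hX, fun k hk => ?_⟩
  rcases Nat.lt_or_eq_of_le hk with hk | rfl
  · rw [Function.update_of_ne (by omega)]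
    exact hπ k (by omega)
  · simp

theorem avoid [Fintype S] [DecidableEq S] [MeasurableSpace S] (P : S → S → ℝ≥0∞)
    (hP : ∀ s, ∑ t, P s t = 1) (s₀ : S) (μ : Measure (ℕ → S)) (X : Set (ℕ → S)) (N : ℕ) (c : ℝ≥0∞)
    (hc : ∀ n ≥ N, ∀ u, μ (X ∩ Cyl n u) ≤ c * Wt P s₀ n u) (l : ℕ) :
    ∀ n ≥ N, ∀ u, X ∩ Cyl (n + l) u = ∅ →
      μ (X ∩ Cyl n u) + c * Wt P s₀ (n + l) u ≤ c * Wt P s₀ n u := by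
  induction l with
  | zero =>
    intro n hn u h
    rw [add_zero] at *
    simp [h]
  | succ l ih =>
    intro n hn u h
    have h' := ih (n + 1) (by omega) u (by rwa [show n + 1 + l = n + (l + 1) by omega])
    rw [show n + 1 + l = n + (l + 1) by omega] at h'
    have e : Function.update u (n + 1) (u (n + 1)) = u := Function.update_eq_self _ _
    have h1 := (measure_mono (cyl_split X n u)).trans (measure_biUnion_finset_le (μ := μ) _ _)
    rw [← Finset.add_sum_erase _ _ (Finset.mem_univ (u (n + 1))), e] at h1
    have h2 := Wt_sum P hP s₀ n u
    rw [← Finset.add_sum_erase _ _ (Finset.mem_univ (u (n + 1))), e] at h2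
    rw [← h2, mul_add, Finset.mul_sum]
    calc _ ≤ _ := add_le_add_left h1 _
      _ = (μ (X ∩ Cyl (n + 1) u) + c * Wt P s₀ (n + (l + 1)) u) + _ := by
        rw [add_right_comm]
      _ ≤ _ := add_le_add h' (Finset.sum_le_sum fun s _ => hc (n + 1) (by omega) _)

theorem word_of_reach {P : S → S → ℝ≥0∞} {r s : S} (h : Reach (fun s t => 0 < P s t) r s) :
    ∃ (m : ℕ) (t : ℕ → S), t 0 = r ∧ t m = s ∧ ∀ k < m, 0 < P (t k) (t (k + 1)) := by
  induction h with
  | refl => exact ⟨0, fun _ => r, rfl, rfl, by simp⟩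
  | @tail b c _ hbc ih =>
    obtain ⟨m, t, h0, hm, ht⟩ := ih
    refine ⟨m + 1, fun k => if k ≤ m then t k else c, by simpa using h0, by simp, fun k hk => ?_⟩
    rcases Nat.lt_succ_iff_lt_or_eq.1 hk with hk | rfl
    · have := ht k hk
      simpa [show k ≤ m by omega, show k + 1 ≤ m by omega] using this
    · simpa [hm] using hbc

theorem words [Fintype S] {P : S → S → ℝ≥0∞} (u : ℕ → S) (l : ℕ)
    (hu : ∀ k < l, 0 < P (u k) (u (k + 1))) :
    ∃ p : ℝ≥0∞, 0 < p ∧ ∀ r, Reach (fun s t => 0 < P s t) r (u 0) → ∃ (m : ℕ) (t : ℕ → S),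
      t 0 = r ∧ (∀ k ≤ l, t (m + k) = u k) ∧
        p ≤ ∏ k ∈ Finset.range (m + l), P (t k) (t (k + 1)) := by
  have : ∀ r, ∃ p : ℝ≥0∞, 0 < p ∧ (Reach (fun s t => 0 < P s t) r (u 0) → ∃ (m : ℕ) (t : ℕ → S),
      t 0 = r ∧ (∀ k ≤ l, t (m + k) = u k) ∧
        p ≤ ∏ k ∈ Finset.range (m + l), P (t k) (t (k + 1))) := by
    intro r
    by_cases hr : Reach (fun s t => 0 < P s t) r (u 0)
    · obtain ⟨m, t, h0, hm, ht⟩ := word_of_reach hr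
      let t' : ℕ → S := fun k => if k < m then t k else u (k - m)
      have ht' : ∀ k ≤ m, t' k = t k := by
        intro k hk
        by_cases h : k < m
        · simp [t', h]
        · obtain rfl : k = m := by omega
          simp [t', hm]
      have hu' : ∀ k, t' (m + k) = u k := fun k => by simp [t']
      refine ⟨∏ k ∈ Finset.range (m + l), P (t' k) (t' (k + 1)), ?_, fun _ =>
        ⟨m, t', (ht' 0 (by omega)).trans h0, fun k _ => hu' k, le_rfl⟩⟩
      rw [pos_iff_ne_zero, Finset.prod_ne_zero_iff]
      intro k hk
      have hk := Finset.mem_range.1 hk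
      rw [← pos_iff_ne_zero]
      by_cases h : k < m
      · rw [ht' k (by omega), ht' (k + 1) (by omega)]
        exact ht k h
      · obtain ⟨j, rfl⟩ := Nat.exists_eq_add_of_le (not_lt.1 h)
        rw [add_assoc, hu', hu']
        exact hu j (by omega)
    · exact ⟨1, one_pos, fun h => absurd h hr⟩
  choose f hf1 hf2 using this
  refine ⟨Finset.univ.inf f, ?_, fun r hr => ?_⟩
  · rw [Finset.lt_inf_iff ENNReal.zero_lt_top]
    exact fun r _ => hf1 r
  · obtain ⟨m, t, h1, h2, h3⟩ := hf2 r hr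
    exact ⟨m, t, h1, h2, (Finset.inf_le (Finset.mem_univ r)).trans h3⟩

theorem avoid_null [Fintype S] [DecidableEq S] [MeasurableSpace S] (P : S → S → ℝ≥0∞)
    (hP : ∀ s, ∑ t, P s t = 1) (s₀ : S) (μ : Measure (ℕ → S))
    (hcyl : ∀ n u, μ (Cyl n u) = Wt P s₀ n u) (u : ℕ → S) (l N : ℕ)
    (hu : ∀ k < l, 0 < P (u k) (u (k + 1))) :
    μ {π | (∀ n, Reach (fun s t => 0 < P s t) (π n) (u 0)) ∧
      ∀ i ≥ N, ∃ k ≤ l, π (i + k) ≠ u k} = 0 := by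
  set X := {π : ℕ → S | (∀ n, Reach (fun s t => 0 < P s t) (π n) (u 0)) ∧
      ∀ i ≥ N, ∃ k ≤ l, π (i + k) ≠ u k} with hX
  obtain ⟨p, hp, hw⟩ := words u l hu
  have hfin : ∀ n w, Wt P s₀ n w ≠ ∞ := by
    intro n w
    have hP1 : ∀ s t, P s t ≤ 1 := fun s t => by
      rw [← hP s]; exact Finset.single_le_sum (f := P s) (fun _ _ => zero_le) (Finset.mem_univ t)
    refine ENNReal.mul_ne_top (by split_ifs <;> simp) ?_
    exact ENNReal.prod_ne_top fun k _ => ne_top_of_le_ne_top ENNReal.one_ne_top (hP1 _ _)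
  have key : ∀ j : ℕ, ∀ n ≥ N, ∀ w, μ (X ∩ Cyl n w) ≤ (1 - p) ^ j * Wt P s₀ n w := by
    intro j
    induction j with
    | zero =>
      intro n _ w
      rw [pow_zero, one_mul, ← hcyl]
      exact measure_mono Set.inter_subset_right
    | succ j ih =>
      intro n hn w
      by_cases hr : Reach (fun s t => 0 < P s t) (w n) (u 0)
      · obtain ⟨m, t, h0, h1, h2⟩ := hw _ hr
        let w' : ℕ → S := fun k => if k < n then w k else t (k - n)
        have hw1 : ∀ k ≤ n, w' k = w k := by
          intro k hk
          by_cases h : k < n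
          · simp [w', h]
          · obtain rfl : k = n := by omega
            simp [w', h0]
        have hw2 : ∀ k, w' (n + k) = t k := fun k => by simp [w']
        have hC : Cyl n w' = Cyl n w := by
          ext π
          exact forall₂_congr fun k hk => by rw [hw1 k hk]
        have hemp : X ∩ Cyl (n + (m + l)) w' = ∅ := by
          refine Set.eq_empty_of_forall_notMem ?_
          rintro π ⟨⟨-, hπ⟩, hπ'⟩
          obtain ⟨k, hk, hne⟩ := hπ (n + m) (by omega)
          apply hne
          rw [hπ' _ (by omega), add_assoc, hw2, h1 k hk]
        have hA := avoid P hP s₀ μ X N _ ih (m + l) n hn w' hemp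
        rw [Wt_add, hC, Wt_congr P s₀ n w w' hw1] at hA
        have e : ∏ k ∈ Finset.range (m + l), P (w' (n + k)) (w' (n + k + 1)) =
            ∏ k ∈ Finset.range (m + l), P (t k) (t (k + 1)) :=
          Finset.prod_congr rfl fun k _ => by rw [add_assoc, hw2, hw2]
        rw [e] at hA
        have hA' : μ (X ∩ Cyl n w) + (1 - p) ^ j * Wt P s₀ n w * p ≤ (1 - p) ^ j * Wt P s₀ n w := by
          refine le_trans ?_ hA
          rw [mul_assoc]
          gcongr
        have hle : (1 - p) ^ j * Wt P s₀ n w ≠ ∞ :=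
          ENNReal.mul_ne_top (ENNReal.pow_ne_top (ENNReal.sub_ne_top ENNReal.one_ne_top)) (hfin _ _)
        have hne : (1 - p) ^ j * Wt P s₀ n w * p ≠ ∞ :=
          ne_top_of_le_ne_top hle (le_add_self.trans hA')
        have := ENNReal.le_sub_of_add_le_right hne hA'
        refine this.trans (le_of_eq ?_)
        rw [pow_succ, mul_right_comm _ (1 - p), ENNReal.mul_sub (fun _ _ => hle), mul_one]
      · have : X ∩ Cyl n w = ∅ := by
          refine Set.eq_empty_of_forall_notMem ?_
          rintro π ⟨⟨hπ, -⟩, hπ'⟩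
          exact hr (hπ' n le_rfl ▸ hπ n)
        simp [this]
  refine null_cover μ X N fun w => ?_
  have hlim : Filter.Tendsto (fun j : ℕ => (1 - p) ^ j * Wt P s₀ N w) Filter.atTop (nhds 0) := by
    have h1 : (1 - p) < 1 := ENNReal.sub_lt_self ENNReal.one_ne_top one_ne_zero hp.ne'
    have := ENNReal.Tendsto.mul_const (b := Wt P s₀ N w)
      (ENNReal.tendsto_pow_atTop_nhds_zero_of_lt_one h1) (Or.inr (hfin N w))
    simpa using this
  exact le_antisymm (ge_of_tendsto' hlim fun j => key j N le_rfl w) zero_le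

theorem gen_ae [Fintype S] [DecidableEq S] [MeasurableSpace S] (P : S → S → ℝ≥0∞)
    (hP : ∀ s, ∑ t, P s t = 1) (s₀ : S) (μ : Measure (ℕ → S))
    (hcyl : ∀ n u, μ (Cyl n u) = Wt P s₀ n u) :
    μ {π | ¬ (Gen (fun s t => 0 < P s t) π ∧ π 0 = s₀)} = 0 := by
  let ex : (l : ℕ) → (Fin (l + 1) → S) → ℕ → S := fun l w k => w ⟨min k l, by omega⟩
  let Y : (l : ℕ) → (Fin (l + 1) → S) → ℕ → Set (ℕ → S) := fun l w N =>
    {π | (∀ k < l, 0 < P (ex l w k) (ex l w (k + 1))) ∧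
      (∀ n, Reach (fun s t => 0 < P s t) (π n) (ex l w 0)) ∧
      ∀ i ≥ N, ∃ k ≤ l, π (i + k) ≠ ex l w k}
  have hsub : {π | ¬ (Gen (fun s t => 0 < P s t) π ∧ π 0 = s₀)} ⊆
      ({π | π 0 ≠ s₀} ∪ ⋃ i : ℕ, {π | ¬ 0 < P (π i) (π (i + 1))}) ∪
        ⋃ l, ⋃ w, ⋃ N, Y l w N := by
    intro π hπ
    by_contra hcon
    simp only [Set.mem_union, Set.mem_iUnion, Set.mem_setOf_eq, not_or, not_exists, not_not] at hcon
    obtain ⟨⟨h0, h1⟩, h2⟩ := hcon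
    refine hπ ⟨⟨h1, ?_⟩, h0⟩
    intro u l N hu hr
    by_contra hno
    push Not at hno
    have hex : ∀ k ≤ l, ex l (fun k => u k) k = u k := fun k hk => by
      simp only [ex, min_eq_left hk]
    refine h2 l (fun k => u k) N ⟨fun k hk => ?_, ?_, fun i hi => ?_⟩
    · rw [hex k (by omega), hex (k + 1) (by omega)]; exact hu k hk
    · rw [hex 0 (by omega)]; exact hr
    · obtain ⟨k, hk, h⟩ := hno i hi
      exact ⟨k, hk, by rwa [hex k hk]⟩
  refine measure_mono_null hsub (measure_union_null (measure_union_null ?_ ?_) ?_)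
  · refine null_cover μ _ 0 fun u => ?_
    by_cases hu : u 0 = s₀
    · convert measure_empty (μ := μ)
      refine Set.eq_empty_of_forall_notMem ?_
      rintro π ⟨h, h'⟩
      exact h ((h' 0 le_rfl).trans hu)
    · refine measure_mono_null Set.inter_subset_right ?_
      simp [hcyl, Wt, hu]
  · refine measure_iUnion_null fun i => null_cover μ _ (i + 1) fun u => ?_
    by_cases hu : 0 < P (u i) (u (i + 1))
    · convert measure_empty (μ := μ)
      refine Set.eq_empty_of_forall_notMem ?_
      rintro π ⟨h, h'⟩
      apply h
      rwa [h' i (by omega), h' (i + 1) le_rfl]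
    · refine measure_mono_null Set.inter_subset_right ?_
      rw [hcyl, Wt_succ, not_lt.1 hu |> le_zero_iff.1, mul_zero]
  · refine measure_iUnion_null fun l => measure_iUnion_null fun w => measure_iUnion_null fun N => ?_
    by_cases hu : ∀ k < l, 0 < P (ex l w k) (ex l w (k + 1))
    · refine measure_mono_null ?_ (avoid_null P hP s₀ μ hcyl (ex l w) l N hu)
      exact fun π hπ => hπ.2
    · convert measure_empty (μ := μ)
      exact Set.eq_empty_of_forall_notMem fun π hπ => hu hπ.1

def mv {AP Var : Type} (v : Var → ℕ) : PD AP Var → ℕ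
  | .atom _ => 0
  | .natom _ => 0
  | .and a b => max (mv v a) (mv v b)
  | .or a b => max (mv v a) (mv v b)
  | .next a => mv v a
  | .untl a b => max (mv v a) (mv v b)
  | .release a b => max (mv v a) (mv v b)
  | .always a => mv v a
  | .evVar x a => max (v x) (mv v a)

theorem sat_mono {AP Var : Type} (w : ℕ → Set AP) (v : Var → ℕ) (V : ℕ) (ψ : PD AP Var) :
    mv v ψ ≤ V → ∀ i, PD.Sat w i v ψ → PD.Sat w i (fun _ => V) ψ := by
  induction ψ with
  | atom a => exact fun _ i h => h
  | natom a => exact fun _ i h => h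
  | and a b iha ihb =>
    intro hV i h
    have hV := max_le_iff.1 hV
    exact ⟨iha hV.1 i h.1, ihb hV.2 i h.2⟩
  | or a b iha ihb =>
    intro hV i h
    have hV := max_le_iff.1 hV
    exact h.imp (iha hV.1 i) (ihb hV.2 i)
  | next a iha => exact fun hV i h => iha hV (i + 1) h
  | untl a b iha ihb =>
    rintro hV i ⟨j, h1, h2, h3⟩
    have hV := max_le_iff.1 hV
    exact ⟨j, h1, ihb hV.2 j h2, fun k hk hk' => iha hV.1 k (h3 k hk hk')⟩
  | release a b iha ihb =>
    intro hV i h j hj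
    have hV := max_le_iff.1 hV
    exact (h j hj).imp (ihb hV.2 j) fun ⟨k, h1, h2, h3⟩ => ⟨k, h1, h2, iha hV.1 k h3⟩
  | always a iha => exact fun hV i h j hj => iha hV j (h j hj)
  | evVar x a iha =>
    rintro hV i ⟨j, h1, h2, h3⟩
    have hV := max_le_iff.1 hV
    exact ⟨j, h1, by have := hV.1; simp only; omega, iha hV.2 j h3⟩

end
end PDX

/-- For a pLTL_◇ formula `φ` in which each parameter variable occurs at most once and a
finite Markov chain `M` with `m` states: `V_{>0}(φ) ≠ ∅` iff `v̄ ∈ V_{>0}(φ)`, where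
`v̄(x) = m·|φ|·2^{|φ|}` for every variable `x`. -/
theorem PD_Vpos_nonempty_iff_bound
    {AP Var S : Type} [DecidableEq Var] [Fintype S] [DecidableEq S] [MeasurableSpace S]
    (P : S → S → ℝ≥0∞) (hP : ∀ s, ∑ t, P s t = 1)
    (s₀ : S) (L : S → Set AP)
    (μ : Measure (ℕ → S)) (hprob : IsProbabilityMeasure μ)
    (hcyl : ∀ (n : ℕ) (u : ℕ → S),
      μ {π | ∀ k ≤ n, π k = u k} =
        (if u 0 = s₀ then 1 else 0) * ∏ k ∈ Finset.range n, P (u k) (u (k + 1)))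
    (φ : PD AP Var) (hvar : ∀ x : Var, PD.varCount x φ ≤ 1)
    (V : Set (Var → ℕ))
    (hV : V = {v | 0 < μ {π | PD.Sat (fun i => L (π i)) 0 v φ}}) :
    V.Nonempty ↔ (fun _ : Var => Fintype.card S * φ.size * 2 ^ φ.size) ∈ V := by
  subst hV
  refine ⟨?_, fun h => ⟨_, h⟩⟩
  rintro ⟨v, hv⟩
  simp only [Set.mem_setOf_eq] at hv ⊢
  have hnull := PDX.gen_ae P hP s₀ μ hcyl
  obtain ⟨π, hsat, hg⟩ : ∃ π : ℕ → S, PD.Sat (fun i => L (π i)) 0 v φ ∧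
      (PDX.Gen (fun s t => 0 < P s t) π ∧ π 0 = s₀) := by
    by_contra hcon
    push Not at hcon
    refine hv.ne' (measure_mono_null ?_ hnull)
    exact fun π hπ hg => hcon π hπ hg.1 hg.2
  have hsat' := PDX.sat_mono _ v _ φ le_rfl 0 hsat
  obtain ⟨ρ, gρ, h0, hρ⟩ : ∃ ρ : ℕ → S, PDX.Gen (fun s t => 0 < P s t) ρ ∧ ρ 0 = π 0 ∧
      PDX.Tr L ρ 0 (fun _ : Var => Fintype.card S * φ.size * 2 ^ φ.size) φ := by
    by_cases hsz : 2 ≤ φ.size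
    · refine (PDX.mainEU (PDX.mv v φ) _ φ.size φ le_rfl).1 ?_ π hg.1 hsat'
      calc 2 * (Fintype.card S * 2 ^ φ.size) ≤ φ.size * (Fintype.card S * 2 ^ φ.size) :=
            Nat.mul_le_mul_right _ hsz
        _ = _ := by ring
    · refine ⟨π, hg.1, rfl, ?_⟩
      cases φ with
      | atom a => exact hsat
      | natom a => exact hsat
      | _ =>
        exfalso
        apply hsz
        have hpos : ∀ ψ : PD AP Var, 0 < ψ.size := fun ψ => by cases ψ <;> simp [PD.size]
        simp only [PD.size]
        have := hpos ‹_›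
        omega
  obtain ⟨n, hn⟩ := PDX.det_tr (R := fun s t => 0 < P s t) (L := L) _ φ ρ gρ
  have hpos : 0 < μ (PDX.Cyl n ρ) := by
    rw [show μ (PDX.Cyl n ρ) = _ from hcyl n ρ, if_pos (h0.trans hg.2), one_mul,
      pos_iff_ne_zero, Finset.prod_ne_zero_iff]
    exact fun k _ => (gρ.step k).ne'
  rw [pos_iff_ne_zero]
  intro hz
  refine hpos.ne' (measure_mono_null ?_ (measure_union_null hz hnull))
  intro ω hω
  by_cases hgω : PDX.Gen (fun s t => 0 < P s t) ω ∧ ω 0 = s₀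
  · exact Or.inl ((hn ω hgω.1 hω).2 hρ)
  · exact Or.inr hgω
end

section
/- For every pLTL_◇ formula φ in which each parameter variable occurs at most once and every finite Markov chain M with m states: V_{=1}(φ) ≠ ∅ if and only if v̄ ∈ V_{=1}(φ), where v̄ is the valuation assigning v̄(x) = m·|φ|·2^{|φ|} to every parameter variable x of φ. -/
open MeasureTheory
open scoped ENNReal

/-- End of a run of pending positions. -/
def PEnd {Λ κ : Type} (P : Λ → κ → Prop) (lab : ℕ → Λ) (e : ℕ) (c : κ) : Prop :=
  P (lab e) c ∧ ¬ P (lab (e + 1)) c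

/-- Invariants for the pumping argument. -/
structure PInv {Λ κ : Type} (P : Λ → κ → Prop) (B : ℕ) (lab : ℕ → Λ) (O : ℕ → κ → Prop) : Prop where
  h1 : ∀ k c, O k c → P (lab k) c
  h2 : ∀ e d c, PEnd P lab e c → O d c → d ≤ e → d + B ≤ e
  h3 : ∀ e j c, PEnd P lab e c → j ≤ e → e ≤ j + B → P (lab j) c
  h4 : ∃ H, ∀ k c, H < k → ¬ P (lab k) c

def PDef {Λ κ : Type} (P : Λ → κ → Prop) (N : ℕ) (lab : ℕ → Λ) (O : ℕ → κ → Prop) :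
    Set (κ × ℕ × ℕ) :=
  {x | x.2.2 < N ∧ PEnd P lab x.2.1 x.1 ∧ ∃ d, d ≤ x.2.1 ∧ O d x.1 ∧ x.2.1 ≤ d + x.2.2}

theorem PDef_finite {Λ κ : Type} [Fintype κ] (P : Λ → κ → Prop) (B N : ℕ) (lab : ℕ → Λ)
    (O : ℕ → κ → Prop) (h : PInv P B lab O) : (PDef P N lab O).Finite := by
  obtain ⟨H, hH⟩ := h.h4
  apply Set.Finite.subset (s := Set.univ ×ˢ (Set.Iic H ×ˢ Set.Iic N))
  · exact Set.finite_univ.prod ((Set.finite_Iic H).prod (Set.finite_Iic N))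
  · rintro ⟨c, e, t⟩ ⟨h1, h2, _⟩
    refine ⟨trivial, ?_, ?_⟩
    · simp only [Set.mem_Iic]
      by_contra hlt
      exact hH e c (by simpa using hlt) h2.1
    · simp only [Set.mem_Iic]
      simp at h1; omega

/-- find a loop -/
theorem exists_loop {Λ κ : Type} [Fintype Λ] [Fintype κ] (P : Λ → κ → Prop) (B : ℕ)
    (hB : (Fintype.card κ + 1) * (Fintype.card Λ + 1) ≤ B)
    (lab : ℕ → Λ) (O : ℕ → κ → Prop) (h : PInv P B lab O) (p : ℕ) :
    ∃ a b, p < a ∧ a < b ∧ b ≤ p + B ∧ lab a = lab b ∧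
      ∀ j c, a ≤ j → j < b → ¬ PEnd P lab j c := by
  classical
  set K := Fintype.card κ
  set C := Fintype.card Λ
  have hblock : ∃ i : Fin (K + 1), ∀ j c, p + 1 + i * (C + 1) ≤ j → j < p + 1 + i * (C + 1) + C →
      ¬ PEnd P lab j c := by
    by_contra hcon
    push Not at hcon
    choose e c he1 he2 he3 using hcon
    have hinj : Function.Injective c := by
      intro i i' hii
      by_contra hne
      wlog hlt : i < i' generalizing i i'
      · exact this hii.symm (fun h => hne h.symm) (lt_of_le_of_ne (not_lt.mp hlt) (fun h => hne h.symm))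
      have h1 := he3 i
      have h2 := he3 i'
      rw [← hii] at h2
      have hle : (i : ℕ) + 1 ≤ i' := hlt
      have hm : ((i : ℕ) + 1) * (C + 1) ≤ i' * (C + 1) := Nat.mul_le_mul_right _ hle
      have hi' : (i' : ℕ) + 1 ≤ K + 1 := i'.2
      have hm' : ((i' : ℕ) + 1) * (C + 1) ≤ (K + 1) * (C + 1) := Nat.mul_le_mul_right _ hi'
      have e1 := he1 i
      have e2 := he2 i
      have e1' := he1 i'
      have e2' := he2 i'
      rw [Nat.add_mul] at hm hm'
      have := h.h3 (e i') (e i + 1) (c i) h2 (by omega) (by omega)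
      exact h1.2 this
    have := Fintype.card_le_of_injective c hinj
    simp [K] at this
  obtain ⟨i, hi⟩ := hblock
  have hpig : ∃ x y : Fin (C + 1), x ≠ y ∧
      lab (p + 1 + i * (C + 1) + x) = lab (p + 1 + i * (C + 1) + y) := by
    apply Fintype.exists_ne_map_eq_of_card_lt
    simp [C]
  obtain ⟨x, y, hxy, hl⟩ := hpig
  wlog hlt : x < y generalizing x y
  · exact this y x hxy.symm hl.symm (lt_of_le_of_ne (not_lt.mp hlt) hxy.symm)
  have hi' : (i : ℕ) + 1 ≤ K + 1 := i.2
  have hm' : ((i : ℕ) + 1) * (C + 1) ≤ (K + 1) * (C + 1) := Nat.mul_le_mul_right _ hi'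
  rw [Nat.add_mul] at hm'
  have hx := x.2
  have hy := y.2
  have hlt' : (x : ℕ) < y := hlt
  refine ⟨_, _, ?_, ?_, ?_, hl, ?_⟩
  · omega
  · omega
  · omega
  · intro j c h1 h2
    exact hi j c (by omega) (by omega)

theorem pump {Λ κ : Type} [Fintype Λ] [Fintype κ] (P : Λ → κ → Prop) (B N : ℕ)
    (hB : Nonempty κ → (Fintype.card κ + 1) * (Fintype.card Λ + 1) ≤ B) (n : ℕ) :
    ∀ (lab : ℕ → Λ) (O : ℕ → κ → Prop), PInv P B lab O → (PDef P N lab O).ncard ≤ n →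
    ∃ f : ℕ → ℕ, f 0 = 0 ∧ (∀ k, lab (f (k + 1)) = lab (f k + 1)) ∧
      (∀ k c, O (f k) c → ∀ j ≤ N, P (lab (f (k + j))) c) ∧
      (∀ k c, O (f k + 1) c → ∀ j ≤ N, P (lab (f (k + 1 + j))) c) ∧
      (∀ H, ∃ K, ∀ k, K ≤ k → H < f k) := by
  classical
  induction n using Nat.strong_induction_on with
  | _ n ih =>
  intro lab O h hn
  by_cases hD : PDef P N lab O = ∅
  · have key : ∀ k c, O k c → ∀ j ≤ N, P (lab (k + j)) c := by
      intro k c hO j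
      induction j with
      | zero => intro _; exact h.h1 k c hO
      | succ j ihj =>
        intro hj
        by_contra hne
        have : (c, k + j, j) ∈ PDef P N lab O := by
          refine ⟨?_, ⟨ihj (by omega), hne⟩, k, ?_, hO, ?_⟩ <;> simp
          omega
        rw [hD] at this
        exact this
    refine ⟨id, rfl, fun _ => rfl, key, ?_, fun H => ⟨H + 1, fun k hk => hk⟩⟩
    intro k c hO j hj
    exact key (k + 1) c hO j hj
  · obtain ⟨⟨c0, e0, t0⟩, hx0⟩ := Set.nonempty_iff_ne_empty.mpr hD
    have hd0 : ∃ d0, d0 ≤ e0 ∧ O d0 c0 := by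
      obtain ⟨_, _, d, h1, h2, _⟩ := hx0
      exact ⟨d, h1, h2⟩
    have hE0 : PEnd P lab e0 c0 := hx0.2.1
    -- take the smallest slack
    have hex : ∃ t, ∃ d, d ≤ e0 ∧ O d c0 ∧ e0 ≤ d + t := by
      obtain ⟨_, _, h⟩ := hx0
      exact ⟨t0, h⟩
    set t1 := Nat.find hex with ht1
    have ht1N : t1 < N := by
      have : t1 ≤ t0 := Nat.find_min' hex (by obtain ⟨_, _, h⟩ := hx0; exact h)
      have := hx0.1
      simp at this
      omega
    have ht1s := Nat.find_spec hex
    have ht1m : ∀ d, d ≤ e0 → O d c0 → d + t1 ≤ e0 := by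
      intro d hd hO
      have := Nat.find_min' hex ⟨d, hd, hO, (by omega : e0 ≤ d + (e0 - d))⟩
      omega
    have hBe : B ≤ e0 := by
      obtain ⟨d, hd, hO⟩ := hd0
      have := h.h2 e0 d c0 hE0 hO hd
      omega
    obtain ⟨a, b, hpa, hab, hbB, hlab, hend⟩ := exists_loop P B (hB ⟨c0⟩) lab O h (e0 - B)
    have hbe : b ≤ e0 := by omega
    set f : ℕ → ℕ := fun k => if k < b then k else k - (b - a) with hf
    have hf1 : ∀ k, k < b → f k = k := fun k hk => by simp [hf, hk]
    have hf2 : ∀ k, b ≤ k → f k = k - (b - a) := fun k hk => by simp [hf, Nat.not_lt.mpr hk]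
    have hfs : ∀ k, lab (f (k + 1)) = lab (f k + 1) := by
      intro k
      rcases lt_trichotomy (k + 1) b with hk | hk | hk
      · rw [hf1 _ hk, hf1 k (by omega)]
      · rw [hf2 (k + 1) (by omega), hf1 k (by omega)]
        rw [hk, ← hlab]; congr 1; omega
      · rw [hf2 (k + 1) (by omega), hf2 k (by omega)]; congr 1; omega
    set O' : ℕ → κ → Prop := fun k c => O (f k) c ∨ (k = b ∧ O b c) with hO'
    have hEnd : ∀ e c, PEnd P (lab ∘ f) e c → PEnd P lab (f e) c ∧ (e < a ∨ 2 * b ≤ e + a) := by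
      intro e c he
      have h1 : PEnd P lab (f e) c := by
        refine ⟨he.1, ?_⟩
        have := he.2
        simp only [Function.comp] at this
        rwa [hfs] at this
      refine ⟨h1, ?_⟩
      by_contra hcon
      push Not at hcon
      apply hend (f e) c ?_ ?_ h1
      · rcases lt_or_ge e b with hk | hk
        · rw [hf1 _ hk]; omega
        · rw [hf2 _ hk]; omega
      · rcases lt_or_ge e b with hk | hk
        · rw [hf1 _ hk]; omega
        · rw [hf2 _ hk]; omega
    have hInv : PInv P B (lab ∘ f) O' := by
      constructor
      · rintro k c (hO | ⟨rfl, hO⟩)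
        · exact h.h1 _ _ hO
        · have := h.h1 _ _ hO
          simp only [Function.comp]
          rw [hf2 _ le_rfl]
          rw [← hlab] at this
          convert this using 2
          congr 1; omega
      · intro e d c he hO hd
        obtain ⟨he1, he2⟩ := hEnd e c he
        rcases lt_or_ge e b with hk | hk
        · rw [hf1 _ hk] at he1
          rcases hO with hO | ⟨rfl, hO⟩
          · rw [hf1 d (by omega)] at hO
            exact h.h2 _ _ _ he1 hO hd
          · omega
        · rw [hf2 _ hk] at he1
          rcases hO with hO | ⟨rfl, hO⟩
          · rcases lt_or_ge d b with hk' | hk'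
            · rw [hf1 d (by omega)] at hO
              have := h.h2 _ _ _ he1 hO (by omega)
              omega
            · rw [hf2 d (by omega)] at hO
              have := h.h2 _ _ _ he1 hO (by omega)
              omega
          · have := h.h2 _ _ _ he1 hO (by omega)
            omega
      · intro e j c he hje hej
        obtain ⟨he1, he2⟩ := hEnd e c he
        simp only [Function.comp]
        rcases lt_or_ge e b with hk | hk
        · rw [hf1 _ hk] at he1
          rw [hf1 j (by omega)]
          exact h.h3 e j c he1 hje hej
        · rw [hf2 _ hk] at he1
          rcases lt_or_ge j b with hk' | hk'
          · rw [hf1 j hk']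
            exact h.h3 _ j c he1 (by omega) (by omega)
          · rw [hf2 j hk']
            exact h.h3 _ _ c he1 (by omega) (by omega)
      · obtain ⟨H, hH⟩ := h.h4
        refine ⟨H + b, fun k c hk => ?_⟩
        simp only [Function.comp]
        rw [hf2 k (by omega)]
        exact hH _ c (by omega)
    -- slack facts
    have hsl : ∀ e d c, PEnd P (lab ∘ f) e c → d ≤ e → O' d c →
        ∃ d', d' ≤ f e ∧ O d' c ∧ f e + d ≤ d' + e ∧ (d < a → d' = d) ∧ (a ≤ d → a ≤ d') := by
      intro e d c he hd hO
      obtain ⟨he1, he2⟩ := hEnd e c he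
      rcases lt_or_ge e b with hk | hk
      · rcases hO with hO | ⟨rfl, hO⟩
        · rw [hf1 d (by omega)] at hO
          rw [hf1 e hk]
          exact ⟨d, hd, hO, by omega, by omega, by omega⟩
        · omega
      · rw [hf2 e hk]
        rcases hO with hO | ⟨rfl, hO⟩
        · rcases lt_or_ge d b with hk' | hk'
          · rw [hf1 d (by omega)] at hO
            exact ⟨d, by omega, hO, by omega, by omega, by omega⟩
          · rw [hf2 d (by omega)] at hO
            exact ⟨_, by omega, hO, by omega, by omega, by omega⟩
        · exact ⟨d, by omega, hO, by omega, by omega, by omega⟩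
    have hlt : (PDef P N (lab ∘ f) O').ncard < (PDef P N lab O).ncard := by
      have hfin := PDef_finite P B N lab O h
      have hmem : (c0, e0, t1) ∈ PDef P N lab O := ⟨ht1N, hE0, ht1s⟩
      have hle : (PDef P N (lab ∘ f) O').ncard ≤ (PDef P N lab O \ {(c0, e0, t1)}).ncard := by
        apply Set.ncard_le_ncard_of_injOn (fun x => (x.1, f x.2.1, x.2.2)) ?_ ?_ (hfin.subset Set.sdiff_subset)
        · rintro ⟨c, e, t⟩ ⟨ht, he, d, hd, hO, hdt⟩
          simp only at ht he hd hO hdt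
          obtain ⟨he1, he2⟩ := hEnd e c he
          obtain ⟨d', h1, h2, h3, h4, h5⟩ := hsl e d c he hd hO
          refine ⟨⟨ht, he1, d', h1, h2, ?_⟩, ?_⟩
          · simp only; omega
          · intro heq
            simp only [Set.mem_singleton_iff, Prod.mk.injEq] at heq
            obtain ⟨rfl, hfe, rfl⟩ := heq
            have hme := ht1m d' (by omega) h2
            have hh2 := h.h2 e0 d' c hE0 h2 (by omega)
            have hda : d < a := by
              by_contra hda
              have := h5 (by omega)
              omega
            have := h4 hda
            rcases lt_or_ge e b with hk | hk
            · rw [hf1 e hk] at hfe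
              omega
            · rw [hf2 e hk] at hfe
              omega
        · rintro ⟨c, e, t⟩ ⟨ht, he, _⟩ ⟨c', e', t'⟩ ⟨ht', he', _⟩ heq
          simp only [Prod.mk.injEq] at heq
          obtain ⟨rfl, hfe, rfl⟩ := heq
          obtain ⟨_, he2⟩ := hEnd e c he
          obtain ⟨_, he2'⟩ := hEnd e' c he'
          simp only [Prod.mk.injEq, true_and, and_true]
          simp only [hf] at hfe
          split_ifs at hfe <;> omega
      have := Set.ncard_sdiff_singleton_lt_of_mem hmem hfin
      omega
    obtain ⟨g, hg0, hg1, hg2, hg3, hg4⟩ := ih _ (lt_of_lt_of_le hlt hn) (lab ∘ f) O' hInv le_rfl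
    refine ⟨f ∘ g, ?_, ?_, ?_, ?_, ?_⟩
    · simp only [Function.comp, hg0]
      exact hf1 0 (by omega)
    · intro k
      have := hg1 k
      simp only [Function.comp] at this ⊢
      rw [this, hfs]
    · intro k c hO j hj
      exact hg2 k c (Or.inl hO) j hj
    · intro k c hO j hj
      refine hg3 k c ?_ j hj
      simp only [Function.comp] at hO
      rcases lt_trichotomy (g k + 1) b with hk | hk | hk
      · left
        rw [hf1 _ hk]; rwa [hf1 _ (by omega)] at hO
      · right
        refine ⟨hk, ?_⟩
        rw [hf1 _ (by omega), hk] at hO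
        exact hO
      · left
        rw [hf2 _ (by omega)]; rw [hf2 _ (by omega)] at hO
        convert hO using 1; omega
    · intro H
      obtain ⟨K, hK⟩ := hg4 (H + b)
      refine ⟨K, fun k hk => ?_⟩
      have := hK k hk
      simp only [Function.comp]
      rw [hf2 _ (by omega)]
      omega

theorem cut {Λ : Type} [Fintype Λ] (lab : ℕ → Λ) (H : ℕ) :
    ∃ f : ℕ → ℕ, lab (f 0) = lab 0 ∧ (∀ k, lab (f (k + 1)) = lab (f k + 1)) ∧
      (∀ k, Fintype.card Λ ≤ k → H < f k) := by
  classical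
  have hlast : ∀ i, ∃ j, i ≤ j ∧ lab j = lab i ∧ (∀ j', j < j' → j' ≤ H → lab j' ≠ lab i) := by
    intro i
    by_cases hi : i ≤ H
    · obtain ⟨j, hj⟩ := Finset.exists_max_image ((Finset.range (H + 1)).filter (fun j => lab j = lab i)) id
        ⟨i, by simp; omega⟩
      simp at hj
      refine ⟨j, hj.2 i (by omega) rfl, hj.1.2, fun j' h1 h2 h3 => ?_⟩
      have := hj.2 j' (by omega) h3
      omega
    · exact ⟨i, le_rfl, rfl, fun j' h1 h2 => by omega⟩
  choose l hl1 hl2 hl3 using hlast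
  let f : ℕ → ℕ := fun k => Nat.rec (l 0) (fun _ r => l (r + 1)) k
  have hf0 : f 0 = l 0 := rfl
  have hfs : ∀ k, f (k + 1) = l (f k + 1) := fun k => rfl
  have hmono : StrictMono f := strictMono_nat_of_lt_succ (fun k => by
    rw [hfs]; have := hl1 (f k + 1); omega)
  have hfl : ∀ k, ∀ j', f k < j' → j' ≤ H → lab j' ≠ lab (f k) := by
    intro k j' h1 h2
    cases k with
    | zero => rw [hf0, hl2]; exact hl3 0 j' h1 h2
    | succ k => rw [hfs, hl2]; exact hl3 _ j' h1 h2
  refine ⟨f, by rw [hf0, hl2], fun k => by rw [hfs, hl2], fun k hk => ?_⟩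
  by_contra hcon
  have hpig : ∃ x y : Fin (k + 1), x ≠ y ∧ lab (f x) = lab (f y) := by
    apply Fintype.exists_ne_map_eq_of_card_lt
    simp; omega
  obtain ⟨x, y, hxy, hl⟩ := hpig
  wlog hlt : x < y generalizing x y
  · exact this y x hxy.symm hl.symm (lt_of_le_of_ne (not_lt.mp hlt) hxy.symm)
  refine hfl x (f y) (hmono hlt) ?_ hl.symm
  have : f y ≤ f k := hmono.monotone (by have := y.2; omega)
  omega
/-- point cylinder -/
def cyl {S : Type} (n : ℕ) (u : ℕ → S) : Set (ℕ → S) := {π | ∀ k ≤ n, π k = u k}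

/-- shift -/
def shf {S : Type} (n : ℕ) (ρ : ℕ → S) : ℕ → S := fun k => ρ (n + k)

open Classical in
/-- `ν` is the path measure from `s` -/
structure MChain {S : Type} [MeasurableSpace S] (P : S → S → ℝ≥0∞) (s : S) (ν : Measure (ℕ → S)) : Prop where
  prob : IsProbabilityMeasure ν
  hc : ∀ n u, ν (cyl n u) = (if u 0 = s then 1 else 0) * ∏ k ∈ Finset.range n, P (u k) (u (k + 1))

/-- prefix map -/
def pre {S : Type} (n : ℕ) (ρ : ℕ → S) : Fin (n + 1) → S := fun k => ρ k

def ext0 {S : Type} (n : ℕ) (g : Fin (n + 1) → S) : ℕ → S := fun k => g ⟨min k n, by omega⟩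

theorem pre_fiber {S : Type} (n : ℕ) (g : Fin (n + 1) → S) : pre n ⁻¹' {g} = cyl n (ext0 n g) := by
  ext π
  simp only [Set.mem_preimage, Set.mem_singleton_iff, cyl, Set.mem_ofPred_eq, ext0]
  constructor
  · rintro rfl k hk
    simp [pre, hk]
  · intro h
    funext k
    have := h k (by omega)
    simp only [pre, this]
    congr 1
    ext
    simp
    omega

section
variable {S : Type} [Fintype S] [MeasurableSpace S] [DiscreteMeasurableSpace S]

theorem measurableSet_cyl (n : ℕ) (u : ℕ → S) : MeasurableSet (cyl n u) := by
  have : cyl n u = ⋂ k, ⋂ (_ : k ≤ n), (fun π : ℕ → S => π k) ⁻¹' {u k} := by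
    ext; simp [cyl]
  rw [this]
  exact MeasurableSet.iInter fun k => MeasurableSet.iInter fun _ =>
    (measurable_pi_apply k) (MeasurableSet.of_discrete)

theorem dep_sum (μ : Measure (ℕ → S)) (n : ℕ) (T : Set (Fin (n + 1) → S)) [DecidablePred (· ∈ T)] :
    μ (pre n ⁻¹' T) = ∑ g ∈ (Finset.univ.filter (· ∈ T)), μ (cyl n (ext0 n g)) := by
  have := sum_measure_preimage_singleton (μ := μ) (Finset.univ.filter (· ∈ T)) (f := pre n)
    (fun y _ => by rw [pre_fiber]; exact measurableSet_cyl _ _)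
  simp only [Finset.coe_filter, Finset.mem_univ, true_and, Set.ofPred_mem_eq] at this
  rw [← this]
  simp only [pre_fiber]

theorem compare (μ₁ μ₂ : Measure (ℕ → S)) [IsFiniteMeasure μ₁] [IsFiniteMeasure μ₂] (n₀ : ℕ)
    (h : ∀ n ≥ n₀, ∀ u, μ₁ (cyl n u) ≤ μ₂ (cyl n u)) : μ₁ ≤ μ₂ := by
  classical
  have h1 : ∀ C ∈ measurableCylinders (fun _ : ℕ => S), μ₁ C ≤ μ₂ C := by
    intro C hC
    rw [measurableCylinders_nat] at hC
    simp only [Set.mem_iUnion, Set.mem_singleton_iff] at hC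
    obtain ⟨a, T, _, rfl⟩ := hC
    have : cylinder (Finset.Iic a) T = pre (max a n₀) ⁻¹' {g | (fun k : Finset.Iic a => g ⟨k, by
        have := Finset.mem_Iic.1 k.2
        omega⟩) ∈ T} := rfl
    rw [this, dep_sum, dep_sum]
    exact Finset.sum_le_sum fun g _ => h _ (le_max_right _ _) _
  rw [Measure.le_iff]
  intro A hA
  apply ENNReal.le_of_forall_pos_le_add
  intro ε hε _
  obtain ⟨t, ht, hlt⟩ := exists_measure_symmDiff_lt_of_generateFrom_isSetRing (μ := μ₁ + μ₂)
    (C := measurableCylinders (fun _ : ℕ => S)) isSetRing_measurableCylinders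
    ⟨{Set.univ}, by simp, Set.singleton_subset_iff.2 (univ_mem_measurableCylinders _), by simp⟩
    generateFrom_measurableCylinders.symm hA (ε := ε / 2) (ENNReal.half_pos (by simpa using hε.ne'))
  have ha : μ₁ (symmDiff t A) < ε / 2 := lt_of_le_of_lt (by simp) hlt
  have hb : μ₂ (symmDiff t A) < ε / 2 := lt_of_le_of_lt (by simp) hlt
  calc μ₁ A ≤ μ₁ (t ∪ symmDiff t A) := measure_mono (fun x hx => by
          by_cases hxt : x ∈ t
          · exact Or.inl hxt
          · exact Or.inr (Or.inr ⟨hx, hxt⟩))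
    _ ≤ μ₁ t + μ₁ (symmDiff t A) := measure_union_le _ _
    _ ≤ μ₂ t + ε / 2 := add_le_add (h1 t ht) ha.le
    _ ≤ μ₂ (A ∪ symmDiff t A) + ε / 2 := by
          gcongr
          intro x hx
          by_cases hxt : x ∈ A
          · exact Or.inl hxt
          · exact Or.inr (Or.inl ⟨hx, hxt⟩)
    _ ≤ μ₂ A + μ₂ (symmDiff t A) + ε / 2 := by gcongr; exact measure_union_le _ _
    _ ≤ μ₂ A + ε / 2 + ε / 2 := by gcongr
    _ = μ₂ A + ε := by rw [add_assoc, ENNReal.add_halves]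

theorem compare_eq (μ₁ μ₂ : Measure (ℕ → S)) [IsFiniteMeasure μ₁] [IsFiniteMeasure μ₂]
    (h : ∀ n, ∀ u, μ₁ (cyl n u) = μ₂ (cyl n u)) : μ₁ = μ₂ :=
  le_antisymm (compare _ _ 0 fun n _ u => (h n u).le) (compare _ _ 0 fun n _ u => (h n u).ge)

theorem MChain.unique {P : S → S → ℝ≥0∞} {s : S} {μ₁ μ₂ : Measure (ℕ → S)} (h1 : MChain P s μ₁)
    (h2 : MChain P s μ₂) : μ₁ = μ₂ := by
  have := h1.prob
  have := h2.prob
  exact compare_eq _ _ fun n u => by rw [h1.hc, h2.hc]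

theorem measurable_shf (n : ℕ) : Measurable (shf n : (ℕ → S) → (ℕ → S)) :=
  measurable_pi_lambda _ fun k => measurable_pi_apply _

/-- path driven by random maps -/
def drive {S : Type} (s : S) (ω : ℕ → (S → S)) : ℕ → S
  | 0 => s
  | n + 1 => ω n (drive s ω n)

theorem exists_MChain (P : S → S → ℝ≥0∞) (hP : ∀ s, ∑ t, P s t = 1) (s : S) :
    ∃ ν, MChain P s ν := by
  classical
  let Q : S → Measure S := fun s => (PMF.ofFintype (P s) (hP s)).toMeasure
  have hQ : ∀ s t, Q s {t} = P s t := fun s t => by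
    simp only [Q]
    rw [PMF.toMeasure_apply_singleton _ _ (MeasurableSet.of_discrete)]
    rfl
  let R : Measure (S → S) := Measure.pi Q
  let W : Measure (ℕ → S → S) := Measure.infinitePi (fun _ : ℕ => R)
  have hdr : ∀ n, Measurable (fun ω : ℕ → S → S => drive s ω n) := by
    intro n
    induction n with
    | zero => exact measurable_const
    | succ n ih =>
      have : Measurable (fun p : (S → S) × S => p.1 p.2) := by
        apply measurable_from_prod_countable_left
        intro t
        exact measurable_pi_apply t
      exact this.comp ((measurable_pi_apply n).prodMk ih)
  have hm : Measurable (drive s) := measurable_pi_lambda _ hdr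
  refine ⟨W.map (drive s), ⟨Measure.isProbabilityMeasure_map hm.aemeasurable, ?_⟩⟩
  intro n u
  rw [Measure.map_apply hm (measurableSet_cyl n u)]
  by_cases h0 : u 0 = s
  · have : drive s ⁻¹' (cyl n u) = Set.pi (Finset.range n : Set ℕ) (fun k => {g : S → S | g (u k) = u (k + 1)}) := by
      ext ω
      simp only [Set.mem_preimage, cyl, Set.mem_ofPred_eq, Set.mem_pi, Finset.coe_range, Set.mem_Iio]
      constructor
      · intro h k hk
        have h1 := h k (by omega)
        have h2 := h (k + 1) (by omega)
        simp only [drive] at h2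
        rwa [h1] at h2
      · intro h k
        induction k with
        | zero => intro _; simp [drive, h0]
        | succ k ih =>
          intro hk
          simp only [drive]
          rw [ih (by omega)]
          exact h k (by omega)
    have hms : ∀ a b : S, MeasurableSet {g : S → S | g a = b} := fun a b =>
      (measurable_pi_apply (X := fun _ : S => S) a) (MeasurableSet.of_discrete (s := ({b} : Set S)))
    rw [this, Measure.infinitePi_pi (fun _ : ℕ => R) (fun k _ => hms _ _)]
    simp only [h0, if_true, one_mul]
    refine Finset.prod_congr rfl fun k _ => ?_
    have h2 : {g : S → S | g (u k) = u (k + 1)} = Set.pi Set.univ (Function.update (fun _ : S => (Set.univ : Set S)) (u k) {u (k + 1)}) := by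
      ext g
      simp only [Set.mem_ofPred_eq, Set.mem_pi, Set.mem_univ, true_imp_iff]
      constructor
      · intro h t
        by_cases ht : t = u k
        · subst ht; simp [h]
        · simp [ht]
      · intro h
        simpa using h (u k)
    rw [h2, Measure.pi_pi, Finset.prod_eq_single (u k)]
    · simp [hQ]
    · intro b _ hb
      simp [hb, Q]
    · simp
  · have : drive s ⁻¹' (cyl n u) = ∅ := by
      ext ω
      simp only [Set.mem_preimage, cyl, Set.mem_ofPred_eq, Set.mem_empty_iff_false, iff_false]
      intro h
      exact h0 (h 0 (by omega)).symm
    rw [this]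
    simp [h0]

theorem markov {P : S → S → ℝ≥0∞} (hP : ∀ s, ∑ t, P s t = 1) {ν : S → Measure (ℕ → S)} (hν : ∀ s, MChain P s (ν s))
    (s : S) (n : ℕ) (w : ℕ → S) (F : Set (ℕ → S)) (hF : MeasurableSet F) :
    ν s (cyl n w ∩ shf n ⁻¹' F) = ν s (cyl n w) * ν (w n) F := by
  have := fun s => (hν s).prob
  have hfin : IsFiniteMeasure (ν s (cyl n w) • ν (w n)) := by
    refine ⟨?_⟩
    simp
  have key : ((ν s).restrict (cyl n w)).map (shf n) = ν s (cyl n w) • ν (w n) := by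
    apply compare_eq
    intro k u
    rw [Measure.map_apply (measurable_shf n) (measurableSet_cyl k u),
      Measure.restrict_apply (measurable_shf n (measurableSet_cyl k u))]
    simp only [Measure.smul_apply, smul_eq_mul]
    by_cases hu : u 0 = w n
    · have : shf n ⁻¹' cyl k u ∩ cyl n w = cyl (n + k) (fun j => if j ≤ n then w j else u (j - n)) := by
        ext π
        simp only [cyl, shf, Set.mem_inter_iff, Set.mem_preimage, Set.mem_ofPred_eq]
        constructor
        · rintro ⟨h1, h2⟩ j hj
          split_ifs with hjn
          · exact h2 j hjn
          · have := h1 (j - n) (by omega)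
            rwa [show n + (j - n) = j by omega] at this
        · intro h
          constructor
          · intro j hj
            rw [h (n + j) (by omega)]
            rcases Nat.eq_zero_or_pos j with rfl | hj0
            · simp [hu]
            · rw [if_neg (by omega)]; congr 1; omega
          · intro j hj
            rw [h j (by omega), if_pos hj]
      rw [this, (hν s).hc, (hν s).hc, (hν (w n)).hc, Finset.prod_range_add]
      simp only [hu, if_true, one_mul, Nat.zero_le]
      rw [mul_assoc]
      congr 1
      congr 1
      · refine Finset.prod_congr rfl fun j hj => ?_
        have := Finset.mem_range.1 hj
        rw [if_pos (by omega), if_pos (by omega)]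
      · refine Finset.prod_congr rfl fun j hj => ?_
        rw [if_neg (by omega : ¬ n + j + 1 ≤ n)]
        rw [show n + j + 1 - n = j + 1 by omega]
        congr 1
        rcases Nat.eq_zero_or_pos j with rfl | hj0
        · simp [hu]
        · rw [if_neg (by omega)]; congr 1; omega
    · have : shf n ⁻¹' cyl k u ∩ cyl n w = ∅ := by
        ext π
        simp only [cyl, shf, Set.mem_inter_iff, Set.mem_preimage, Set.mem_ofPred_eq, Set.mem_empty_iff_false, iff_false]
        rintro ⟨h1, h2⟩
        apply hu
        rw [← h1 0 (by omega), ← h2 n le_rfl]; rfl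
      rw [this, (hν (w n)).hc]
      simp [hu]
  have h2 : (((ν s).restrict (cyl n w)).map (shf n)) F = (ν s (cyl n w) • ν (w n)) F := by rw [key]
  rw [Measure.map_apply (measurable_shf n) hF, Measure.restrict_apply (measurable_shf n hF)] at h2
  rw [Set.inter_comm, h2]
  simp

end
section
variable {S : Type} [Fintype S] [MeasurableSpace S] [DiscreteMeasurableSpace S]

theorem measurableSet_allshf (E : Set (ℕ → S)) (hE : MeasurableSet E) :
    MeasurableSet {σ : ℕ → S | ∀ j, shf j σ ∈ E} := by
  have : {σ : ℕ → S | ∀ j, shf j σ ∈ E} = ⋂ j, shf j ⁻¹' E := by ext; simp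
  rw [this]
  exact MeasurableSet.iInter fun j => measurable_shf j hE

theorem levy {P : S → S → ℝ≥0∞} (hP : ∀ s, ∑ t, P s t = 1) {ν : S → Measure (ℕ → S)}
    (hν : ∀ s, MChain P s (ν s)) (s : S) (E : Set (ℕ → S)) (hE : MeasurableSet E) :
    ∀ᵐ ρ ∂ν s, ∀ i, (∀ j, i ≤ j → shf j ρ ∈ E) → ∃ k, i ≤ k ∧ ∀ᵐ σ ∂ν (ρ k), ∀ j, shf j σ ∈ E := by
  classical
  have := fun s => (hν s).prob
  set F : Set (ℕ → S) := {σ | ∀ j, shf j σ ∈ E} with hF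
  have hFm : MeasurableSet F := measurableSet_allshf E hE
  set A : Finset S := Finset.univ.filter (fun t => ν t Fᶜ ≠ 0) with hA
  set c : ℝ≥0∞ := A.sup (fun t => ν t F) with hc
  have hc1 : c < 1 := by
    rw [hc, Finset.sup_lt_iff (by simp)]
    intro t ht
    refine lt_of_le_of_ne prob_le_one ?_
    intro h
    rw [← prob_compl_eq_zero_iff hFm] at h
    simp [hA, h] at ht
  rw [ae_all_iff]
  intro i
  set E' : Set (ℕ → S) := {ρ | shf i ρ ∈ F ∧ ∀ k, i ≤ k → ρ k ∈ A} with hE'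
  have hE'm : MeasurableSet E' := by
    have : E' = shf i ⁻¹' F ∩ ⋂ k, ⋂ (_ : i ≤ k), (fun ρ : ℕ → S => ρ k) ⁻¹' (A : Set S) := by
      ext; simp [hE']
    rw [this]
    exact (measurable_shf i hFm).inter (MeasurableSet.iInter fun k => MeasurableSet.iInter fun _ =>
      (measurable_pi_apply k) (MeasurableSet.of_discrete))
  have hfin : IsFiniteMeasure (c • ν s) := ⟨by simpa using hc1.trans ENNReal.one_lt_top⟩
  have hle : (ν s).restrict E' ≤ c • ν s := by
    apply compare _ _ i
    intro n hn u
    rw [Measure.restrict_apply (measurableSet_cyl n u)]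
    simp only [Measure.smul_apply, smul_eq_mul]
    by_cases hu : u n ∈ A
    · calc ν s (cyl n u ∩ E') ≤ ν s (cyl n u ∩ shf n ⁻¹' F) := by
            apply measure_mono
            rintro ρ ⟨h1, h2, _⟩
            refine ⟨h1, ?_⟩
            intro j
            have := h2 (n - i + j)
            have e : shf (n - i + j) (shf i ρ) = shf j (shf n ρ) := by
              funext k; simp only [shf]; congr 1; omega
            rwa [e] at this
        _ = ν s (cyl n u) * ν (u n) F := markov hP hν s n u F hFm
        _ ≤ ν s (cyl n u) * c := by
            gcongr
            exact Finset.le_sup (f := fun t => ν t F) hu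
        _ = _ := mul_comm _ _
    · have : cyl n u ∩ E' = ∅ := by
        ext ρ
        simp only [Set.mem_inter_iff, Set.mem_empty_iff_false, iff_false]
        rintro ⟨h1, _, h2⟩
        apply hu
        rw [← h1 n le_rfl]
        exact h2 n hn
      rw [this]; simp
  have h0 : ν s E' = 0 := by
    have h1 := hle E'
    rw [Measure.restrict_apply_self] at h1
    simp only [Measure.smul_apply, smul_eq_mul] at h1
    by_contra hne
    have h2 : c * ν s E' < 1 * ν s E' :=
      ENNReal.mul_lt_mul_left hne (measure_ne_top _ _) hc1
    rw [one_mul] at h2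
    exact absurd h1 (not_le.2 h2)
  have h00 : ∀ᵐ ρ ∂ν s, ρ ∉ E' := measure_eq_zero_iff_ae_notMem.1 h0
  filter_upwards [h00] with ρ hρ hj
  by_contra hcon
  rw [not_exists] at hcon
  apply hρ
  refine ⟨?_, ?_⟩
  · intro j
    have := hj (i + j) (by omega)
    have e : shf j (shf i ρ) = shf (i + j) ρ := by
      funext k; simp only [shf]; congr 1; omega
    rwa [e]
  · intro k hk
    simp only [hA, Finset.mem_filter, Finset.mem_univ, true_and]
    intro h
    apply hcon k
    refine ⟨hk, ?_⟩
    rw [ae_iff]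
    exact h

theorem good_ae {P : S → S → ℝ≥0∞} (hP : ∀ s, ∑ t, P s t = 1) {ν : S → Measure (ℕ → S)}
    (hν : ∀ s, MChain P s (ν s)) (s : S) (E : Set (ℕ → S)) (hE : MeasurableSet E) :
    ∀ᵐ ρ ∂ν s, ∀ n, (∀ᵐ σ ∂ν (ρ n), ∀ j, shf j σ ∈ E) → ∀ j, n ≤ j → shf j ρ ∈ E := by
  classical
  set F : Set (ℕ → S) := {σ | ∀ j, shf j σ ∈ E} with hF
  have hFm : MeasurableSet F := measurableSet_allshf E hE
  rw [ae_all_iff]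
  intro n
  have h0 : ∀ᵐ ρ ∂ν s, ∀ g : Fin (n + 1) → S, (∀ᵐ σ ∂ν (ext0 n g n), ∀ j, shf j σ ∈ E) →
      ¬ (ρ ∈ cyl n (ext0 n g) ∩ shf n ⁻¹' Fᶜ) := by
    rw [ae_all_iff]
    intro g
    by_cases h : ∀ᵐ σ ∂ν (ext0 n g n), ∀ j, shf j σ ∈ E
    · have : ν s (cyl n (ext0 n g) ∩ shf n ⁻¹' Fᶜ) = 0 := by
        rw [markov hP hν s n _ _ hFm.compl]
        rw [ae_iff] at h
        have h' : ν (ext0 n g n) Fᶜ = 0 := h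
        rw [h', mul_zero]
      filter_upwards [measure_eq_zero_iff_ae_notMem.1 this] with ρ hρ _ using hρ
    · exact Filter.Eventually.of_forall fun ρ h' => absurd h' h
  filter_upwards [h0] with ρ hρ has j hj
  have hmem : ρ ∈ cyl n (ext0 n (pre n ρ)) := by
    rw [← pre_fiber]; rfl
  have h1 := hρ (pre n ρ) (by rw [← hmem n le_rfl]; exact has)
  have h2 : shf n ρ ∈ F := by
    by_contra h3
    exact h1 ⟨hmem, h3⟩
  have := h2 (j - n)
  have e : shf (j - n) (shf n ρ) = shf j ρ := by
    funext k; simp only [shf]; congr 1; omega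
  rwa [e] at this

theorem trans_ae {P : S → S → ℝ≥0∞} {ν : S → Measure (ℕ → S)}
    (hν : ∀ s, MChain P s (ν s)) (s : S) :
    ∀ᵐ ρ ∂ν s, ρ 0 = s ∧ ∀ k, P (ρ k) (ρ (k + 1)) ≠ 0 := by
  classical
  have h0 : ∀ᵐ ρ ∂ν s, ∀ n, ∀ g : Fin (n + 1) → S, ν s (cyl n (ext0 n g)) = 0 →
      ¬ (ρ ∈ cyl n (ext0 n g)) := by
    rw [ae_all_iff]
    intro n
    rw [ae_all_iff]
    intro g
    by_cases h : ν s (cyl n (ext0 n g)) = 0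
    · filter_upwards [measure_eq_zero_iff_ae_notMem.1 h] with ρ hρ _ using hρ
    · exact Filter.Eventually.of_forall fun ρ h' => absurd h' h
  filter_upwards [h0] with ρ hρ
  have key : ∀ n, ν s (cyl n ρ) ≠ 0 := by
    intro n h
    have hmem : ρ ∈ cyl n (ext0 n (pre n ρ)) := by
      rw [← pre_fiber]; rfl
    apply hρ n (pre n ρ) ?_ hmem
    have : cyl n (ext0 n (pre n ρ)) = cyl n ρ := by
      ext π
      constructor
      · intro h k hk; rw [h k hk, hmem k hk]
      · intro h k hk; rw [h k hk, hmem k hk]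
    rw [this, h]
  constructor
  · have := key 0
    rw [(hν s).hc] at this
    by_contra h
    simp [h] at this
  · intro k h
    apply key (k + 1)
    rw [(hν s).hc, Finset.prod_range_succ, h]
    simp

end

/-- Path formulas -/
inductive G (S Var : Type) : Type
  | lit : (S → Prop) → G S Var
  | and : G S Var → G S Var → G S Var
  | or : G S Var → G S Var → G S Var
  | next : G S Var → G S Var
  | U : G S Var → G S Var → G S Var
  | R : G S Var → G S Var → G S Var
  | evB : Var → G S Var → G S Var
  | alB : Var → G S Var → G S Var

def GSat {S Var : Type} (ρ : ℕ → S) (v : Var → ℕ) : G S Var → ℕ → Prop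
  | .lit p, i => p (ρ i)
  | .and a b, i => GSat ρ v a i ∧ GSat ρ v b i
  | .or a b, i => GSat ρ v a i ∨ GSat ρ v b i
  | .next a, i => GSat ρ v a (i + 1)
  | .U a b, i => ∃ j, i ≤ j ∧ GSat ρ v b j ∧ ∀ k, i ≤ k → k < j → GSat ρ v a k
  | .R a b, i => ∀ j, i ≤ j → (GSat ρ v b j ∨ ∃ k, i ≤ k ∧ k < j ∧ GSat ρ v a k)
  | .evB x a, i => ∃ j, j ≤ v x ∧ GSat ρ v a (i + j)
  | .alB x a, i => ∀ j, j ≤ v x → GSat ρ v a (i + j)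

theorem GSat_shf {S Var : Type} (ρ : ℕ → S) (v : Var → ℕ) (χ : G S Var) (n : ℕ) :
    ∀ i, GSat (shf n ρ) v χ i ↔ GSat ρ v χ (n + i) := by
  induction χ with
  | lit p => intro i; rfl
  | and a b iha ihb => intro i; simp only [GSat, iha, ihb]
  | or a b iha ihb => intro i; simp only [GSat, iha, ihb]
  | next a iha => intro i; simp only [GSat, iha]; rfl
  | U a b iha ihb =>
    intro i; simp only [GSat, iha, ihb]
    constructor
    · rintro ⟨j, h1, h2, h3⟩
      refine ⟨n + j, by omega, h2, fun k hk1 hk2 => ?_⟩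
      have := h3 (k - n) (by omega) (by omega)
      rwa [show n + (k - n) = k by omega] at this
    · rintro ⟨j, h1, h2, h3⟩
      refine ⟨j - n, by omega, by rwa [show n + (j - n) = j by omega], fun k hk1 hk2 => ?_⟩
      exact h3 (n + k) (by omega) (by omega)
  | R a b iha ihb =>
    intro i; simp only [GSat, iha, ihb]
    constructor
    · intro h j hj
      have := h (j - n) (by omega)
      rw [show n + (j - n) = j by omega] at this
      rcases this with h | ⟨k, h1, h2, h3⟩
      · exact Or.inl h
      · exact Or.inr ⟨n + k, by omega, by omega, h3⟩
    · intro h j hj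
      rcases h (n + j) (by omega) with h | ⟨k, h1, h2, h3⟩
      · exact Or.inl h
      · exact Or.inr ⟨k - n, by omega, by omega, by rwa [show n + (k - n) = k by omega]⟩
  | evB x a iha => intro i; simp only [GSat, iha, add_assoc]
  | alB x a iha => intro i; simp only [GSat, iha, add_assoc]

theorem GSat_meas {S Var : Type} [MeasurableSpace S] [DiscreteMeasurableSpace S] (v : Var → ℕ)
    (χ : G S Var) : ∀ i, MeasurableSet {ρ : ℕ → S | GSat ρ v χ i} := by
  induction χ with
  | lit p => intro i; exact (measurable_pi_apply i) (MeasurableSet.of_discrete (s := {s : S | p s}))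
  | and a b iha ihb => intro i; exact (iha i).inter (ihb i)
  | or a b iha ihb => intro i; exact (iha i).union (ihb i)
  | next a iha => intro i; exact iha (i + 1)
  | U a b iha ihb =>
    intro i
    have : {ρ : ℕ → S | GSat ρ v (G.U a b) i} = ⋃ j, ⋃ (_ : i ≤ j), ({ρ | GSat ρ v b j} ∩
        ⋂ k, ⋂ (_ : i ≤ k), ⋂ (_ : k < j), {ρ | GSat ρ v a k}) := by
      ext
      simp [GSat]
      exact exists_congr fun j => by tauto
    rw [this]
    exact MeasurableSet.iUnion fun j => MeasurableSet.iUnion fun _ => (ihb j).inter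
      (MeasurableSet.iInter fun k => MeasurableSet.iInter fun _ => MeasurableSet.iInter fun _ => iha k)
  | R a b iha ihb =>
    intro i
    have : {ρ : ℕ → S | GSat ρ v (G.R a b) i} = ⋂ j, ⋂ (_ : i ≤ j), ({ρ | GSat ρ v b j} ∪
        ⋃ k, ⋃ (_ : i ≤ k), ⋃ (_ : k < j), {ρ | GSat ρ v a k}) := by
      ext
      simp [GSat]
      exact forall_congr' fun j => imp_congr_right fun _ => or_congr_right (exists_congr fun k => by tauto)
    rw [this]
    exact MeasurableSet.iInter fun j => MeasurableSet.iInter fun _ => (ihb j).union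
      (MeasurableSet.iUnion fun k => MeasurableSet.iUnion fun _ => MeasurableSet.iUnion fun _ => iha k)
  | evB x a iha =>
    intro i
    have : {ρ : ℕ → S | GSat ρ v (G.evB x a) i} = ⋃ j, ⋃ (_ : j ≤ v x), {ρ | GSat ρ v a (i + j)} := by
      ext; simp [GSat]
    rw [this]
    exact MeasurableSet.iUnion fun j => MeasurableSet.iUnion fun _ => iha _
  | alB x a iha =>
    intro i
    have : {ρ : ℕ → S | GSat ρ v (G.alB x a) i} = ⋂ j, ⋂ (_ : j ≤ v x), {ρ | GSat ρ v a (i + j)} := by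
      ext; simp [GSat]
    rw [this]
    exact MeasurableSet.iInter fun j => MeasurableSet.iInter fun _ => iha _

/-- almost surely always -/
def AS {S Var : Type} [MeasurableSpace S] (ν : S → Measure (ℕ → S)) (v : Var → ℕ) (χ : G S Var) (t : S) : Prop :=
  ∀ᵐ σ ∂ν t, ∀ j, GSat σ v χ j

def Nice {S Var : Type} [MeasurableSpace S] (ν : S → Measure (ℕ → S)) (v : Var → ℕ) (u : ℕ → S) : G S Var → Prop
  | .lit _ => True
  | .and a b => Nice ν v u a ∧ Nice ν v u b
  | .or a b => Nice ν v u a ∧ Nice ν v u b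
  | .next a => Nice ν v u a
  | .U a b => Nice ν v u a ∧ Nice ν v u b
  | .R a b => Nice ν v u a ∧ Nice ν v u b ∧
      ∀ i, (∀ j, i ≤ j → GSat u v b j) → ∃ k, i ≤ k ∧ AS ν v b (u k)
  | .evB _ a => Nice ν v u a
  | .alB _ a => Nice ν v u a

def Good {S Var : Type} [MeasurableSpace S] (ν : S → Measure (ℕ → S)) (v : Var → ℕ) (u : ℕ → S) : G S Var → Prop
  | .lit _ => True
  | .and a b => Good ν v u a ∧ Good ν v u b
  | .or a b => Good ν v u a ∧ Good ν v u b
  | .next a => Good ν v u a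
  | .U a b => Good ν v u a ∧ Good ν v u b
  | .R a b => Good ν v u a ∧ Good ν v u b ∧
      ∀ n, AS ν v b (u n) → ∀ j, n ≤ j → GSat u v b j
  | .evB _ a => Good ν v u a
  | .alB _ a => Good ν v u a

def TrH {S Var : Type} [MeasurableSpace S] (ν : S → Measure (ℕ → S)) (v₁ v₂ : Var → ℕ) : G S Var → Prop
  | .lit _ => True
  | .and a b => TrH ν v₁ v₂ a ∧ TrH ν v₁ v₂ b
  | .or a b => TrH ν v₁ v₂ a ∧ TrH ν v₁ v₂ b
  | .next a => TrH ν v₁ v₂ a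
  | .U a b => TrH ν v₁ v₂ a ∧ TrH ν v₁ v₂ b
  | .R a b => TrH ν v₁ v₂ a ∧ TrH ν v₁ v₂ b ∧ ∀ t, AS ν v₁ b t → AS ν v₂ b t
  | .evB _ a => TrH ν v₁ v₂ a
  | .alB _ a => TrH ν v₁ v₂ a

section
variable {S Var : Type} [Fintype S] [MeasurableSpace S] [DiscreteMeasurableSpace S]

theorem shf_iff (v : Var → ℕ) (b : G S Var) (ρ : ℕ → S) (j : ℕ) :
    shf j ρ ∈ {ρ : ℕ → S | GSat ρ v b 0} ↔ GSat ρ v b j := by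
  have := GSat_shf ρ v b j 0
  simpa using this

theorem Nice_ae {P : S → S → ℝ≥0∞} (hP : ∀ s, ∑ t, P s t = 1) {ν : S → Measure (ℕ → S)}
    (hν : ∀ s, MChain P s (ν s)) (s : S) (v : Var → ℕ) (χ : G S Var) :
    ∀ᵐ ρ ∂ν s, Nice ν v ρ χ := by
  induction χ with
  | lit p => exact Filter.Eventually.of_forall fun _ => trivial
  | and a b iha ihb => filter_upwards [iha, ihb] with ρ h1 h2 using ⟨h1, h2⟩
  | or a b iha ihb => filter_upwards [iha, ihb] with ρ h1 h2 using ⟨h1, h2⟩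
  | next a iha => exact iha
  | U a b iha ihb => filter_upwards [iha, ihb] with ρ h1 h2 using ⟨h1, h2⟩
  | R a b iha ihb =>
    filter_upwards [iha, ihb, levy hP hν s _ (GSat_meas v b 0)] with ρ h1 h2 h3
    refine ⟨h1, h2, fun i hi => ?_⟩
    obtain ⟨k, hk, h⟩ := h3 i (fun j hj => (shf_iff v b ρ j).2 (hi j hj))
    exact ⟨k, hk, h.mono fun σ hσ j => (shf_iff v b σ j).1 (hσ j)⟩
  | evB x a iha => exact iha
  | alB x a iha => exact iha

theorem Good_ae {P : S → S → ℝ≥0∞} (hP : ∀ s, ∑ t, P s t = 1) {ν : S → Measure (ℕ → S)}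
    (hν : ∀ s, MChain P s (ν s)) (s : S) (v : Var → ℕ) (χ : G S Var) :
    ∀ᵐ ρ ∂ν s, Good ν v ρ χ := by
  induction χ with
  | lit p => exact Filter.Eventually.of_forall fun _ => trivial
  | and a b iha ihb => filter_upwards [iha, ihb] with ρ h1 h2 using ⟨h1, h2⟩
  | or a b iha ihb => filter_upwards [iha, ihb] with ρ h1 h2 using ⟨h1, h2⟩
  | next a iha => exact iha
  | U a b iha ihb => filter_upwards [iha, ihb] with ρ h1 h2 using ⟨h1, h2⟩
  | R a b iha ihb =>
    filter_upwards [iha, ihb, good_ae hP hν s _ (GSat_meas v b 0)] with ρ h1 h2 h3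
    refine ⟨h1, h2, fun n hn j hj => (shf_iff v b ρ j).1 (h3 n ?_ j hj)⟩
    have hn' : ∀ᵐ σ ∂ν (ρ n), ∀ j, GSat σ v b j := hn
    exact hn'.mono fun σ hσ j => (shf_iff v b σ j).2 (hσ j)
  | evB x a iha => exact iha
  | alB x a iha => exact iha

/-- `AS` from probability one at all states reachable -/
theorem AS_transfer {P : S → S → ℝ≥0∞} (hP : ∀ s, ∑ t, P s t = 1) {ν : S → Measure (ℕ → S)}
    (hν : ∀ s, MChain P s (ν s)) (v₁ v₂ : Var → ℕ) (χ : G S Var)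
    (h : ∀ s, (∀ᵐ ρ ∂ν s, GSat ρ v₁ χ 0) → ∀ᵐ ρ ∂ν s, GSat ρ v₂ χ 0) (t : S)
    (hA : AS ν v₁ χ t) : AS ν v₂ χ t := by
  classical
  unfold AS at *
  rw [ae_all_iff] at *
  intro n
  set E₁ := {ρ : ℕ → S | GSat ρ v₁ χ 0} with hE₁
  set E₂ := {ρ : ℕ → S | GSat ρ v₂ χ 0} with hE₂
  have h1m : MeasurableSet E₁ := GSat_meas v₁ χ 0
  have h2m : MeasurableSet E₂ := GSat_meas v₂ χ 0
  have key : ∀ᵐ ρ ∂ν t, ∀ g : Fin (n + 1) → S, ¬ (ρ ∈ cyl n (ext0 n g) ∩ shf n ⁻¹' E₂ᶜ) := by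
    rw [ae_all_iff]
    intro g
    apply measure_eq_zero_iff_ae_notMem.1
    rw [markov hP hν t n _ _ h2m.compl]
    by_cases h0 : ν t (cyl n (ext0 n g)) = 0
    · rw [h0, zero_mul]
    · have h3 : ν t (cyl n (ext0 n g) ∩ shf n ⁻¹' E₁ᶜ) = 0 := by
        refine measure_mono_null ?_ (hA n)
        rintro ρ ⟨_, hρ⟩ hc
        exact hρ ((shf_iff v₁ χ ρ n).2 hc)
      rw [markov hP hν t n _ _ h1m.compl] at h3
      have h4 : ν (ext0 n g n) E₁ᶜ = 0 := (mul_eq_zero.1 h3).resolve_left h0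
      have h5 : ν (ext0 n g n) E₂ᶜ = 0 := h _ h4
      rw [h5, mul_zero]
  filter_upwards [key] with ρ hρ
  have hmem : ρ ∈ cyl n (ext0 n (pre n ρ)) := by
    rw [← pre_fiber]; rfl
  by_contra hcon
  exact hρ _ ⟨hmem, fun hc => hcon ((shf_iff v₂ χ ρ n).1 hc)⟩

end
/-- finite-horizon certificate satisfaction -/
def XS {S Var : Type} (A : G S Var → S → Prop) (v : Var → ℕ) (u : ℕ → S) (H : ℕ) : G S Var → ℕ → Prop
  | .lit p, i => i ≤ H ∧ p (u i)
  | .and a b, i => XS A v u H a i ∧ XS A v u H b i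
  | .or a b, i => XS A v u H a i ∨ XS A v u H b i
  | .next a, i => XS A v u H a (i + 1)
  | .U a b, i => ∃ j, i ≤ j ∧ XS A v u H b j ∧ ∀ k, i ≤ k → k < j → XS A v u H a k
  | .R a b, i => ∃ j, i ≤ j ∧ j ≤ H ∧ (A b (u j) ∨ (XS A v u H a j ∧ XS A v u H b j)) ∧
      ∀ k, i ≤ k → k < j → XS A v u H b k
  | .evB _ a, i => ∃ j, i ≤ j ∧ XS A v u H a j
  | .alB x a, i => ∀ j, j ≤ v x → XS A v u H a (i + j)

theorem XS_le {S Var : Type} (A : G S Var → S → Prop) (v : Var → ℕ) (u : ℕ → S) (H : ℕ) (χ : G S Var) :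
    ∀ i, XS A v u H χ i → i ≤ H := by
  induction χ with
  | lit p => intro i h; exact h.1
  | and a b iha ihb => intro i h; exact iha i h.1
  | or a b iha ihb => intro i h; exact h.elim (iha i) (ihb i)
  | next a iha => intro i h; have := iha _ h; omega
  | U a b iha ihb =>
    rintro i ⟨j, h1, h2, _⟩
    have := ihb _ h2; omega
  | R a b iha ihb =>
    rintro i ⟨j, h1, h2, _⟩
    omega
  | evB x a iha =>
    rintro i ⟨j, h1, h2⟩
    have := iha _ h2; omega
  | alB x a iha =>
    intro i h
    exact iha i (h 0 (Nat.zero_le _))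

theorem XS_complete {S Var : Type} [MeasurableSpace S] (ν : S → Measure (ℕ → S)) (v : Var → ℕ) (u : ℕ → S)
    (χ : G S Var) (hn : Nice ν v u χ) :
    ∀ i, GSat u v χ i → ∀ᶠ H in Filter.atTop, XS (AS ν v) v u H χ i := by
  induction χ with
  | lit p =>
    intro i h
    filter_upwards [Filter.eventually_ge_atTop i] with H hH using ⟨hH, h⟩
  | and a b iha ihb =>
    intro i h
    filter_upwards [iha hn.1 i h.1, ihb hn.2 i h.2] with H h1 h2 using ⟨h1, h2⟩
  | or a b iha ihb =>
    intro i h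
    rcases h with h | h
    · filter_upwards [iha hn.1 i h] with H h1 using Or.inl h1
    · filter_upwards [ihb hn.2 i h] with H h1 using Or.inr h1
  | next a iha => intro i h; exact iha hn (i + 1) h
  | U a b iha ihb =>
    rintro i ⟨j, h1, h2, h3⟩
    have h4 : ∀ᶠ H in Filter.atTop, ∀ k ∈ Set.Ico i j, XS (AS ν v) v u H a k :=
      (Set.finite_Ico i j).eventually_all.2 fun k hk => iha hn.1 k (h3 k hk.1 hk.2)
    filter_upwards [ihb hn.2 j h2, h4] with H h5 h6
    exact ⟨j, h1, h5, fun k hk1 hk2 => h6 k ⟨hk1, hk2⟩⟩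
  | R a b iha ihb =>
    intro i h
    by_cases hex : ∃ k, i ≤ k ∧ GSat u v a k
    · classical
      obtain ⟨hk1, hk2⟩ := Nat.find_spec hex
      have hmin : ∀ j, i ≤ j → j ≤ Nat.find hex → GSat u v b j := by
        intro j hj1 hj2
        rcases h j hj1 with h | ⟨k, h1, h2, h3⟩
        · exact h
        · exact absurd ⟨h1, h3⟩ (Nat.find_min hex (by omega))
      generalize Nat.find hex = j at *
      have h4 : ∀ᶠ H in Filter.atTop, ∀ k ∈ Set.Ico i j, XS (AS ν v) v u H b k :=
        (Set.finite_Ico i j).eventually_all.2 fun k hk => ihb hn.2.1 k (hmin k hk.1 hk.2.le)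
      filter_upwards [ihb hn.2.1 j (hmin j hk1 le_rfl), iha hn.1 j hk2, h4, Filter.eventually_ge_atTop j]
        with H h5 h6 h7 h8
      exact ⟨j, hk1, h8, Or.inr ⟨h6, h5⟩, fun k hk1 hk2 => h7 k ⟨hk1, hk2⟩⟩
    · have hall : ∀ j, i ≤ j → GSat u v b j := by
        intro j hj
        rcases h j hj with h | ⟨k, h1, h2, h3⟩
        · exact h
        · exact absurd ⟨k, h1, h3⟩ hex
      obtain ⟨j, hj1, hj2⟩ := hn.2.2 i hall
      have h4 : ∀ᶠ H in Filter.atTop, ∀ k ∈ Set.Ico i j, XS (AS ν v) v u H b k :=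
        (Set.finite_Ico i j).eventually_all.2 fun k hk => ihb hn.2.1 k (hall k hk.1)
      filter_upwards [h4, Filter.eventually_ge_atTop j] with H h7 h8
      exact ⟨j, hj1, h8, Or.inl hj2, fun k hk1 hk2 => h7 k ⟨hk1, hk2⟩⟩
  | evB x a iha =>
    rintro i ⟨j, h1, h2⟩
    filter_upwards [iha hn (i + j) h2] with H h3 using ⟨i + j, by omega, h3⟩
  | alB x a iha =>
    intro i h
    have h4 : ∀ᶠ H in Filter.atTop, ∀ j ∈ Set.Iic (v x), XS (AS ν v) v u H a (i + j) :=
      (Set.finite_Iic (v x)).eventually_all.2 fun k hk => iha hn (i + k) (h k hk)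
    filter_upwards [h4] with H h5
    exact fun j hj => h5 j hj

def isAl {S Var : Type} : G S Var → Prop
  | .alB _ _ => True
  | _ => False

open Classical in
noncomputable def subs {S Var : Type} : G S Var → Finset (G S Var)
  | .lit _ => ∅
  | .and a b => insert (.and a b) (subs a ∪ subs b)
  | .or a b => insert (.or a b) (subs a ∪ subs b)
  | .next a => insert (.next a) (subs a)
  | .U a b => insert (.U a b) (subs a ∪ subs b)
  | .R a b => insert (.R a b) (subs a ∪ subs b)
  | .evB x a => insert (.evB x a) (subs a)
  | .alB x a => insert (.alB x a) (subs a)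

def gsize {S Var : Type} : G S Var → ℕ
  | .lit _ => 0
  | .and a b => gsize a + gsize b + 1
  | .or a b => gsize a + gsize b + 1
  | .next a => gsize a + 1
  | .U a b => gsize a + gsize b + 1
  | .R a b => gsize a + gsize b + 1
  | .evB _ a => gsize a + 1
  | .alB _ a => gsize a + 1

theorem subs_card {S Var : Type} (χ : G S Var) : (subs χ).card ≤ gsize χ := by
  classical
  have key2 : ∀ (c : G S Var) (a b : Finset (G S Var)) (m n : ℕ), a.card ≤ m → b.card ≤ n →
      (insert c (a ∪ b)).card ≤ m + n + 1 := by
    intro c a b m n h1 h2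
    have := Finset.card_insert_le c (a ∪ b)
    have := Finset.card_union_le a b
    omega
  have key1 : ∀ (c : G S Var) (a : Finset (G S Var)) (m : ℕ), a.card ≤ m →
      (insert c a).card ≤ m + 1 := by
    intro c a m h1
    have := Finset.card_insert_le c a
    omega
  induction χ with
  | lit p => simp [subs]
  | and a b iha ihb => simp only [subs, gsize]; convert key2 _ _ _ _ _ iha ihb
  | or a b iha ihb => simp only [subs, gsize]; convert key2 _ _ _ _ _ iha ihb
  | next a iha => simp only [subs, gsize]; convert key1 _ _ _ iha
  | U a b iha ihb => simp only [subs, gsize]; convert key2 _ _ _ _ _ iha ihb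
  | R a b iha ihb => simp only [subs, gsize]; convert key2 _ _ _ _ _ iha ihb
  | evB x a iha => simp only [subs, gsize]; convert key1 _ _ _ iha
  | alB x a iha => simp only [subs, gsize]; convert key1 _ _ _ iha

/-- conditions on the reshuffled run -/
structure FCond {S Var : Type} (A : G S Var → S → Prop) (v₁ v₂ : Var → ℕ) (u : ℕ → S) (H : ℕ)
    (Sg : Finset (G S Var)) (f : ℕ → ℕ) (K : ℕ) : Prop where
  ha : ∀ k, u (f (k + 1)) = u (f k + 1)
  he : ∀ k, f k + 1 ≤ H → f (k + 1) ≤ H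
  hb : ∀ χ ∈ Sg, ¬ isAl χ → ∀ k, XS A v₁ u H χ (f k + 1) → XS A v₁ u H χ (f (k + 1))
  hc1 : ∀ x ψ, G.alB x ψ ∈ Sg → ∀ k, XS A v₁ u H (.alB x ψ) (f k) → ∀ j ≤ v₂ x, XS A v₁ u H ψ (f (k + j))
  hc2 : ∀ x ψ, G.alB x ψ ∈ Sg → ∀ k, XS A v₁ u H (.alB x ψ) (f k + 1) → ∀ j ≤ v₂ x, XS A v₁ u H ψ (f (k + 1 + j))
  hK : ∀ k, K ≤ k → H < f k
  hev : ∀ x ψ, G.evB x ψ ∈ Sg → K ≤ v₂ x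

theorem XS_sound {S Var : Type} [MeasurableSpace S] (ν : S → Measure (ℕ → S)) (v₁ v₂ : Var → ℕ) (u : ℕ → S)
    (H : ℕ) (Sg : Finset (G S Var)) (f : ℕ → ℕ) (K : ℕ) (h : FCond (AS ν v₁) v₁ v₂ u H Sg f K)
    (ρ : ℕ → S) (hρ : ∀ k ≤ K, ρ k = u (f k)) (χ : G S Var) (hs : subs χ ⊆ Sg)
    (htr : TrH ν v₁ v₂ χ) (hg : Good ν v₂ ρ χ) :
    ∀ k, (XS (AS ν v₁) v₁ u H χ (f k) → GSat ρ v₂ χ k) ∧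
      (XS (AS ν v₁) v₁ u H χ (f k + 1) → GSat ρ v₂ χ (k + 1)) := by
  classical
  have hlt : ∀ χ k, XS (AS ν v₁) v₁ u H χ (f k) → k < K := by
    intro χ k hx
    by_contra hcon
    have h1 := h.hK k (by omega)
    have := XS_le _ _ _ _ _ _ hx
    omega
  have lift : ∀ χ ∈ Sg, ¬ isAl χ → (∀ k, XS (AS ν v₁) v₁ u H χ (f k) → GSat ρ v₂ χ k) →
      ∀ k, (XS (AS ν v₁) v₁ u H χ (f k) → GSat ρ v₂ χ k) ∧
      (XS (AS ν v₁) v₁ u H χ (f k + 1) → GSat ρ v₂ χ (k + 1)) := by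
    intro χ hχ hal h1 k
    exact ⟨h1 k, fun h2 => h1 _ (h.hb χ hχ hal k h2)⟩
  induction χ with
  | lit p =>
    have h1 : ∀ k, XS (AS ν v₁) v₁ u H (.lit p) (f k) → GSat ρ v₂ (.lit p) k := by
      intro k hx
      have := hlt _ k hx
      simp only [GSat]
      rw [hρ k this.le]
      exact hx.2
    intro k
    refine ⟨h1 k, fun hx => h1 _ ⟨h.he k hx.1, ?_⟩⟩
    rw [h.ha]; exact hx.2
  | and a b iha ihb =>
    simp only [subs, Finset.insert_subset_iff, Finset.union_subset_iff] at hs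
    refine lift _ hs.1 (by simp [isAl]) fun k hx => ?_
    exact ⟨(iha hs.2.1 htr.1 hg.1 k).1 hx.1, (ihb hs.2.2 htr.2 hg.2 k).1 hx.2⟩
  | or a b iha ihb =>
    simp only [subs, Finset.insert_subset_iff, Finset.union_subset_iff] at hs
    refine lift _ hs.1 (by simp [isAl]) fun k hx => ?_
    exact hx.imp (iha hs.2.1 htr.1 hg.1 k).1 (ihb hs.2.2 htr.2 hg.2 k).1
  | next a iha =>
    simp only [subs, Finset.insert_subset_iff] at hs
    refine lift _ hs.1 (by simp [isAl]) fun k hx => ?_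
    exact (iha hs.2 htr hg k).2 hx
  | U a b iha ihb =>
    simp only [subs, Finset.insert_subset_iff, Finset.union_subset_iff] at hs
    refine lift _ hs.1 (by simp [isAl]) ?_
    have : ∀ d k, K ≤ k + d → XS (AS ν v₁) v₁ u H (.U a b) (f k) → GSat ρ v₂ (.U a b) k := by
      intro d
      induction d with
      | zero => intro k hk hx; have := hlt _ k hx; omega
      | succ d ihd =>
        rintro k hk ⟨j, h1, h2, h3⟩
        rcases Nat.eq_or_lt_of_le h1 with h4 | h4
        · rw [← h4] at h2
          exact ⟨k, le_rfl, (ihb hs.2.2 htr.2 hg.2 k).1 h2, by omega⟩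
        · have ha := (iha hs.2.1 htr.1 hg.1 k).1 (h3 _ le_rfl h4)
          have h5 : XS (AS ν v₁) v₁ u H (.U a b) (f k + 1) :=
            ⟨j, h4, h2, fun i hi1 hi2 => h3 i (by omega) hi2⟩
          obtain ⟨j', g1, g2, g3⟩ := ihd (k + 1) (by omega) (h.hb _ hs.1 (by simp [isAl]) k h5)
          refine ⟨j', by omega, g2, fun i hi1 hi2 => ?_⟩
          rcases Nat.eq_or_lt_of_le hi1 with h6 | h6
          · rw [← h6]; exact ha
          · exact g3 i h6 hi2
    intro k
    exact this K k (by omega)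
  | R a b iha ihb =>
    simp only [subs, Finset.insert_subset_iff, Finset.union_subset_iff] at hs
    refine lift _ hs.1 (by simp [isAl]) ?_
    have : ∀ d k, K ≤ k + d → XS (AS ν v₁) v₁ u H (.R a b) (f k) → GSat ρ v₂ (.R a b) k := by
      intro d
      induction d with
      | zero => intro k hk hx; have := hlt _ k hx; omega
      | succ d ihd =>
        intro k hk hx
        have hkK := hlt _ k hx
        obtain ⟨j, h1, h2, h3, h4⟩ := hx
        rcases Nat.eq_or_lt_of_le h1 with h5 | h5
        · rw [← h5] at h3
          rcases h3 with h3 | ⟨h3, h3'⟩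
          · have := htr.2.2 _ h3
            rw [← hρ k hkK.le] at this
            intro i hi
            exact Or.inl (hg.2.2 k this i hi)
          · have ha := (iha hs.2.1 htr.1 hg.1 k).1 h3
            have hb := (ihb hs.2.2 htr.2.1 hg.2.1 k).1 h3'
            intro i hi
            rcases Nat.eq_or_lt_of_le hi with h6 | h6
            · rw [← h6]; exact Or.inl hb
            · exact Or.inr ⟨k, le_rfl, h6, ha⟩
        · have hb := (ihb hs.2.2 htr.2.1 hg.2.1 k).1 (h4 _ le_rfl h5)
          have h6 : XS (AS ν v₁) v₁ u H (.R a b) (f k + 1) :=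
            ⟨j, h5, h2, h3, fun i hi1 hi2 => h4 i (by omega) hi2⟩
          have g := ihd (k + 1) (by omega) (h.hb _ hs.1 (by simp [isAl]) k h6)
          intro i hi
          rcases Nat.eq_or_lt_of_le hi with h7 | h7
          · rw [← h7]; exact Or.inl hb
          · rcases g i h7 with g | ⟨j', g1, g2, g3⟩
            · exact Or.inl g
            · exact Or.inr ⟨j', by omega, g2, g3⟩
    intro k
    exact this K k (by omega)
  | evB x a iha =>
    simp only [subs, Finset.insert_subset_iff] at hs
    refine lift _ hs.1 (by simp [isAl]) ?_
    have : ∀ d k, K ≤ k + d → XS (AS ν v₁) v₁ u H (.evB x a) (f k) → ∃ j, k + j < K ∧ GSat ρ v₂ a (k + j) := by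
      intro d
      induction d with
      | zero => intro k hk hx; have := hlt _ k hx; omega
      | succ d ihd =>
        rintro k hk hx
        have hkK := hlt _ k hx
        obtain ⟨j, h1, h2⟩ := hx
        rcases Nat.eq_or_lt_of_le h1 with h4 | h4
        · rw [← h4] at h2
          exact ⟨0, by omega, (iha hs.2 htr hg k).1 h2⟩
        · have h5 : XS (AS ν v₁) v₁ u H (.evB x a) (f k + 1) := ⟨j, h4, h2⟩
          obtain ⟨j', g1, g2⟩ := ihd (k + 1) (by omega) (h.hb _ hs.1 (by simp [isAl]) k h5)
          refine ⟨1 + j', by omega, by rwa [← add_assoc]⟩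
    intro k hx
    obtain ⟨j, h1, h2⟩ := this K k (by omega) hx
    have := h.hev x a hs.1
    exact ⟨j, by omega, h2⟩
  | alB x a iha =>
    simp only [subs, Finset.insert_subset_iff] at hs
    intro k
    refine ⟨fun hx j hj => ?_, fun hx j hj => ?_⟩
    · exact (iha hs.2 htr hg (k + j)).1 (h.hc1 x a hs.1 k hx j hj)
    · exact (iha hs.2 htr hg (k + 1 + j)).1 (h.hc2 x a hs.1 k hx j hj)

theorem core {S Var : Type} [Fintype S] [MeasurableSpace S] [DiscreteMeasurableSpace S]
    {P : S → S → ℝ≥0∞} (hP : ∀ s, ∑ t, P s t = 1) {ν : S → Measure (ℕ → S)}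
    (hν : ∀ s, MChain P s (ν s)) (v₁ v₂ : Var → ℕ) (Ψ : G S Var) (htr : TrH ν v₁ v₂ Ψ)
    (hf : ∀ u H, XS (AS ν v₁) v₁ u H Ψ 0 → ∃ f K, FCond (AS ν v₁) v₁ v₂ u H (subs Ψ) f K ∧
      XS (AS ν v₁) v₁ u H Ψ (f 0) ∧ u (f 0) = u 0) (s : S)
    (hpos : ¬ ∀ᵐ ρ ∂ν s, ¬ GSat ρ v₁ Ψ 0) : ¬ ∀ᵐ ρ ∂ν s, ¬ GSat ρ v₂ Ψ 0 := by
  classical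
  have h1 : ∃ᵐ ρ ∂ν s, GSat ρ v₁ Ψ 0 := hpos
  obtain ⟨u, ⟨hu, hnice⟩, hu0, hupos⟩ :=
    ((h1.and_eventually (Nice_ae hP hν s v₁ Ψ)).and_eventually (trans_ae hν s)).exists
  obtain ⟨H, hH⟩ := (XS_complete ν v₁ u Ψ hnice 0 hu).exists
  obtain ⟨f, K, hF, hX, hf0⟩ := hf u H hH
  intro hcon
  have hc : ν s (cyl K (fun k => u (f k))) ≠ 0 := by
    rw [(hν s).hc]
    simp only [hf0, hu0, if_true, one_mul]
    rw [Finset.prod_ne_zero_iff]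
    intro k _
    rw [hF.ha]
    exact hupos _
  apply hc
  have : ∀ᵐ ρ ∂ν s, ρ ∉ cyl K (fun k => u (f k)) := by
    filter_upwards [hcon, Good_ae hP hν s v₂ Ψ] with ρ h2 h3 h4
    exact h2 ((XS_sound ν v₁ v₂ u H (subs Ψ) f K hF ρ h4 Ψ (Finset.Subset.refl _) htr h3 0).1 hX)
  exact measure_eq_zero_iff_ae_notMem.2 this
open Classical in
noncomputable def labF {S Var : Type} (A : G S Var → S → Prop) (v : Var → ℕ) (u : ℕ → S) (H : ℕ)
    (Sg : Finset (G S Var)) (B : ℕ) (k : ℕ) : S × Option (Set {χ // χ ∈ Sg}) :=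
  (u k, if k ≤ H then some {c | if isAl c.1 then (∃ i ≤ k, k ≤ i + B ∧ XS A v u H c.1 i)
    else XS A v u H c.1 k} else none)

theorem labF_fst {S Var : Type} {A : G S Var → S → Prop} {v : Var → ℕ} {u : ℕ → S} {H : ℕ}
    {Sg : Finset (G S Var)} {B a b : ℕ} (h : labF A v u H Sg B a = labF A v u H Sg B b) : u a = u b :=
  congrArg Prod.fst h

theorem labF_le {S Var : Type} {A : G S Var → S → Prop} {v : Var → ℕ} {u : ℕ → S} {H : ℕ}
    {Sg : Finset (G S Var)} {B a b : ℕ} (h : labF A v u H Sg B a = labF A v u H Sg B b) (ha : a ≤ H) :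
    b ≤ H := by
  by_contra hb
  have := congrArg Prod.snd h
  simp [labF, ha, hb] at this

theorem labF_mem {S Var : Type} {A : G S Var → S → Prop} {v : Var → ℕ} {u : ℕ → S} {H : ℕ}
    {Sg : Finset (G S Var)} {B a b : ℕ} (h : labF A v u H Sg B a = labF A v u H Sg B b)
    (χ : G S Var) (hχ : χ ∈ Sg) (hal : ¬ isAl χ) (hx : XS A v u H χ a) : XS A v u H χ b := by
  have ha := XS_le _ _ _ _ _ _ hx
  have hb := labF_le h ha
  have h2 := congrArg Prod.snd h
  simp only [labF, ha, hb, if_true, Option.some.injEq] at h2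
  have h3 := Set.ext_iff.1 h2 ⟨χ, hχ⟩
  simp only [Set.mem_ofPred_eq, hal, if_false] at h3
  exact h3.1 hx

theorem subs_self {S Var : Type} (Ψ : G S Var) : Ψ ∈ subs Ψ ∨ ∃ p, Ψ = .lit p := by
  cases Ψ <;> simp [subs]

theorem labF_start {S Var : Type} {A : G S Var → S → Prop} {v : Var → ℕ} {u : ℕ → S} {H : ℕ}
    {B a b : ℕ} (Ψ : G S Var) (h : labF A v u H (subs Ψ) B a = labF A v u H (subs Ψ) B b)
    (hal : ¬ isAl Ψ) (hx : XS A v u H Ψ a) : XS A v u H Ψ b := by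
  rcases subs_self Ψ with h1 | ⟨p, rfl⟩
  · exact labF_mem h Ψ h1 hal hx
  · refine ⟨labF_le h hx.1, ?_⟩
    rw [← labF_fst h]; exact hx.2

theorem hf_cut {S Var : Type} [Fintype S] (A : G S Var → S → Prop) (v₁ v₂ : Var → ℕ) (Ψ : G S Var)
    (hv : ∀ x, Fintype.card S * (2 ^ gsize Ψ + 1) ≤ v₂ x) (hal : ¬ isAl Ψ) (hno : ∀ χ ∈ subs Ψ, ¬ isAl χ)
    (u : ℕ → S) (H : ℕ) (hx : XS A v₁ u H Ψ 0) :
    ∃ f K, FCond A v₁ v₂ u H (subs Ψ) f K ∧ XS A v₁ u H Ψ (f 0) ∧ u (f 0) = u 0 := by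
  classical
  obtain ⟨f, h0, h1, h2⟩ := cut (labF A v₁ u H (subs Ψ) 0) H
  refine ⟨f, _, ⟨?_, ?_, ?_, ?_, ?_, h2, ?_⟩, ?_, ?_⟩
  · exact fun k => labF_fst (h1 k)
  · exact fun k => labF_le (h1 k).symm
  · intro χ hχ ha k
    exact labF_mem (h1 k).symm χ hχ ha
  · intro x ψ hψ
    exact absurd trivial (hno _ hψ)
  · intro x ψ hψ
    exact absurd trivial (hno _ hψ)
  · intro x ψ _
    refine le_trans ?_ (hv x)
    rw [Fintype.card_prod, Fintype.card_option, Fintype.card_set, Fintype.card_coe]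
    have := subs_card Ψ
    gcongr
    norm_num
  · exact labF_start Ψ h0.symm hal hx
  · exact labF_fst h0

theorem hf_pump {S Var : Type} [Fintype S] (A : G S Var → S → Prop) (B N : ℕ) (Ψ : G S Var)
    (hB : 0 < gsize Ψ → (gsize Ψ + 1) * (Fintype.card S * (2 ^ gsize Ψ + 1) + 1) ≤ B)
    (hno : ∀ x ψ, G.evB x ψ ∉ subs Ψ)
    (u : ℕ → S) (H : ℕ) (hx : XS A (fun _ => B) u H Ψ 0) :
    ∃ f K, FCond A (fun _ => B) (fun _ => N) u H (subs Ψ) f K ∧ XS A (fun _ => B) u H Ψ (f 0) ∧ u (f 0) = u 0 := by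
  classical
  let κ := {c : {χ // χ ∈ subs Ψ} // isAl c.1}
  let Pn : S × Option (Set {χ // χ ∈ subs Ψ}) → κ → Prop := fun l c => ∃ T, l.2 = some T ∧ c.1 ∈ T
  let O : ℕ → κ → Prop := fun k c => XS A (fun _ => B) u H c.1.1 k
  set lab := labF A (fun _ => B) u H (subs Ψ) B with hlab
  have hbody : ∀ (c : κ) i k, i ≤ k → k ≤ i + B → XS A (fun _ => B) u H c.1.1 i → k ≤ H := by
    rintro ⟨⟨c, hc⟩, hal⟩ i k h1 h2 h3
    cases c with
    | alB x ψ =>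
      have := h3 (k - i) (by show k - i ≤ B; omega)
      rw [show i + (k - i) = k by omega] at this
      exact XS_le _ _ _ _ _ _ this
    | _ => exact absurd hal (by simp [isAl])
  have hPn : ∀ k c, Pn (lab k) c ↔ ∃ i ≤ k, k ≤ i + B ∧ XS A (fun _ => B) u H c.1.1 i := by
    intro k c
    constructor
    · rintro ⟨T, h1, h2⟩
      by_cases hk : k ≤ H
      · simp only [hlab, labF, hk, if_true, Option.some.injEq] at h1
        rw [← h1] at h2
        simpa only [Set.mem_ofPred_eq, c.2, if_true] using h2
      · simp [hlab, labF, hk] at h1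
    · rintro ⟨i, h1, h2, h3⟩
      have hk := hbody c i k h1 h2 h3
      refine ⟨_, by simp only [hlab, labF, hk, if_true]; rfl, ?_⟩
      simp only [Set.mem_ofPred_eq, c.2, if_true]
      exact ⟨i, h1, h2, h3⟩
  have hinv : PInv Pn B lab O := by
    constructor
    · intro k c hO
      rw [hPn]
      exact ⟨k, le_rfl, by omega, hO⟩
    · intro e d c he hO hd
      by_contra hcon
      apply he.2
      rw [hPn]
      exact ⟨d, by omega, by omega, hO⟩
    · intro e j c he hj1 hj2
      obtain ⟨i, h1, h2, h3⟩ := (hPn e c).1 he.1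
      have : ¬ (e + 1 ≤ i + B) := by
        intro hcon
        apply he.2
        rw [hPn]
        exact ⟨i, by omega, by omega, h3⟩
      rw [hPn]
      exact ⟨i, by omega, by omega, h3⟩
    · refine ⟨H, fun k c hk hp => ?_⟩
      obtain ⟨i, h1, h2, h3⟩ := (hPn k c).1 hp
      have := hbody c i k h1 h2 h3
      omega
  have hcard : Nonempty κ → (Fintype.card κ + 1) * (Fintype.card (S × Option (Set {χ // χ ∈ subs Ψ})) + 1) ≤ B := by
    rintro ⟨c⟩
    have h1 := subs_card Ψ
    have h2 : 0 < (subs Ψ).card := Finset.card_pos.2 ⟨_, c.1.2⟩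
    refine le_trans ?_ (hB (by omega))
    have h3 : Fintype.card κ ≤ gsize Ψ := by
      refine le_trans (Fintype.card_subtype_le _) ?_
      rwa [Fintype.card_coe]
    rw [Fintype.card_prod, Fintype.card_option, Fintype.card_set, Fintype.card_coe]
    gcongr
    norm_num
  obtain ⟨f, h0, h1, h2, h3, h4⟩ := pump Pn B N hcard _ lab O hinv le_rfl
  obtain ⟨K, hK⟩ := h4 H
  have hpsi : ∀ x ψ (h : G.alB x ψ ∈ subs Ψ) k, Pn (lab k) ⟨⟨_, h⟩, trivial⟩ → XS A (fun _ => B) u H ψ k := by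
    intro x ψ h k hp
    obtain ⟨i, g1, g2, g3⟩ := (hPn k _).1 hp
    have := g3 (k - i) (by show k - i ≤ B; omega)
    rwa [show i + (k - i) = k by omega] at this
  refine ⟨f, K, ⟨?_, ?_, ?_, ?_, ?_, hK, ?_⟩, ?_, ?_⟩
  · exact fun k => labF_fst (h1 k)
  · exact fun k => labF_le (h1 k).symm
  · intro χ hχ ha k
    exact labF_mem (h1 k).symm χ hχ ha
  · intro x ψ hψ k hX j hj
    exact hpsi x ψ hψ _ (h2 k ⟨⟨_, hψ⟩, trivial⟩ hX j hj)
  · intro x ψ hψ k hX j hj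
    exact hpsi x ψ hψ _ (h3 k ⟨⟨_, hψ⟩, trivial⟩ hX j hj)
  · intro x ψ hψ
    exact absurd hψ (hno x ψ)
  · rwa [h0]
  · rw [h0]

/-- positive translation -/
def trT {AP Var S : Type} (L : S → Set AP) : PD AP Var → G S Var
  | .atom a => .lit (fun s => a ∈ L s)
  | .natom a => .lit (fun s => a ∉ L s)
  | .and a b => .and (trT L a) (trT L b)
  | .or a b => .or (trT L a) (trT L b)
  | .next a => .next (trT L a)
  | .untl a b => .U (trT L a) (trT L b)
  | .release a b => .R (trT L a) (trT L b)
  | .always a => .R (.lit (fun _ => False)) (trT L a)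
  | .evVar x a => .evB x (trT L a)

/-- negative translation -/
def trD {AP Var S : Type} (L : S → Set AP) : PD AP Var → G S Var
  | .atom a => .lit (fun s => a ∉ L s)
  | .natom a => .lit (fun s => a ∈ L s)
  | .and a b => .or (trD L a) (trD L b)
  | .or a b => .and (trD L a) (trD L b)
  | .next a => .next (trD L a)
  | .untl a b => .R (trD L a) (trD L b)
  | .release a b => .U (trD L a) (trD L b)
  | .always a => .U (.lit (fun _ => True)) (trD L a)
  | .evVar x a => .alB x (trD L a)

theorem trT_sat {AP Var S : Type} (L : S → Set AP) (ρ : ℕ → S) (v : Var → ℕ) (φ : PD AP Var) :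
    ∀ i, GSat ρ v (trT L φ) i ↔ PD.Sat (fun i => L (ρ i)) i v φ := by
  induction φ with
  | atom a => intro i; rfl
  | natom a => intro i; rfl
  | and a b iha ihb => intro i; simp only [trT, GSat, PD.Sat, iha, ihb]
  | or a b iha ihb => intro i; simp only [trT, GSat, PD.Sat, iha, ihb]
  | next a iha => intro i; simp only [trT, GSat, PD.Sat, iha]
  | untl a b iha ihb => intro i; simp only [trT, GSat, PD.Sat, iha, ihb]
  | release a b iha ihb => intro i; simp only [trT, GSat, PD.Sat, iha, ihb]
  | always a iha => intro i; simp [trT, GSat, PD.Sat, iha]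
  | evVar x a iha =>
    intro i; simp only [trT, GSat, PD.Sat, iha]
    constructor
    · rintro ⟨j, h1, h2⟩; exact ⟨i + j, by omega, by omega, h2⟩
    · rintro ⟨j, h1, h2, h3⟩
      exact ⟨j - i, by omega, by rwa [show i + (j - i) = j by omega]⟩

theorem trD_sat {AP Var S : Type} (L : S → Set AP) (ρ : ℕ → S) (v : Var → ℕ) (φ : PD AP Var) :
    ∀ i, GSat ρ v (trD L φ) i ↔ ¬ GSat ρ v (trT L φ) i := by
  induction φ with
  | atom a => intro i; rfl
  | natom a => intro i; simp [trD, trT, GSat]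
  | and a b iha ihb => intro i; simp only [trD, trT, GSat, iha, ihb]; tauto
  | or a b iha ihb => intro i; simp only [trD, trT, GSat, iha, ihb]; tauto
  | next a iha => intro i; simp only [trD, trT, GSat, iha]
  | untl a b iha ihb =>
    intro i; simp only [trD, trT, GSat, iha, ihb]
    push Not
    exact forall_congr' fun j => imp_congr_right fun _ => by tauto
  | release a b iha ihb =>
    intro i; simp only [trD, trT, GSat, iha, ihb]
    push Not
    exact exists_congr fun j => Iff.rfl
  | always a iha => intro i; simp [trD, trT, GSat, iha]
  | evVar x a iha =>
    intro i; simp only [trD, trT, GSat, iha]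
    push Not
    rfl

theorem trT_size {AP Var S : Type} (L : S → Set AP) (φ : PD AP Var) : gsize (trT L φ) + 1 ≤ φ.size := by
  induction φ <;> simp only [trT, gsize, PD.size] <;> omega

theorem trD_size {AP Var S : Type} (L : S → Set AP) (φ : PD AP Var) : gsize (trD L φ) + 1 ≤ φ.size := by
  induction φ <;> simp only [trD, gsize, PD.size] <;> omega

theorem trT_noAl {AP Var S : Type} (L : S → Set AP) (φ : PD AP Var) :
    ¬ isAl (trT L φ) ∧ ∀ χ ∈ subs (trT L φ), ¬ isAl χ := by
  classical
  induction φ <;> refine ⟨by simp [trT, isAl], fun χ hχ => ?_⟩ <;>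
    simp only [trT, subs, Finset.mem_insert, Finset.mem_union, Finset.notMem_empty, false_or] at hχ <;> grind [isAl]

theorem trD_noEv {AP Var S : Type} (L : S → Set AP) (φ : PD AP Var) :
    ∀ x ψ, G.evB x ψ ∉ subs (trD L φ) := by
  classical
  induction φ <;> intro x ψ hχ <;>
    simp only [trD, subs, Finset.mem_insert, Finset.mem_union, Finset.notMem_empty, false_or, reduceCtorEq] at hχ <;> grind
theorem PQ {AP Var S : Type} [Fintype S] [MeasurableSpace S] [DiscreteMeasurableSpace S]
    {P : S → S → ℝ≥0∞} (hP : ∀ s, ∑ t, P s t = 1) {ν : S → Measure (ℕ → S)}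
    (hν : ∀ s, MChain P s (ν s)) (L : S → Set AP) (B N n : ℕ)
    (hB : ∀ g, g + 1 ≤ n → Fintype.card S * (2 ^ g + 1) ≤ B ∨ g = 0 ∧ n = 1)
    (hB1 : Fintype.card S * 2 ≤ B)
    (hB2 : ∀ g, g + 1 ≤ n → 0 < g → (g + 1) * (Fintype.card S * (2 ^ g + 1) + 1) ≤ B)
    (φ : PD AP Var) (hφ : φ.size ≤ n) :
    TrH ν (fun _ => N) (fun _ => B) (trT L φ) ∧ TrH ν (fun _ => B) (fun _ => N) (trD L φ) ∧
    (∀ s, (∀ᵐ ρ ∂ν s, ¬ GSat ρ (fun _ => B) (trT L φ) 0) → ∀ᵐ ρ ∂ν s, ¬ GSat ρ (fun _ => N) (trT L φ) 0) ∧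
    (∀ s, (∀ᵐ ρ ∂ν s, GSat ρ (fun _ => N) (trT L φ) 0) → ∀ᵐ ρ ∂ν s, GSat ρ (fun _ => B) (trT L φ) 0) := by
  have main : ∀ φ : PD AP Var, φ.size ≤ n → TrH ν (fun _ => N) (fun _ => B) (trT L φ) →
    TrH ν (fun _ => B) (fun _ => N) (trD L φ) →
    (∀ s, (∀ᵐ ρ ∂ν s, ¬ GSat ρ (fun _ => B) (trT L φ) 0) → ∀ᵐ ρ ∂ν s, ¬ GSat ρ (fun _ => N) (trT L φ) 0) ∧
    (∀ s, (∀ᵐ ρ ∂ν s, GSat ρ (fun _ => N) (trT L φ) 0) → ∀ᵐ ρ ∂ν s, GSat ρ (fun _ => B) (trT L φ) 0) := by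
    intro φ hφ h1 h2
    constructor
    · intro s hs
      by_contra hcon
      refine core hP hν (fun _ => N) (fun _ => B) (trT L φ) h1 ?_ s hcon hs
      intro u H hx
      refine hf_cut _ _ _ _ (fun x => ?_) (trT_noAl L φ).1 (trT_noAl L φ).2 u H hx
      have := trT_size L φ
      rcases hB _ (this.trans hφ) with h | ⟨h, _⟩
      · exact h
      · rw [h]; exact hB1
    · intro s hs
      by_contra hcon
      refine core hP hν (fun _ => B) (fun _ => N) (trD L φ) h2 ?_ s ?_ ?_
      · intro u H hx
        refine hf_pump _ _ _ _ (fun h => ?_) (trD_noEv L φ) u H hx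
        exact hB2 _ ((trD_size L φ).trans hφ) h
      · simpa only [trD_sat, not_not] using hcon
      · simpa only [trD_sat, not_not] using hs
  have wrap : ∀ φ : PD AP Var, φ.size ≤ n → TrH ν (fun _ => N) (fun _ => B) (trT L φ) →
    TrH ν (fun _ => B) (fun _ => N) (trD L φ) →
    TrH ν (fun _ => N) (fun _ => B) (trT L φ) ∧ TrH ν (fun _ => B) (fun _ => N) (trD L φ) ∧
    (∀ s, (∀ᵐ ρ ∂ν s, ¬ GSat ρ (fun _ => B) (trT L φ) 0) → ∀ᵐ ρ ∂ν s, ¬ GSat ρ (fun _ => N) (trT L φ) 0) ∧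
    (∀ s, (∀ᵐ ρ ∂ν s, GSat ρ (fun _ => N) (trT L φ) 0) → ∀ᵐ ρ ∂ν s, GSat ρ (fun _ => B) (trT L φ) 0) :=
    fun φ h h1 h2 => ⟨h1, h2, main φ h h1 h2⟩
  induction φ with
  | atom a => exact wrap _ hφ trivial trivial
  | natom a => exact wrap _ hφ trivial trivial
  | and a b iha ihb =>
    have ha := iha (by simp only [PD.size] at hφ; omega)
    have hb := ihb (by simp only [PD.size] at hφ; omega)
    exact wrap _ hφ ⟨ha.1, hb.1⟩ ⟨ha.2.1, hb.2.1⟩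
  | or a b iha ihb =>
    have ha := iha (by simp only [PD.size] at hφ; omega)
    have hb := ihb (by simp only [PD.size] at hφ; omega)
    exact wrap _ hφ ⟨ha.1, hb.1⟩ ⟨ha.2.1, hb.2.1⟩
  | next a iha =>
    have ha := iha (by simp only [PD.size] at hφ; omega)
    exact wrap _ hφ ha.1 ha.2.1
  | untl a b iha ihb =>
    have ha := iha (by simp only [PD.size] at hφ; omega)
    have hb := ihb (by simp only [PD.size] at hφ; omega)
    refine wrap _ hφ ⟨ha.1, hb.1⟩ ⟨ha.2.1, hb.2.1, fun t => ?_⟩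
    refine AS_transfer hP hν _ _ _ (fun s hs => ?_) t
    simp only [trD_sat] at hs ⊢
    exact hb.2.2.1 s hs
  | release a b iha ihb =>
    have ha := iha (by simp only [PD.size] at hφ; omega)
    have hb := ihb (by simp only [PD.size] at hφ; omega)
    exact wrap _ hφ ⟨ha.1, hb.1, fun t => AS_transfer hP hν _ _ _ hb.2.2.2 t⟩ ⟨ha.2.1, hb.2.1⟩
  | always a iha =>
    have ha := iha (by simp only [PD.size] at hφ; omega)
    exact wrap _ hφ ⟨trivial, ha.1, fun t => AS_transfer hP hν _ _ _ ha.2.2.2 t⟩ ⟨trivial, ha.2.1⟩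
  | evVar x a iha =>
    have ha := iha (by simp only [PD.size] at hφ; omega)
    exact wrap _ hφ ha.1 ha.2.1

theorem sat_uniform {AP Var : Type} (v : Var → ℕ) (φ : PD AP Var) :
    ∃ N₀, ∀ N ≥ N₀, ∀ (w : ℕ → Set AP) i, PD.Sat w i v φ → PD.Sat w i (fun _ => N) φ := by
  induction φ with
  | atom a => exact ⟨0, fun _ _ _ _ h => h⟩
  | natom a => exact ⟨0, fun _ _ _ _ h => h⟩
  | and a b iha ihb =>
    obtain ⟨n, hn⟩ := iha
    obtain ⟨m, hm⟩ := ihb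
    exact ⟨max n m, fun N hN w i h => ⟨hn N (le_of_max_le_left hN) w i h.1, hm N (le_of_max_le_right hN) w i h.2⟩⟩
  | or a b iha ihb =>
    obtain ⟨n, hn⟩ := iha
    obtain ⟨m, hm⟩ := ihb
    exact ⟨max n m, fun N hN w i h => h.imp (hn N (le_of_max_le_left hN) w i) (hm N (le_of_max_le_right hN) w i)⟩
  | next a iha =>
    obtain ⟨n, hn⟩ := iha
    exact ⟨n, fun N hN w i h => hn N hN w (i + 1) h⟩
  | untl a b iha ihb =>
    obtain ⟨n, hn⟩ := iha
    obtain ⟨m, hm⟩ := ihb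
    refine ⟨max n m, fun N hN w i h => ?_⟩
    obtain ⟨j, h1, h2, h3⟩ := h
    exact ⟨j, h1, hm N (le_of_max_le_right hN) w j h2, fun k h4 h5 => hn N (le_of_max_le_left hN) w k (h3 k h4 h5)⟩
  | release a b iha ihb =>
    obtain ⟨n, hn⟩ := iha
    obtain ⟨m, hm⟩ := ihb
    refine ⟨max n m, fun N hN w i h j hj => ?_⟩
    rcases h j hj with h | ⟨k, h1, h2, h3⟩
    · exact Or.inl (hm N (le_of_max_le_right hN) w j h)
    · exact Or.inr ⟨k, h1, h2, hn N (le_of_max_le_left hN) w k h3⟩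
  | always a iha =>
    obtain ⟨n, hn⟩ := iha
    exact ⟨n, fun N hN w i h j hj => hn N hN w j (h j hj)⟩
  | evVar x a iha =>
    obtain ⟨n, hn⟩ := iha
    refine ⟨max n (v x), fun N hN w i h => ?_⟩
    obtain ⟨j, h1, h2, h3⟩ := h
    have := le_of_max_le_right hN
    exact ⟨j, h1, by show j ≤ N + i; omega, hn N (le_of_max_le_left hN) w j h3⟩

theorem nullmeas_part {Ω ι : Type} [Fintype ι] [MeasurableSpace Ω] (μ : Measure Ω) [IsProbabilityMeasure μ]
    (A : ι → Set Ω) (hcov : ∀ ω, ∃ i, ω ∈ A i) (hsum : ∑ i, μ (A i) = 1) (i : ι) :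
    NullMeasurableSet (A i) μ := by
  classical
  set T : Set Ω := ⋃ j ∈ Finset.univ.erase i, toMeasurable μ (A j) with hT
  have hTm : MeasurableSet T := Finset.measurableSet_biUnion _ fun j _ => measurableSet_toMeasurable _ _
  have hsub : Tᶜ ⊆ A i := by
    intro ω hω
    obtain ⟨j, hj⟩ := hcov ω
    by_cases hji : j = i
    · rwa [← hji]
    · exfalso
      apply hω
      simp only [hT, Set.mem_iUnion]
      exact ⟨j, by simp [hji], subset_toMeasurable _ _ hj⟩
  have hTle : μ T ≤ ∑ j ∈ Finset.univ.erase i, μ (A j) := by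
    refine (measure_biUnion_finset_le _ _).trans (Finset.sum_le_sum fun j _ => ?_)
    rw [measure_toMeasurable]
  have hge : μ (A i) ≤ μ Tᶜ := by
    rw [prob_compl_eq_one_sub hTm]
    refine ENNReal.le_sub_of_add_le_left (measure_ne_top _ _) ?_
    rw [← hsum, ← Finset.sum_erase_add _ _ (Finset.mem_univ i)]
    gcongr
  exact hTm.compl.nullMeasurableSet.congr
    (ae_eq_of_subset_of_measure_ge hsub hge hTm.compl.nullMeasurableSet (measure_ne_top _ _))

open Classical in
/-- mass of a cylinder -/
noncomputable def cmass {S : Type} (P : S → S → ℝ≥0∞) (s : S) (n : ℕ) (u : ℕ → S) : ℝ≥0∞ :=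
  (if u 0 = s then 1 else 0) * ∏ k ∈ Finset.range n, P (u k) (u (k + 1))

theorem cmass_sum_aux {S : Type} [Fintype S] [MeasurableSpace S] [DiscreteMeasurableSpace S]
    (P : S → S → ℝ≥0∞) (hP : ∀ s, ∑ t, P s t = 1) (s : S) (n : ℕ) :
    ∑ g : Fin (n + 1) → S, cmass P s n (ext0 n g) = 1 := by
  classical
  obtain ⟨ν, hν⟩ := exists_MChain P hP s
  have h1 := dep_sum ν n Set.univ
  have h2 : ν Set.univ = 1 := hν.prob.measure_univ
  simp only [Set.preimage_univ, Set.mem_univ, Finset.filter_true] at h1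
  rw [h2] at h1
  rw [h1]
  exact Finset.sum_congr rfl fun g _ => (hν.hc _ _).symm

theorem cmass_sum {S : Type} [Fintype S]
    (P : S → S → ℝ≥0∞) (hP : ∀ s, ∑ t, P s t = 1) (s : S) (n : ℕ) :
    ∑ g : Fin (n + 1) → S, cmass P s n (ext0 n g) = 1 := by
  letI : MeasurableSpace S := ⊤
  haveI : DiscreteMeasurableSpace S := ⟨fun _ => trivial⟩
  exact cmass_sum_aux P hP s n

theorem carath {S : Type} [Fintype S] [MeasurableSpace S]
    (P : S → S → ℝ≥0∞) (hP : ∀ s, ∑ t, P s t = 1) (s : S) (μ : Measure (ℕ → S))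
    [IsProbabilityMeasure μ] (hcyl : ∀ n u, μ (cyl n u) = cmass P s n u) (n : ℕ) (t : Set S) :
    μ.toOuterMeasure.IsCaratheodory ((fun b : ℕ → S => b n) ⁻¹' t) := by
  have hnull : ∀ g : Fin (n + 1) → S, NullMeasurableSet (cyl n (ext0 n g)) μ := by
    intro g
    refine nullmeas_part μ (fun g : Fin (n + 1) → S => cyl n (ext0 n g)) ?_ ?_ g
    · intro ω
      refine ⟨pre n ω, ?_⟩
      rw [← pre_fiber]; rfl
    · rw [← cmass_sum P hP s n]
      exact Finset.sum_congr rfl fun g _ => hcyl _ _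
  have : (fun b : ℕ → S => b n) ⁻¹' t = ⋃ g ∈ {g : Fin (n + 1) → S | g (Fin.last n) ∈ t}, cyl n (ext0 n g) := by
    ext ω
    simp only [Set.mem_preimage, Set.mem_iUnion, ← pre_fiber, Set.mem_singleton_iff, Set.mem_ofPred_eq]
    constructor
    · intro h; exact ⟨_, h, rfl⟩
    · rintro ⟨g, h, rfl⟩; exact h
  rw [this]
  have hn : NullMeasurableSet (⋃ g ∈ {g : Fin (n + 1) → S | g (Fin.last n) ∈ t}, cyl n (ext0 n g)) μ :=
    NullMeasurableSet.biUnion (Set.to_countable _) fun g _ => hnull g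
  intro X
  exact (measure_inter_add_diff₀ X hn).symm

theorem outer_eq {S : Type} [Fintype S] [MeasurableSpace S] [DiscreteMeasurableSpace S]
    (P : S → S → ℝ≥0∞) (s : S) (o : OuterMeasure (ℕ → S)) (h1 : o Set.univ = 1)
    (hcyl : ∀ n u, o (cyl n u) = cmass P s n u)
    (hcar : ∀ n (t : Set S), o.IsCaratheodory ((fun b : ℕ → S => b n) ⁻¹' t))
    (ν : Measure (ℕ → S)) (hν : MChain P s ν) (D : Set (ℕ → S)) (hD : MeasurableSet D) :
    o D = ν D := by
  have hle : (MeasurableSpace.pi : MeasurableSpace (ℕ → S)) ≤ o.caratheodory := by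
    refine iSup_le fun n => ?_
    rintro _ ⟨t, _, rfl⟩
    exact hcar n t
  have hch : MChain P s (o.toMeasure hle) := by
    refine ⟨⟨?_⟩, fun n u => ?_⟩
    · rw [toMeasure_apply _ _ MeasurableSet.univ, h1]
    · rw [toMeasure_apply _ _ (measurableSet_cyl n u), hcyl]; rfl
  rw [← hch.unique hν, toMeasure_apply _ _ hD]

theorem arith (m n g : ℕ) (hm : 1 ≤ m) (hg : g + 1 ≤ n) (h0 : 0 < g) :
    (g + 1) * (m * (2 ^ g + 1) + 1) ≤ m * n * 2 ^ n := by
  have h1 : 2 ^ (g + 1) ≤ 2 ^ n := Nat.pow_le_pow_right (by norm_num) hg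
  have h2 : 2 ≤ 2 ^ g := by
    calc 2 = 2 ^ 1 := rfl
      _ ≤ 2 ^ g := Nat.pow_le_pow_right (by norm_num) h0
  have h3 : m * (2 ^ g + 1) + 1 ≤ m * 2 ^ n := by
    rw [pow_succ] at h1
    calc m * (2 ^ g + 1) + 1 ≤ m * (2 ^ g + 1) + m := by omega
      _ = m * (2 ^ g + 2) := by ring
      _ ≤ m * 2 ^ n := Nat.mul_le_mul_left _ (by omega)
  calc (g + 1) * (m * (2 ^ g + 1) + 1) ≤ n * (m * 2 ^ n) := Nat.mul_le_mul hg h3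
    _ = _ := by ring

theorem outer_main {AP Var S : Type} [Fintype S] [MeasurableSpace S] [DiscreteMeasurableSpace S]
    (P : S → S → ℝ≥0∞) (hP : ∀ s, ∑ t, P s t = 1) (s : S) (L : S → Set AP)
    (o : OuterMeasure (ℕ → S)) (h1 : o Set.univ = 1)
    (hcyl : ∀ n u, o (cyl n u) = cmass P s n u)
    (hcar : ∀ n (t : Set S), o.IsCaratheodory ((fun b : ℕ → S => b n) ⁻¹' t))
    (φ : PD AP Var) (N : ℕ) (hN : o {π | PD.Sat (fun i => L (π i)) 0 (fun _ => N) φ} = 1) :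
    o {π | PD.Sat (fun i => L (π i)) 0 (fun _ => Fintype.card S * φ.size * 2 ^ φ.size) φ} = 1 := by
  choose ν hν using exists_MChain P hP
  have hpr := fun s => (hν s).prob
  have hm : 1 ≤ Fintype.card S := Fintype.card_pos_iff.2 ⟨s⟩
  have hn : 1 ≤ φ.size := by cases φ <;> simp [PD.size]
  have key : ∀ K : ℕ, o {π | PD.Sat (fun i => L (π i)) 0 (fun _ => K) φ} = 1 ↔
      ∀ᵐ ρ ∂ν s, GSat ρ (fun _ => K) (trT L φ) 0 := by
    intro K
    have hs : {π : ℕ → S | PD.Sat (fun i => L (π i)) 0 (fun _ => K) φ} =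
        {ρ | GSat ρ (fun _ => K) (trT L φ) 0} := by
      ext ρ; exact (trT_sat _ _ _ _ _).symm
    have hmeas := GSat_meas (fun _ => K) (trT L φ) 0
    rw [hs, outer_eq P s o h1 hcyl hcar (ν s) (hν s) _ hmeas, ← prob_compl_eq_zero_iff hmeas]
    rfl
  rw [key] at hN ⊢
  have hb : ∀ g, g + 1 ≤ φ.size → Fintype.card S * (2 ^ g + 1) ≤ Fintype.card S * φ.size * 2 ^ φ.size := by
    intro g hg
    rw [mul_assoc]
    refine Nat.mul_le_mul_left _ ?_
    have h1 : 2 ^ (g + 1) ≤ 2 ^ φ.size := Nat.pow_le_pow_right (by norm_num) hg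
    have h2 : 1 ≤ 2 ^ g := Nat.one_le_two_pow
    rw [pow_succ] at h1
    calc 2 ^ g + 1 ≤ 1 * 2 ^ φ.size := by omega
      _ ≤ φ.size * 2 ^ φ.size := Nat.mul_le_mul_right _ hn
  exact (PQ hP hν L _ N φ.size (fun g hg => Or.inl (hb g hg)) (hb 0 (by omega))
    (fun g hg h0 => arith _ _ _ hm hg h0) φ le_rfl).2.2.2 s hN

theorem PD_Vone_nonempty_iff_bound
    {AP Var S : Type} [DecidableEq Var] [Fintype S] [DecidableEq S] [MeasurableSpace S]
    (P : S → S → ℝ≥0∞) (hP : ∀ s, ∑ t, P s t = 1)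
    (s₀ : S) (L : S → Set AP)
    (μ : Measure (ℕ → S)) (hprob : IsProbabilityMeasure μ)
    (hcyl : ∀ (n : ℕ) (u : ℕ → S),
      μ {π | ∀ k ≤ n, π k = u k} =
        (if u 0 = s₀ then 1 else 0) * ∏ k ∈ Finset.range n, P (u k) (u (k + 1)))
    (φ : PD AP Var) (hvar : ∀ x : Var, PD.varCount x φ ≤ 1)
    (V : Set (Var → ℕ))
    (hV : V = {v | μ {π | PD.Sat (fun i => L (π i)) 0 v φ} = 1}) :
    V.Nonempty ↔ (fun _ : Var => Fintype.card S * φ.size * 2 ^ φ.size) ∈ V := by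
  refine ⟨?_, fun h => ⟨_, h⟩⟩
  rintro ⟨v, hv⟩
  subst hV
  obtain ⟨N, hN⟩ := sat_uniform v φ
  have hv' : μ {π | PD.Sat (fun i => L (π i)) 0 (fun _ => N) φ} = 1 := by
    refine le_antisymm prob_le_one ?_
    have hv1 : μ {π | PD.Sat (fun i => L (π i)) 0 v φ} = 1 := hv
    rw [← hv1]
    exact measure_mono fun π hπ => hN N le_rfl _ 0 hπ
  have hc : ∀ n u, μ (cyl n u) = cmass P s₀ n u := by
    intro n u
    refine (hcyl n u).trans ?_
    unfold cmass
    congr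
  exact @outer_main AP Var S _ ⊤ (@DiscreteMeasurableSpace.mk S ⊤ fun _ => trivial) P hP s₀ L
    μ.toOuterMeasure hprob.measure_univ hc (fun n t => carath P hP s₀ μ hc n t) φ N hv'
end
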